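/- arXiv:math/0608328 — 5 statements merged into one kernel-verified Lean document; each statement's English description precedes it below -/
import Mathlib

section
/- Let p be an odd prime, and let n > 0 and r be integers with (p−1) ∤ n and p ∤ r. Then ((−r)^n·F_p(pn,r) + n_*!)/(n_*!·n_*) + p·H_{n_*} − p·B_{p−1} + p − 1 ≡ (pn/n_*)·(q_p(r) − Σ_{k=2}^{p−n_*−1} binom(n_*+k, n_*)·B_k/(k·r^k)) (mod p²), where q_p(r) = (r^{p−1} − 1)/p is the Fermat quotient. -/
open Finset

/-- `x ≡ y (mod p^c)` for rationals: `x = y` or the `p`-adic valuation of `x - y`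
is at least `c`. -/
def modCong (p : ℕ) (c : ℤ) (x y : ℚ) : Prop :=
  x = y ∨ c ≤ padicValRat p (x - y)

/-- `C_p(n,r) = ∑_{0 ≤ k ≤ n, k ≡ r (mod p)} (-1)^k * binom(n,k)`. -/
def Cp (p n : ℕ) (r : ℤ) : ℚ :=
  ∑ k ∈ range (n+1), if ((k : ℤ) - r) % p = 0 then (-1 : ℚ)^k * (n.choose k) else 0

/-- The Fleck quotient `F_p(n,r) = (-p)^{-⌊(n-1)/(p-1)⌋} C_p(n,r) + [n = 0]`. -/
noncomputable def Fp (p n : ℕ) (r : ℤ) : ℚ :=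
  (-(p:ℚ)) ^ (-(Int.fdiv ((n:ℤ) - 1) ((p:ℤ) - 1))) * Cp p n r + (if n = 0 then 1 else 0)

/-- `n_*`: the unique integer in `{1,…,p-1}` with `n_* ≡ n (mod p-1)`. -/
def nLow (p n : ℕ) : ℕ := ((((n:ℤ) - 1) % ((p:ℤ) - 1)) + 1).toNat

/-- Harmonic number `H_r = ∑_{k=1}^r 1/k`. -/
def harm (r : ℕ) : ℚ := ∑ k ∈ Finset.Icc 1 r, 1/(k:ℚ)

/-!
The numbers `C_p(N, r)` are the coefficients of `(1 - X) ^ N` in the group ring `ℤ_p[ℤ/p]`, where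
`X = [1]`. Let `g = ∑ a, ω⁻¹(a) [a]` be the Gauss sum of the inverse Teichmüller character `ω⁻¹`,
formed in this ring. The coefficients of `(1 - X) ^ p` are congruent to those of `-p g` modulo `p²`,
and in fact `(1 - X) ^ p = -p g (1 + p E)`, where `E` is a polynomial in `g` found by expanding
`binom(p, k) / p` in powers of `ω⁻¹`; modulo `p` its nonconstant coefficients are Bernoulli
numbers, up to simple factors. Since `g ^ p` is a `p`-adic unit times `p g`, the quotient
`F_p(pn, r)` can be read off modulo `p²` from `g ^ n_* (1 + n p E)`. The powers of `g` are Gauss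
sums of powers of `ω⁻¹` times products of Jacobi sums, and telescoping with
`ω(1 - b) ≡ (1 - ω(b)) ^ p (mod p²)` evaluates these Jacobi sums modulo `p²` in terms of harmonic
numbers.
-/

lemma nLow_eq_natMod {p n : ℕ} (hp : 1 < p) (hn : 0 < n) : nLow p n = (n - 1) % (p - 1) + 1 := by
  rw [nLow, ← Nat.cast_pred hn, ← Nat.cast_pred (by omega : 0 < p)]
  norm_cast

lemma one_le_nLow {p n : ℕ} (hp : 1 < p) (hn : 0 < n) : 1 ≤ nLow p n := by
  rw [nLow_eq_natMod hp hn]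
  exact Nat.succ_pos _

lemma exists_eq_nLow_add_mul {p n : ℕ} (hp : 1 < p) (hn : 0 < n) :
    ∃ m, n = nLow p n + m * (p - 1) := by
  refine ⟨(n - 1) / (p - 1), ?_⟩
  rw [nLow_eq_natMod hp hn, add_right_comm, mul_comm, Nat.mod_add_div, Nat.sub_add_cancel hn]

lemma nLow_lt {p n : ℕ} (hp : 1 < p) (hn : 0 < n) : nLow p n < p := by
  rw [nLow_eq_natMod hp hn]
  exact Nat.add_lt_of_lt_sub (Nat.mod_lt _ (Nat.sub_pos_of_lt hp))

lemma fdiv_prime_mul_sub_one {p n s m : ℕ} (hp : 1 < p) (hn : n = s + m * (p - 1)) (hs : 1 ≤ s)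
    (hsp : s < p) : Int.fdiv (((p * n : ℕ) : ℤ) - 1) ((p : ℤ) - 1) = ((n + m : ℕ) : ℤ) := by
  have hmul : ((p * n : ℕ) : ℤ) - 1 = ((s : ℤ) - 1) + ((n + m : ℕ) : ℤ) * ((p : ℤ) - 1) := by
    have hn' := congrArg (Nat.cast (R := ℤ)) hn
    push_cast [Nat.cast_sub hp.le] at hn' ⊢
    linear_combination hn'
  rw [Int.fdiv_eq_ediv_of_nonneg _ (by omega), hmul, Int.add_mul_ediv_right _ _ (by omega),
    Int.ediv_eq_zero_of_lt (by omega) (by omega), zero_add]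

lemma sum_zmod_eq_sum_Ico {n : ℕ} [NeZero n] {M : Type*} [AddCommMonoid M] {g : ZMod n → M}
    (hg : g 0 = 0) : ∑ a, g a = ∑ k ∈ Ico 1 n, g k := by
  rw [← zero_add (∑ k ∈ Ico 1 n, g k), ← hg, ← Nat.cast_zero,
    ← sum_range_eq_add_Ico (fun k : ℕ ↦ g k) (NeZero.pos n)]
  exact sum_bij' (fun a _ ↦ a.val) (fun k _ ↦ k) (fun a _ ↦ mem_range.mpr a.val_lt)
    (fun _ _ ↦ mem_univ _) (fun a _ ↦ ZMod.natCast_zmod_val a)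
    (fun k hk ↦ ZMod.val_cast_of_lt (mem_range.mp hk)) (fun a _ ↦ by rw [ZMod.natCast_zmod_val])

/-! ### Gauss sums in group rings -/

section GroupRing

lemma coeff_mul_eq_sum {G R : Type*} [AddCommGroup G] [Fintype G] [Semiring R]
    (x y : AddMonoidAlgebra R G) (r : G) :
    (x * y).coeff r = ∑ a, x.coeff a * y.coeff (r - a) := by
  classical
  rw [AddMonoidAlgebra.coeff_mul_antidiag x y r (univ.image fun a ↦ (a, r - a))]
  · rw [sum_image fun a _ b _ h ↦ (Prod.mk.inj h).1]
  · rintro ⟨a, b⟩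
    simp only [mem_image, mem_univ, true_and, Prod.mk.injEq, existsAndEq, sub_eq_iff_eq_add']
    exact eq_comm

/-- The norm element `∑ a, [a]` of the group ring `R[G]`. -/
noncomputable def groupNorm (G R : Type*) [Fintype G] [Semiring R] : AddMonoidAlgebra R G :=
  .ofCoeff (Finsupp.equivFunOnFinite.symm 1)

@[simp] lemma coeff_groupNorm {G R : Type*} [Fintype G] [Semiring R] (a : G) :
    (groupNorm G R).coeff a = 1 := rfl

variable {F R : Type*} [Field F] [Fintype F] [CommRing R]

/-- The Gauss sum `∑ a, χ(a) [a]`, formed in the group ring `R[F]` of the additive group of `F`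
rather than in a ring containing roots of unity. -/
noncomputable def groupGaussSum (χ : MulChar F R) : AddMonoidAlgebra R F :=
  .ofCoeff (Finsupp.equivFunOnFinite.symm χ)

@[simp] lemma coeff_groupGaussSum (χ : MulChar F R) (a : F) : (groupGaussSum χ).coeff a = χ a := rfl

lemma coeff_groupGaussSum_mul_of_ne_zero (χ ψ : MulChar F R) {r : F} (hr : r ≠ 0) :
    (groupGaussSum χ * groupGaussSum ψ).coeff r = jacobiSum χ ψ * (χ * ψ) r := by
  rw [coeff_mul_eq_sum, jacobiSum, sum_mul]
  refine (Fintype.sum_equiv (Equiv.mulLeft₀ r hr) _ _ fun a ↦ ?_).symm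
  have : r - r * a = r * (1 - a) := by ring
  simp only [coeff_groupGaussSum, MulChar.mul_apply, Equiv.mulLeft₀_apply, this, map_mul]
  ring

lemma coeff_groupGaussSum_mul_zero (χ ψ : MulChar F R) :
    (groupGaussSum χ * groupGaussSum ψ).coeff 0 = ψ (-1) * ∑ a, (χ * ψ) a := by
  rw [coeff_mul_eq_sum, mul_sum]
  refine sum_congr rfl fun a _ ↦ ?_
  rw [coeff_groupGaussSum, coeff_groupGaussSum, zero_sub, neg_eq_neg_one_mul, map_mul,
    MulChar.mul_apply]
  ring

lemma jacobiSum_inv_left (χ ψ : MulChar F R) :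
    jacobiSum χ⁻¹ ψ = ψ (-1) * jacobiSum (χ * ψ⁻¹) ψ := by
  rw [jacobiSum, jacobiSum, mul_sum]
  refine Fintype.sum_equiv (Equiv.inv F) _ _ fun a ↦ ?_
  rcases eq_or_ne a 0 with rfl | ha
  · simp [MulChar.map_zero]
  · have hsub : 1 - a = -1 * a * (1 - a⁻¹) := by field_simp; ring
    rw [hsub, map_mul, map_mul, Equiv.inv_apply, MulChar.mul_apply, MulChar.inv_apply',
      MulChar.inv_apply', inv_inv]
    ring

/-- The product of Jacobi sums `J(χ, χ) J(χ², χ) ⋯ J(χˢ⁻¹, χ)`, which compares the power `g(χ)ˢ` of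
a Gauss sum with `g(χˢ)`. -/
noncomputable def jacobiProd (χ : MulChar F R) (s : ℕ) : R :=
  ∏ i ∈ Ico 1 s, jacobiSum (χ ^ i) χ

variable [IsDomain R] {χ ψ : MulChar F R}

lemma groupGaussSum_mul (h : χ * ψ ≠ 1) :
    groupGaussSum χ * groupGaussSum ψ = jacobiSum χ ψ • groupGaussSum (χ * ψ) := by
  ext r
  rcases eq_or_ne r 0 with rfl | hr
  · rw [coeff_groupGaussSum_mul_zero, MulChar.sum_eq_zero_of_ne_one h]
    simp [χ.map_zero]
  · simp [coeff_groupGaussSum_mul_of_ne_zero χ ψ hr]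

lemma groupGaussSum_mul_inv (hχ : χ ≠ 1) :
    groupGaussSum χ * groupGaussSum χ⁻¹ =
      χ (-1) • ((Fintype.card F : R) • 1 - groupNorm F R) := by
  classical
  ext r
  rcases eq_or_ne r 0 with rfl | hr
  · rw [coeff_groupGaussSum_mul_zero, mul_inv_cancel, MulChar.sum_one_eq_card_units,
      Fintype.card_units, MulChar.inv_apply', inv_neg_one, Nat.cast_sub Fintype.card_pos]
    simp [AddMonoidAlgebra.one_def]
  · rw [coeff_groupGaussSum_mul_of_ne_zero _ _ hr, jacobiSum_nontrivial_inv hχ, mul_inv_cancel,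
      MulChar.one_apply hr.isUnit]
    simp [AddMonoidAlgebra.one_def, hr]

lemma groupNorm_mul_groupGaussSum (hχ : χ ≠ 1) : groupNorm F R * groupGaussSum χ = 0 := by
  ext r
  rw [coeff_mul_eq_sum]
  simp only [coeff_groupNorm, one_mul, coeff_groupGaussSum]
  exact (Fintype.sum_equiv (Equiv.subLeft r) _ _ fun _ ↦ rfl).trans
    (MulChar.sum_eq_zero_of_ne_one hχ)

lemma groupGaussSum_pow {s : ℕ} (hs : 1 ≤ s) (hs' : s < orderOf χ) :
    groupGaussSum χ ^ s = jacobiProd χ s • groupGaussSum (χ ^ s) := by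
  induction s, hs using Nat.le_induction with
  | base => simp [jacobiProd]
  | succ s hs ih =>
    have hne : χ ^ s * χ ≠ 1 := pow_succ χ s ▸ pow_ne_one_of_lt_orderOf s.succ_ne_zero hs'
    rw [pow_succ, ih (by omega), smul_mul_assoc, groupGaussSum_mul hne, smul_smul, ← pow_succ,
      jacobiProd, jacobiProd, prod_Ico_succ_top hs]

lemma coeff_groupGaussSum_pow {s : ℕ} (hs : 1 ≤ s) (hs' : s ≤ orderOf χ) {r : F} (hr : r ≠ 0) :
    (groupGaussSum χ ^ s).coeff r = jacobiProd χ s * (χ ^ s) r := by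
  obtain ⟨_ | s, rfl⟩ := Nat.exists_eq_add_of_le' hs
  · simp [jacobiProd]
  · rw [pow_succ, groupGaussSum_pow s.succ_pos hs', smul_mul_assoc, AddMonoidAlgebra.coeff_smul,
      Finsupp.smul_apply, coeff_groupGaussSum_mul_of_ne_zero _ _ hr, ← pow_succ, smul_eq_mul,
      ← mul_assoc, jacobiProd, jacobiProd, prod_Ico_succ_top s.succ_pos]

lemma groupGaussSum_pow_orderOf_add_one (hχ : 1 < orderOf χ) :
    groupGaussSum χ ^ (orderOf χ + 1) =
      (χ (-1) * Fintype.card F * jacobiProd χ (orderOf χ - 1)) • groupGaussSum χ := by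
  have hχ1 : χ ≠ 1 := fun h ↦ by simp [h] at hχ
  have hinv : χ ^ (orderOf χ - 1) = χ⁻¹ :=
    eq_inv_of_mul_eq_one_left (by rw [pow_sub_one_mul (by omega), pow_orderOf_eq_one])
  calc groupGaussSum χ ^ (orderOf χ + 1)
      = groupGaussSum χ ^ (orderOf χ - 1) * groupGaussSum χ * groupGaussSum χ := by
        rw [← pow_succ, ← pow_succ]; congr 1; omega
    _ = jacobiProd χ (orderOf χ - 1) •
          (groupGaussSum χ * groupGaussSum χ⁻¹ * groupGaussSum χ) := by
        rw [groupGaussSum_pow (by omega) (by omega), hinv, smul_mul_assoc, smul_mul_assoc,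
          mul_comm (groupGaussSum χ⁻¹)]
    _ = _ := by
        rw [groupGaussSum_mul_inv hχ1, smul_mul_assoc, sub_mul, groupNorm_mul_groupGaussSum hχ1,
          sub_zero, smul_one_mul, smul_smul, smul_smul]
        congr 1
        ring

lemma groupGaussSum_pow_add_mul_orderOf (hχ : 1 < orderOf χ) {s : ℕ} (hs : 1 ≤ s) (m : ℕ) :
    groupGaussSum χ ^ (s + m * orderOf χ) =
      (χ (-1) * Fintype.card F * jacobiProd χ (orderOf χ - 1)) ^ m • groupGaussSum χ ^ s := by
  induction m with
  | zero => simp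
  | succ m ih =>
    have hexp : s + (m + 1) * orderOf χ = s + m * orderOf χ - 1 + (orderOf χ + 1) := by
      rw [add_mul]; omega
    rw [hexp, pow_add, groupGaussSum_pow_orderOf_add_one hχ, mul_smul_comm, ← pow_succ,
      Nat.sub_add_cancel (by omega), ih, smul_smul, ← pow_succ']

lemma sum_range_pow_mul_inv_pow [DecidableEq F] (hχ : Function.Injective χ) (b : F) {x : F}
    (hx : x ≠ 0) :
    ∑ j ∈ range (Fintype.card F - 1), (χ ^ (j + 1)) b * (χ⁻¹ ^ (j + 1)) x =
      if b = x then ((Fintype.card F - 1 : ℕ) : R) else 0 := by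
  have hterm : ∀ j, (χ ^ (j + 1)) b * (χ⁻¹ ^ (j + 1)) x = χ (b * x⁻¹) ^ j * χ (b * x⁻¹) := by
    intro j
    rw [MulChar.pow_apply' _ j.succ_ne_zero, MulChar.pow_apply' _ j.succ_ne_zero,
      MulChar.inv_apply', ← mul_pow, ← map_mul, pow_succ]
  simp_rw [hterm, ← sum_mul]
  rcases eq_or_ne b x with rfl | hbx
  · simp [mul_inv_cancel₀ hx]
  rw [if_neg hbx]
  rcases eq_or_ne b 0 with rfl | hb
  · simp [MulChar.map_zero]
  have hne : χ (b * x⁻¹) ≠ 1 := by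
    rw [← χ.map_one]
    exact hχ.ne (by rwa [Ne, mul_inv_eq_one₀ hx])
  have hpow : χ (b * x⁻¹) ^ (Fintype.card F - 1) = 1 := by
    rw [← map_pow, FiniteField.pow_card_sub_one_eq_one _ (mul_ne_zero hb (inv_ne_zero hx)),
      map_one]
  have hgeom := geom_sum_mul (χ (b * x⁻¹)) (Fintype.card F - 1)
  rw [hpow, sub_self] at hgeom
  rw [(mul_eq_zero.mp hgeom).resolve_right (sub_ne_zero.mpr hne), zero_mul]

lemma card_sub_one_mul_eq_sum_range (hχ : Function.Injective χ) (f : F → R) {x : F} (hx : x ≠ 0) :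
    ((Fintype.card F - 1 : ℕ) : R) * f x =
      ∑ j ∈ range (Fintype.card F - 1), (∑ b, f b * (χ ^ (j + 1)) b) * (χ⁻¹ ^ (j + 1)) x := by
  classical
  simp_rw [sum_mul, mul_assoc]
  rw [sum_comm]
  simp_rw [← mul_sum, sum_range_pow_mul_inv_pow hχ _ hx]
  simp [mul_comm]

end GroupRing

/-! ### Arithmetic modulo `p²` -/

section OddPrime

open PadicInt

variable {p : ℕ}

/-- The additive map `ℤ/p → ℤ/p²`, `a ↦ p a`, written `ε`. A congruence `x ≡ a + p c (mod p²)`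
is expressed as `(x : ZMod (p ^ 2)) = a + ε c`, where `c` is only a residue class modulo `p`. -/
def primeMul (p : ℕ) : ZMod p →+ ZMod (p ^ 2) :=
  ZMod.lift p ⟨(AddMonoidHom.mulLeft (p : ZMod (p ^ 2))).comp (Int.castAddHom _), by
    simp [← pow_two, ← Nat.cast_pow]⟩

/-- The reduction map `ℤ/p² → ℤ/p`. -/
def modSqToMod (p : ℕ) : ZMod (p ^ 2) →+* ZMod p :=
  ZMod.castHom (dvd_pow_self p two_ne_zero) (ZMod p)

local notation "ε" => primeMul p
local notation "ρ" => modSqToMod p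

lemma primeMul_intCast (n : ℤ) : ε (n : ZMod p) = (p * n : ZMod (p ^ 2)) :=
  ZMod.lift_coe p _ n

lemma primeMul_natCast (n : ℕ) : ε (n : ZMod p) = (p * n : ZMod (p ^ 2)) := by
  exact_mod_cast primeMul_intCast (p := p) n

lemma intCast_eq_primeMul_of_dvd {n : ℤ} (h : (p : ℤ) ∣ n) :
    (n : ZMod (p ^ 2)) = ε ((n / p : ℤ) : ZMod p) := by
  rw [primeMul_intCast]
  exact_mod_cast congrArg (Int.cast (R := ZMod (p ^ 2))) (Int.mul_ediv_cancel' h).symm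

lemma primeMul_one : ε 1 = (p : ZMod (p ^ 2)) := by simpa using primeMul_natCast (p := p) 1

lemma mul_primeMul (x : ZMod (p ^ 2)) (c : ZMod p) : x * ε c = ε (ρ x * c) := by
  obtain ⟨m, rfl⟩ := ZMod.intCast_surjective x
  obtain ⟨n, rfl⟩ := ZMod.intCast_surjective c
  rw [map_intCast ρ, ← Int.cast_mul, primeMul_intCast, primeMul_intCast]
  push_cast
  ring

lemma primeMul_mul (x : ZMod (p ^ 2)) (c : ZMod p) : ε c * x = ε (c * ρ x) := by
  rw [mul_comm, mul_primeMul, mul_comm]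

@[simp] lemma modSqToMod_primeMul (c : ZMod p) : ρ (ε c) = 0 := by
  obtain ⟨n, rfl⟩ := ZMod.intCast_surjective c
  simp [primeMul_intCast]

lemma exists_eq_add_primeMul {x y : ZMod (p ^ 2)} (h : ρ x = ρ y) : ∃ c, x = y + ε c := by
  obtain ⟨n, hn⟩ := ZMod.intCast_surjective (x - y)
  have hdvd : (p : ℤ) ∣ n := by
    rw [← ZMod.intCast_zmod_eq_zero_iff_dvd, ← map_intCast ρ, hn, map_sub, h, sub_self]
  exact ⟨_, by rw [← intCast_eq_primeMul_of_dvd hdvd, hn, add_sub_cancel]⟩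

lemma add_primeMul_mul_add_primeMul (x y : ZMod (p ^ 2)) (c d : ZMod p) :
    (x + ε c) * (y + ε d) = x * y + ε (ρ x * d + c * ρ y) := by
  simp [add_mul, mul_add, mul_primeMul, primeMul_mul, add_assoc, add_comm (ε (c * _))]

lemma one_add_primeMul_mul_one_add_primeMul (c d : ZMod p) :
    (1 + ε c) * (1 + ε d) = 1 + ε (c + d) := by
  rw [add_primeMul_mul_add_primeMul, map_one, mul_one, one_mul, mul_one, add_comm d]

lemma add_primeMul_pow (x : ZMod (p ^ 2)) (c : ZMod p) (n : ℕ) :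
    (x + ε c) ^ n = x ^ n + ε (n * ρ x ^ (n - 1) * c) := by
  induction n with
  | zero => simp
  | succ n ih =>
    rcases n.eq_zero_or_pos with rfl | hn
    · simp
    have hpow : ρ x ^ n = ρ x ^ (n - 1) * ρ x := (pow_sub_one_mul hn.ne' _).symm
    rw [pow_succ (x + ε c), ih, add_primeMul_mul_add_primeMul, ← pow_succ, map_pow, Nat.cast_succ,
      Nat.add_sub_cancel, hpow]
    congr 2
    ring

lemma one_add_primeMul_pow (c : ZMod p) (n : ℕ) : (1 + ε c) ^ n = 1 + ε (n * c) := by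
  simpa using add_primeMul_pow 1 c n

lemma pow_prime_eq_of_modSqToMod_eq {x y : ZMod (p ^ 2)} (h : ρ x = ρ y) : x ^ p = y ^ p := by
  obtain ⟨c, rfl⟩ := exists_eq_add_primeMul h
  simp [add_primeMul_pow]

lemma prod_one_add_primeMul {ι : Type*} (s : Finset ι) (c : ι → ZMod p) :
    ∏ i ∈ s, (1 + ε (c i)) = 1 + ε (∑ i ∈ s, c i) := by
  classical
  induction s using Finset.induction_on with
  | empty => simp
  | insert i s hi ih =>
    rw [prod_insert hi, sum_insert hi, ih, add_primeMul_mul_add_primeMul]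
    simp [add_comm]

/-- The harmonic number `H_n` modulo `p`; meaningful for `n < p`. -/
def harmonicMod (p n : ℕ) : ZMod p := ∑ k ∈ Ico 1 (n + 1), (k : ZMod p)⁻¹

lemma harmonicMod_succ (n : ℕ) :
    harmonicMod p (n + 1) = harmonicMod p n + ((n + 1 : ℕ) : ZMod p)⁻¹ :=
  sum_Ico_succ_top (by omega) _

lemma harmonicMod_eq_pred_add {n : ℕ} (hn : 1 ≤ n) :
    harmonicMod p n = harmonicMod p (n - 1) + (n : ZMod p)⁻¹ := by
  obtain ⟨n, rfl⟩ := Nat.exists_eq_add_of_le' hn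
  exact harmonicMod_succ n

lemma natCast_ne_zero_of_lt {k : ℕ} (hk : 1 ≤ k) (hkp : k < p) : (k : ZMod p) ≠ 0 := by
  rw [Ne, ZMod.natCast_eq_zero_iff]
  exact Nat.not_dvd_of_pos_of_lt hk hkp

/-- The truncated logarithm `∑ bᵏ / k` over `1 ≤ k < p`. -/
def truncLog (b : ZMod p) : ZMod p := ∑ k ∈ Ico 1 p, (k : ZMod p)⁻¹ * b ^ k

@[simp] lemma truncLog_zero : truncLog (0 : ZMod p) = 0 :=
  sum_eq_zero fun k hk ↦ by
    rw [zero_pow (Nat.one_le_iff_ne_zero.mp (mem_Ico.mp hk).1), mul_zero]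

/-- The integer `(-1)ᵏ⁺¹ binom(p, k) / p`, so that `(1 - w)ᵖ` is `1 - wᵖ` minus `p` times the
polynomial with these coefficients. -/
def fermatCoeff (p k : ℕ) : ℤ := (-1) ^ (k + 1) * (p.choose k / p : ℕ)

lemma coeff_one_sub_single_pow {R : Type*} [CommRing R] (N : ℕ) (r : ZMod p) :
    ((1 - AddMonoidAlgebra.single (1 : ZMod p) (1 : R)) ^ N).coeff r =
      ∑ k ∈ range (N + 1), if (k : ZMod p) = r then ((-1) ^ k * N.choose k : R) else 0 := by
  have hexpand : (1 - AddMonoidAlgebra.single (1 : ZMod p) (1 : R)) ^ N =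
      ∑ k ∈ range (N + 1), AddMonoidAlgebra.single (k : ZMod p) ((-1) ^ k * N.choose k : R) := by
    rw [sub_eq_neg_add, add_pow]
    refine sum_congr rfl fun k _ ↦ ?_
    rw [← AddMonoidAlgebra.single_neg, AddMonoidAlgebra.single_pow, one_pow, mul_one, nsmul_one,
      AddMonoidAlgebra.natCast_def, AddMonoidAlgebra.single_mul_single, add_zero]
  rw [hexpand, AddMonoidAlgebra.coeff_sum, Finsupp.finsetSum_apply]
  simp only [AddMonoidAlgebra.coeff_single, Finsupp.single_apply]

variable [Fact p.Prime]

lemma toZMod_eq_zero_iff {x : ℤ_[p]} : toZMod x = 0 ↔ (p : ℤ_[p]) ∣ x := by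
  rw [← RingHom.mem_ker, ker_toZMod, maximalIdeal_eq_span_p, Ideal.mem_span_singleton]

lemma isUnit_iff_toZMod_ne_zero {x : ℤ_[p]} : IsUnit x ↔ toZMod x ≠ 0 := by
  rw [Ne, toZMod_eq_zero_iff, ← norm_lt_one_iff_dvd, ← mem_nonunits, mem_nonunits_iff, not_not]

lemma exists_eq_natCast_add_prime_mul (x : ℤ_[p]) : ∃ (n : ℕ) (y : ℤ_[p]), x = n + p * y := by
  obtain ⟨y, hy⟩ : (p : ℤ_[p]) ∣ x - x.zmodRepr := by
    rw [← Ideal.mem_span_singleton, ← maximalIdeal_eq_span_p]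
    exact sub_zmodRepr_mem x
  exact ⟨x.zmodRepr, y, by rw [← hy, add_sub_cancel]⟩

lemma ringHom_eq_toZMod (f : ℤ_[p] →+* ZMod p) : f = toZMod := by
  ext x
  obtain ⟨n, y, rfl⟩ := exists_eq_natCast_add_prime_mul x
  simp

/-- The Teichmüller character `ω`, which sends `a ≠ 0` to the `(p - 1)`-st root of unity congruent
to `a` modulo `p`. -/
noncomputable def teichmullerChar (p : ℕ) [Fact p.Prime] : MulChar (ZMod p) ℤ_[p] where
  toMonoidHom := (WittVector.toPadicInt p : _ →* ℤ_[p]).comp (WittVector.teichmuller p)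
  map_nonunit' a ha := by
    rw [isUnit_iff_ne_zero, not_not] at ha
    simp [ha]

local notation "ω" => teichmullerChar p
local notation "π" => toZModPow (p := p) 2

@[simp] lemma toZMod_teichmullerChar (a : ZMod p) : toZMod (ω a) = a := by
  have h := WittVector.fromPadicInt_comp_toPadicInt_ext p (WittVector.teichmuller p a)
  simp only [RingHom.comp_apply, RingHom.id_apply] at h
  rw [← ringHom_eq_toZMod (WittVector.constantCoeff.comp (WittVector.fromPadicInt p))]
  simp [teichmullerChar, h]

lemma teichmullerChar_injective : Function.Injective ω :=
  Function.LeftInverse.injective toZMod_teichmullerChar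

lemma teichmullerChar_pow_prime (a : ZMod p) : ω a ^ p = ω a := by
  rw [← map_pow, ZMod.pow_card]

lemma teichmullerChar_neg_one (hp : 2 < p) : ω (-1) = -1 := by
  have : Fact (2 < p) := ⟨hp⟩
  refine (mul_self_eq_one_iff.mp (by rw [← map_mul]; simp)).resolve_left fun h ↦ ?_
  exact ZMod.neg_one_ne_one (teichmullerChar_injective (h.trans (map_one _).symm))

lemma orderOf_teichmullerChar : orderOf ω = p - 1 := by
  refine Nat.dvd_antisymm (orderOf_dvd_of_pow_eq_one ?_) ?_
  · rw [← ZMod.card_units p]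
    exact MulChar.pow_card_eq_one ω
  · suffices h : ∀ u : (ZMod p)ˣ, u ^ orderOf ω = 1 by
      simpa only [ZMod.card] using (FiniteField.forall_pow_eq_one_iff (ZMod p) _).mp h
    intro u
    refine Units.ext (teichmullerChar_injective ?_)
    rw [Units.val_pow_eq_pow_val, map_pow, ← MulChar.pow_apply_coe, pow_orderOf_eq_one]
    simp

@[simp] lemma modSqToMod_toZModPow (x : ℤ_[p]) : ρ (π x) = toZMod x :=
  DFunLike.congr_fun (ringHom_eq_toZMod ((modSqToMod p).comp π)) x

lemma toZModPow_prime_mul (x : ℤ_[p]) : π ((p : ℤ_[p]) * x) = ε (toZMod x) := by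
  rw [map_mul, map_natCast, ← primeMul_one, primeMul_mul, modSqToMod_toZModPow, one_mul]

lemma primeMul_injective : Function.Injective (primeMul p) := by
  refine (injective_iff_map_eq_zero _).mpr fun c hc ↦ ?_
  obtain ⟨n, rfl⟩ := ZMod.natCast_zmod_surjective c
  rw [primeMul_natCast, ← Nat.cast_mul, ZMod.natCast_eq_zero_iff, pow_two] at hc
  exact (ZMod.natCast_eq_zero_iff n p).mpr
    (Nat.dvd_of_mul_dvd_mul_left (Fact.out : p.Prime).pos hc)

lemma isUnit_of_modSqToMod_ne_zero {x : ZMod (p ^ 2)} (h : ρ x ≠ 0) : IsUnit x := by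
  obtain ⟨n, rfl⟩ := ZMod.natCast_zmod_surjective x
  rw [map_natCast, Ne, ZMod.natCast_eq_zero_iff] at h
  exact (ZMod.isUnit_iff_coprime n (p ^ 2)).mpr
    (((Fact.out : p.Prime).coprime_iff_not_dvd.mpr h).symm.pow_right 2)

lemma toZModPow_teichmullerChar (x : ℤ_[p]) : π (ω (toZMod x)) = π x ^ p := by
  rw [← teichmullerChar_pow_prime, map_pow]
  exact pow_prime_eq_of_modSqToMod_eq (by simp)

lemma factorial_ne_zero_of_lt {k : ℕ} (hkp : k < p) : (k.factorial : ZMod p) ≠ 0 := by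
  rw [Ne, ZMod.natCast_eq_zero_iff, (Fact.out : p.Prime).dvd_factorial]
  omega

lemma neg_one_pow_mul_choose_prime_sub_one {k : ℕ} (hk : k < p) :
    (-1) ^ k * ((p - 1).choose k : ZMod (p ^ 2)) = 1 - ε (harmonicMod p k) := by
  induction k with
  | zero => simp [harmonicMod]
  | succ k ih =>
    have hk0 : ρ ((k + 1 : ℕ) : ZMod (p ^ 2)) ≠ 0 := by
      rw [map_natCast]; exact natCast_ne_zero_of_lt (by omega) hk
    have hchoose := congrArg (Nat.cast (R := ZMod (p ^ 2))) (Nat.choose_succ_right_eq (p - 1) k)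
    rw [Nat.cast_mul, Nat.cast_mul, Nat.cast_sub (by omega),
      Nat.cast_sub (Fact.out : p.Prime).one_le] at hchoose
    push_cast at hchoose
    refine (isUnit_of_modSqToMod_ne_zero hk0).mul_left_cancel ?_
    calc ((k + 1 : ℕ) : ZMod (p ^ 2)) * ((-1) ^ (k + 1) * ((p - 1).choose (k + 1) : ZMod (p ^ 2)))
        = ((-1) ^ k * (p - 1).choose k) * ((k + 1 : ℕ) + -p) := by
          push_cast
          linear_combination -(-1) ^ k * hchoose
      _ = (1 + ε (-harmonicMod p k)) * ((k + 1 : ℕ) + ε (-1)) := by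
          rw [ih (by omega), map_neg, map_neg, primeMul_one, sub_eq_add_neg]
      _ = (k + 1 : ℕ) - ε ((k + 1 : ℕ) * harmonicMod p (k + 1)) := by
          rw [map_natCast] at hk0
          rw [add_primeMul_mul_add_primeMul, map_natCast, map_one, harmonicMod_succ, mul_add,
            mul_inv_cancel₀ hk0, one_mul, one_mul, sub_eq_add_neg, ← map_neg]
          congr 2
          ring
      _ = _ := by rw [mul_sub, mul_primeMul, map_natCast, mul_one]

lemma prime_mul_fermatCoeff {k : ℕ} (hk : 1 ≤ k) (hkp : k < p) :
    (p : ℤ) * fermatCoeff p k = (-1) ^ (k + 1) * p.choose k := by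
  rw [fermatCoeff, mul_left_comm, ← Nat.cast_mul,
    Nat.mul_div_cancel' ((Fact.out : p.Prime).dvd_choose_self (by omega) hkp)]

lemma mul_fermatCoeff {k : ℕ} (hk : 1 ≤ k) (hkp : k < p) :
    (k : ℤ) * fermatCoeff p k = (-1) ^ (k - 1) * (p - 1).choose (k - 1) := by
  have hp := (Fact.out : p.Prime).pos
  obtain ⟨k, rfl⟩ := Nat.exists_eq_add_of_le' hk
  obtain ⟨m, rfl⟩ := Nat.exists_eq_add_of_le' hp
  have hchoose := congrArg (Nat.cast (R := ℤ)) (Nat.add_one_mul_choose_eq m k)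
  have hdef := prime_mul_fermatCoeff hk hkp
  refine mul_left_cancel₀ (Nat.cast_ne_zero.mpr hp.ne') ?_
  push_cast [Nat.add_sub_cancel] at *
  linear_combination (k + 1 : ℤ) * hdef - (-1) ^ k * hchoose

lemma natCast_mul_fermatCoeff {k : ℕ} (hk : 1 ≤ k) (hkp : k < p) :
    (k : ZMod (p ^ 2)) * fermatCoeff p k = 1 - ε (harmonicMod p (k - 1)) := by
  rw [← neg_one_pow_mul_choose_prime_sub_one (by omega)]
  exact_mod_cast congrArg (Int.cast (R := ZMod (p ^ 2))) (mul_fermatCoeff hk hkp)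

lemma fermatCoeff_eq_inv {k : ℕ} (hk : 1 ≤ k) (hkp : k < p) :
    (fermatCoeff p k : ZMod p) = (k : ZMod p)⁻¹ := by
  refine eq_inv_of_mul_eq_one_right ?_
  simpa using congrArg ρ (natCast_mul_fermatCoeff hk hkp)

lemma one_sub_pow_prime {R : Type*} [CommRing R] (hp : 2 < p) (w : R) :
    (1 - w) ^ p = 1 - w ^ p - p * ∑ k ∈ Ico 1 p, (fermatCoeff p k : R) * w ^ k := by
  have hodd : Odd p := (Fact.out : p.Prime).odd_of_ne_two hp.ne'
  have hterm : ∀ k ∈ Ico 1 p,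
      (-w) ^ k * 1 ^ (p - k) * (p.choose k : R) = -(p * ((fermatCoeff p k : R) * w ^ k)) := by
    intro k hk
    rw [mem_Ico] at hk
    have h := congrArg (Int.cast (R := R)) (prime_mul_fermatCoeff hk.1 hk.2)
    push_cast at h
    rw [neg_pow w, one_pow]
    linear_combination w ^ k * h
  rw [sub_eq_neg_add, add_pow, sum_range_succ, sum_range_eq_add_Ico _ (by omega),
    sum_congr rfl hterm, sum_neg_distrib, ← mul_sum]
  simp [hodd.neg_pow]
  ring

-- Compare `1 - ω b` with its `p`-th power, which is `ω (1 - b)` modulo `p²`.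
lemma toZModPow_one_sub_teichmullerChar (hp : 2 < p) (b : ZMod p) :
    π (1 - ω b) = π (ω (1 - b)) + ε (truncLog b) := by
  have hmod : π (ω (1 - b)) = π (1 - ω b) ^ p := by
    rw [← toZModPow_teichmullerChar, map_sub toZMod, map_one, toZMod_teichmullerChar]
  have hsum : toZMod (∑ k ∈ Ico 1 p, (fermatCoeff p k : ℤ_[p]) * ω b ^ k) = truncLog b := by
    rw [map_sum, truncLog]
    refine sum_congr rfl fun k hk ↦ ?_
    rw [mem_Ico] at hk
    simp [fermatCoeff_eq_inv hk.1 hk.2]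
  rw [hmod, ← map_pow, one_sub_pow_prime hp, teichmullerChar_pow_prime, ← hsum,
    ← toZModPow_prime_mul, ← map_add, sub_add_cancel]

lemma truncLog_one_sub (hp : 2 < p) (b : ZMod p) : truncLog (1 - b) = truncLog b := by
  have h := toZModPow_one_sub_teichmullerChar hp b
  have h' := toZModPow_one_sub_teichmullerChar hp (1 - b)
  rw [sub_sub_cancel, map_sub] at h'
  rw [map_sub] at h
  exact primeMul_injective (by linear_combination h - h')

lemma truncLog_one (hp : 2 < p) : truncLog (1 : ZMod p) = 0 := by
  rw [← truncLog_one_sub hp, sub_self, truncLog_zero]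

lemma harmonicMod_prime_sub_two (hp : 2 < p) : harmonicMod p (p - 2) = 1 := by
  have hlog : harmonicMod p (p - 2 + 1) = 0 := by
    rw [← truncLog_one hp, harmonicMod, truncLog, (by omega : p - 2 + 1 + 1 = p)]
    simp
  rw [harmonicMod_succ, (by omega : p - 2 + 1 = p - 1), Nat.cast_sub (by omega)] at hlog
  simpa [inv_neg, add_neg_eq_zero] using hlog

lemma sum_pow_eq_zero {i : ℕ} (hi : ¬ p - 1 ∣ i) : ∑ b : ZMod p, b ^ i = 0 := by
  have hp := (Fact.out : p.Prime).one_lt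
  have hmod : i % (p - 1) ≠ 0 := fun h ↦ hi (Nat.dvd_of_mod_eq_zero h)
  have hpow : ∀ b : ZMod p, b ^ i = b ^ (i % (p - 1)) := by
    intro b
    rcases eq_or_ne b 0 with rfl | hb
    · rw [zero_pow (by rintro rfl; simp at hi), zero_pow hmod]
    · exact pow_eq_pow_mod i (ZMod.pow_card_sub_one_eq_one hb)
  rw [sum_congr rfl fun b _ ↦ hpow b]
  exact FiniteField.sum_pow_lt_card_sub_one _ _
    (by rw [ZMod.card]; exact Nat.mod_lt _ (by omega))

lemma sum_pow_prime_sub_one : ∑ b : ZMod p, b ^ (p - 1) = -1 := by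
  have hp := (Fact.out : p.Prime).one_lt
  have hpow : ∀ b : ZMod p, b ^ (p - 1) = 1 - if b = 0 then 1 else 0 := by
    intro b
    split_ifs with hb
    · rw [hb, zero_pow (by omega), sub_self]
    · rw [ZMod.pow_card_sub_one_eq_one hb, sub_zero]
  simp [sum_congr rfl fun b _ ↦ hpow b]

lemma sum_pow_mul_truncLog {i : ℕ} (hi : i + 2 ≤ p) :
    ∑ b : ZMod p, b ^ i * truncLog b = ((i + 1 : ℕ) : ZMod p)⁻¹ := by
  have hneg : ((p - 1 - i : ℕ) : ZMod p) = -((i + 1 : ℕ) : ZMod p) := by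
    rw [eq_neg_iff_add_eq_zero, ← Nat.cast_add, (by omega : p - 1 - i + (i + 1) = p),
      ZMod.natCast_self]
  have hswap : ∑ b : ZMod p, b ^ i * truncLog b
      = ∑ k ∈ Ico 1 p, (k : ZMod p)⁻¹ * ∑ b : ZMod p, b ^ (i + k) := by
    simp_rw [truncLog, mul_sum]
    rw [sum_comm]
    exact sum_congr rfl fun k _ ↦ sum_congr rfl fun b _ ↦ by rw [pow_add, mul_left_comm]
  rw [hswap, sum_eq_single (p - 1 - i)]
  · rw [(by omega : i + (p - 1 - i) = p - 1), sum_pow_prime_sub_one, hneg, inv_neg, neg_mul_neg,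
      mul_one]
  · intro k hk hki
    rw [mem_Ico] at hk
    rw [sum_pow_eq_zero, mul_zero]
    rintro ⟨c, hc⟩
    rcases c with _ | _ | c
    · omega
    · omega
    · have : (p - 1) * 2 ≤ (p - 1) * (c + 1 + 1) := Nat.mul_le_mul_left _ (by omega)
      omega
  · exact fun h ↦ absurd (mem_Ico.mpr ⟨by omega, by omega⟩) h

lemma sum_truncLog_mul_inv (hp : 2 < p) : ∑ b : ZMod p, truncLog b * (1 - b)⁻¹ = -1 := by
  have hinv : ∀ b : ZMod p, b⁻¹ = b ^ (p - 2) := by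
    intro b
    rcases eq_or_ne b 0 with rfl | hb
    · rw [inv_zero, zero_pow (by omega)]
    · refine inv_eq_of_mul_eq_one_left ?_
      rw [← pow_succ, (by omega : p - 2 + 1 = p - 1), ZMod.pow_card_sub_one_eq_one hb]
  calc ∑ b : ZMod p, truncLog b * (1 - b)⁻¹
      = ∑ b : ZMod p, b ^ (p - 2) * truncLog b := by
        refine Fintype.sum_equiv (Equiv.subLeft 1) _ _ fun b ↦ ?_
        rw [Equiv.subLeft_apply, truncLog_one_sub hp, hinv, mul_comm]
    _ = -1 := by
        rw [sum_pow_mul_truncLog (by omega), (by omega : p - 2 + 1 = p - 1),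
          Nat.cast_sub (by omega)]
        simp [inv_neg]

lemma sum_pow_mul_truncLog_mul_inv (hp : 2 < p) {i : ℕ} (hi : i < p) :
    ∑ b : ZMod p, b ^ i * truncLog b * (1 - b)⁻¹ = -(harmonicMod p i + 1) := by
  induction i with
  | zero => simp [sum_truncLog_mul_inv hp, harmonicMod]
  | succ i ih =>
    have hdiff : ∑ b : ZMod p, b ^ (i + 1) * truncLog b * (1 - b)⁻¹
        = ∑ b : ZMod p, b ^ i * truncLog b * (1 - b)⁻¹ - ∑ b : ZMod p, b ^ i * truncLog b := by
      rw [← sum_sub_distrib]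
      refine sum_congr rfl fun b _ ↦ ?_
      rcases eq_or_ne b 1 with rfl | hb
      · simp [truncLog_one hp]
      · have := mul_inv_cancel₀ (sub_ne_zero.mpr hb.symm)
        linear_combination -b ^ i * truncLog b * this
    rw [hdiff, ih (by omega), sum_pow_mul_truncLog (by omega), harmonicMod_succ]
    ring

/-! ### Jacobi sums of Teichmüller characters modulo `p²` -/

lemma teichmullerChar_pow_ne_one {i : ℕ} (hi : 1 ≤ i) (hip : i < p - 1) : ω ^ i ≠ 1 :=
  pow_ne_one_of_lt_orderOf (by omega) (by rwa [orderOf_teichmullerChar])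

lemma toZMod_inv_teichmullerChar (a : ZMod p) : toZMod (ω⁻¹ a) = a⁻¹ := by
  rw [MulChar.inv_apply', toZMod_teichmullerChar]

lemma jacobiSum_pow_inv_sub_succ {i : ℕ} (hi : 1 ≤ i) (hip : i < p - 1) :
    jacobiSum (ω ^ i) ω⁻¹ - jacobiSum (ω ^ (i + 1)) ω⁻¹ =
      ∑ b, ω b ^ i * (1 - ω b - ω (1 - b)) * ω⁻¹ (1 - b) - 1 := by
  have hsum : ∑ b, ω b ^ i = 0 := by
    rw [← MulChar.sum_eq_zero_of_ne_one (teichmullerChar_pow_ne_one hi hip)]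
    exact sum_congr rfl fun b _ ↦ (MulChar.pow_apply' ω (by omega) b).symm
  have hone : ∑ b : ZMod p, (if b = 1 then (1 : ℤ_[p]) else 0) = 1 := by simp
  have hterm : ∀ b : ZMod p, ω b ^ i * ω⁻¹ (1 - b) - ω b ^ (i + 1) * ω⁻¹ (1 - b) =
      ω b ^ i * (1 - ω b - ω (1 - b)) * ω⁻¹ (1 - b) + (ω b ^ i - if b = 1 then 1 else 0) := by
    intro b
    split_ifs with hb
    · simp [hb, MulChar.map_zero]
    · have : ω (1 - b) * ω⁻¹ (1 - b) = 1 := by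
        rw [← MulChar.mul_apply, mul_inv_cancel,
          MulChar.one_apply (sub_ne_zero.mpr (Ne.symm hb)).isUnit]
      linear_combination ω b ^ i * this
  simp only [jacobiSum, ← sum_sub_distrib, MulChar.pow_apply' ω (by omega : i ≠ 0),
    MulChar.pow_apply' ω i.succ_ne_zero, hterm]
  rw [sum_add_distrib, sum_sub_distrib, hsum, hone, zero_sub, sub_eq_add_neg]

lemma toZModPow_jacobiSum_pow_inv (hp : 2 < p) {i : ℕ} (hi : 1 ≤ i) (hip : i < p) :
    π (jacobiSum (ω ^ i) ω⁻¹) = i + ε (i * harmonicMod p (i - 1)) := by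
  induction i, hi using Nat.le_induction with
  | base =>
    have hω : ω ≠ 1 := by simpa using teichmullerChar_pow_ne_one (p := p) le_rfl (by omega)
    rw [pow_one, jacobiSum_nontrivial_inv hω, teichmullerChar_neg_one hp, neg_neg, map_one]
    simp [harmonicMod]
  | succ i hi ih =>
    have hlog : π (∑ b, ω b ^ i * (1 - ω b - ω (1 - b)) * ω⁻¹ (1 - b)) =
        ε (-(harmonicMod p i + 1)) := by
      rw [← sum_pow_mul_truncLog_mul_inv hp (by omega), map_sum, map_sum]
      refine sum_congr rfl fun b _ ↦ ?_
      rw [map_mul, map_mul, map_sub π (1 - ω b), toZModPow_one_sub_teichmullerChar hp,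
        add_sub_cancel_left, mul_primeMul, primeMul_mul]
      simp [toZMod_inv_teichmullerChar]
    have hrec := congrArg π (jacobiSum_pow_inv_sub_succ hi (by omega))
    rw [map_sub, map_sub, ih (by omega), hlog, map_one, map_neg] at hrec
    have hinv := mul_inv_cancel₀ (natCast_ne_zero_of_lt hi (by omega : i < p))
    have hε : i * harmonicMod p (i - 1) + (harmonicMod p i + 1) =
        (i + 1 : ℕ) * harmonicMod p i := by
      rw [harmonicMod_eq_pred_add hi]
      push_cast
      linear_combination -hinv
    rw [Nat.add_sub_cancel, ← hε, map_add]
    push_cast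
    linear_combination -hrec

/-- The residue modulo `p` of the Fermat quotient `(aᵖ⁻¹ - 1) / p`; meaningful for `p ∤ a`. -/
def fermatQuot (p : ℕ) (a : ℤ) : ZMod p := ((a ^ (p - 1) - 1) / p : ℤ)

/-- The residue modulo `p` of the Wilson quotient `((p - 1)! + 1) / p`. -/
def wilsonQuot (p : ℕ) : ZMod p := (((p - 1).factorial + 1 : ℤ) / p : ℤ)

lemma intCast_pow_prime_sub_one {a : ℤ} (ha : (a : ZMod p) ≠ 0) :
    (a : ZMod (p ^ 2)) ^ (p - 1) = 1 + ε (fermatQuot p a) := by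
  rw [fermatQuot, ← intCast_eq_primeMul_of_dvd]
  · simp
  · rw [← ZMod.intCast_zmod_eq_zero_iff_dvd]
    simp [ZMod.pow_card_sub_one_eq_one ha]

lemma factorial_prime_sub_one :
    ((p - 1).factorial : ZMod (p ^ 2)) = -1 + ε (wilsonQuot p) := by
  rw [wilsonQuot, ← intCast_eq_primeMul_of_dvd]
  · simp
  · rw [← ZMod.intCast_zmod_eq_zero_iff_dvd]
    simp [ZMod.wilsons_lemma]

lemma toZModPow_teichmullerChar_intCast {a : ℤ} (ha : (a : ZMod p) ≠ 0) :
    π (ω a) = a * (1 + ε (fermatQuot p a)) := by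
  have h := toZModPow_teichmullerChar (a : ℤ_[p])
  rw [map_intCast toZMod, map_intCast π] at h
  rw [h, ← intCast_pow_prime_sub_one ha, mul_pow_sub_one (Fact.out : p.Prime).ne_zero]

lemma sum_fermatQuot (hp : 2 < p) : ∑ k ∈ Ico 1 p, fermatQuot p k = wilsonQuot p := by
  have heven : Even (p - 1) := (Fact.out : p.Prime).even_sub_one hp.ne'
  refine primeMul_injective (add_left_cancel (a := 1) ?_)
  calc 1 + ε (∑ k ∈ Ico 1 p, fermatQuot p k)
      = ∏ k ∈ Ico 1 p, (k : ZMod (p ^ 2)) ^ (p - 1) := by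
        rw [← prod_one_add_primeMul]
        refine prod_congr rfl fun k hk ↦ ?_
        rw [mem_Ico] at hk
        rw [← intCast_pow_prime_sub_one (by simpa using natCast_ne_zero_of_lt hk.1 hk.2),
          Int.cast_natCast]
    _ = ((p - 1).factorial : ZMod (p ^ 2)) ^ (p - 1) := by
        rw [prod_pow, ← Nat.cast_prod, ← prod_Ico_id_eq_factorial, (by omega : p - 1 + 1 = p)]
    _ = (1 + ε (-wilsonQuot p)) ^ (p - 1) := by
        rw [factorial_prime_sub_one, ← heven.neg_pow, neg_add, neg_neg, map_neg]
    _ = 1 + ε (wilsonQuot p) := by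
        rw [one_add_primeMul_pow, Nat.cast_sub (by omega)]
        simp

local notation "θ" => (teichmullerChar p)⁻¹

lemma orderOf_inv_teichmullerChar : orderOf θ = p - 1 := by
  rw [orderOf_inv, orderOf_teichmullerChar]

lemma inv_teichmullerChar_neg_one (hp : 2 < p) : θ (-1) = -1 := by
  rw [MulChar.inv_apply', inv_neg_one, teichmullerChar_neg_one hp]

lemma toZModPow_jacobiSum_inv_teichmullerChar (hp : 2 < p) {i : ℕ} (hip : i + 1 < p) :
    π (jacobiSum (θ ^ i) θ) = -((i + 1 : ℕ) * (1 + ε (harmonicMod p i))) := by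
  rw [inv_pow, jacobiSum_inv_left, inv_teichmullerChar_neg_one hp, inv_inv, ← pow_succ,
    neg_one_mul, map_neg, toZModPow_jacobiSum_pow_inv hp (by omega) hip, mul_add, mul_one,
    mul_primeMul, map_natCast, Nat.add_sub_cancel]

lemma toZModPow_jacobiProd (hp : 2 < p) {s : ℕ} (hs : 1 ≤ s) (hsp : s < p) :
    π (jacobiProd θ s) =
      (-1) ^ (s + 1) * s.factorial * (1 + ε (s * harmonicMod p s - s)) := by
  induction s, hs using Nat.le_induction with
  | base => simp [jacobiProd, harmonicMod]
  | succ s hs ih =>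
    have hinv := mul_inv_cancel₀ (natCast_ne_zero_of_lt (by omega) hsp)
    have hsum : ((s + 1 : ℕ) : ZMod p) * harmonicMod p (s + 1) - (s + 1 : ℕ) =
        s * harmonicMod p s - s + harmonicMod p s := by
      rw [harmonicMod_succ]
      push_cast at hinv ⊢
      linear_combination hinv
    have hmul := add_primeMul_mul_add_primeMul (p := p) 1 1 (s * harmonicMod p s - s)
      (harmonicMod p s)
    rw [map_one, mul_one, one_mul, mul_one, add_comm (harmonicMod p s)] at hmul
    rw [jacobiProd, prod_Ico_succ_top hs, map_mul, ← jacobiProd, ih (by omega),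
      toZModPow_jacobiSum_inv_teichmullerChar hp hsp, hsum, ← hmul, Nat.factorial_succ]
    push_cast
    ring

lemma toZMod_jacobiProd (hp : 2 < p) {s : ℕ} (hs : 1 ≤ s) (hsp : s < p) :
    toZMod (jacobiProd θ s) = -((-1) ^ s * s.factorial) := by
  rw [← modSqToMod_toZModPow, toZModPow_jacobiProd hp hs hsp, pow_succ (-1 : ZMod (p ^ 2)) s]
  simp

lemma toZModPow_jacobiProd_prime_sub_two (hp : 2 < p) :
    π (jacobiProd θ (p - 2)) = 1 + ε (1 - wilsonQuot p) := by
  have hsub : ((p - 2 : ℕ) : ZMod p) = -2 := by rw [Nat.cast_sub (by omega)]; simp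
  have hunit : IsUnit ((p - 1 : ℕ) : ZMod (p ^ 2)) := isUnit_of_modSqToMod_ne_zero (by
    rw [map_natCast]; exact natCast_ne_zero_of_lt (by omega) (by omega))
  have hfact : ((p - 2).factorial : ZMod (p ^ 2)) = 1 + ε (1 - wilsonQuot p) := by
    refine hunit.mul_left_cancel ?_
    calc ((p - 1 : ℕ) : ZMod (p ^ 2)) * (p - 2).factorial
        = -1 + ε (wilsonQuot p) := by
          rw [← factorial_prime_sub_one, ← Nat.mul_factorial_pred (by omega : p - 1 ≠ 0),
            Nat.sub_sub, Nat.cast_mul]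
      _ = (-1 + ε 1) * (1 + ε (1 - wilsonQuot p)) := by
          rw [add_primeMul_mul_add_primeMul, map_neg, map_one]
          congr 2 <;> ring
      _ = _ := by rw [primeMul_one, Nat.cast_sub (by omega), Nat.cast_one, neg_add_eq_sub]
  rw [toZModPow_jacobiProd hp (by omega) (by omega), hsub, harmonicMod_prime_sub_two hp, hfact,
    (by omega : p - 2 + 1 = p - 1), ((Fact.out : p.Prime).even_sub_one hp.ne').neg_one_pow]
  simp

/-! ### Rational numbers modulo `p` and `p²` -/

/-- The rational number `x` is `p`-integral and its image under `f : ℤ_[p] →+* R` is `a`. Taking for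
`f` the reduction modulo `p` or `p²`, this evaluates fractions modulo `p` or `p²`. -/
def ReducesTo {R : Type*} [CommRing R] (f : ℤ_[p] →+* R) (x : ℚ) (a : R) : Prop :=
  ∃ z : ℤ_[p], (z : ℚ_[p]) = x ∧ f z = a

namespace ReducesTo

section General

variable {R : Type*} [CommRing R] {f : ℤ_[p] →+* R} {x y : ℚ} {a b : R}

lemma unique (h : ReducesTo f x a) (h' : ReducesTo f x b) : a = b := by
  obtain ⟨z, hz, rfl⟩ := h
  obtain ⟨w, hw, rfl⟩ := h'
  rw [PadicInt.ext (hz.trans hw.symm)]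

lemma add (h : ReducesTo f x a) (h' : ReducesTo f y b) : ReducesTo f (x + y) (a + b) := by
  obtain ⟨z, hz, rfl⟩ := h
  obtain ⟨w, hw, rfl⟩ := h'
  exact ⟨z + w, by push_cast [hz, hw]; rfl, map_add f z w⟩

lemma mul (h : ReducesTo f x a) (h' : ReducesTo f y b) : ReducesTo f (x * y) (a * b) := by
  obtain ⟨z, hz, rfl⟩ := h
  obtain ⟨w, hw, rfl⟩ := h'
  exact ⟨z * w, by push_cast [hz, hw]; rfl, map_mul f z w⟩

lemma intCast (n : ℤ) : ReducesTo f n n := ⟨n, by push_cast; rfl, map_intCast f n⟩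

lemma natCast (n : ℕ) : ReducesTo f n n := by simpa using intCast (f := f) n

lemma sub (h : ReducesTo f x a) (h' : ReducesTo f y b) : ReducesTo f (x - y) (a - b) := by
  simpa [sub_eq_add_neg] using h.add ((intCast (-1)).mul h')

lemma pow (h : ReducesTo f x a) (n : ℕ) : ReducesTo f (x ^ n) (a ^ n) := by
  obtain ⟨z, hz, rfl⟩ := h
  exact ⟨z ^ n, by push_cast [hz]; rfl, map_pow f z n⟩

lemma sum {ι : Type*} {s : Finset ι} {u : ι → ℚ} {v : ι → R}
    (h : ∀ i ∈ s, ReducesTo f (u i) (v i)) : ReducesTo f (∑ i ∈ s, u i) (∑ i ∈ s, v i) := by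
  classical
  induction s using Finset.induction_on with
  | empty => simpa using natCast (f := f) 0
  | insert i s hi ih =>
    rw [sum_insert hi, sum_insert hi]
    exact (h i (mem_insert_self i s)).add (ih fun j hj ↦ h j (mem_insert_of_mem hj))

end General

variable {x y : ℚ} {a b : ZMod p}

lemma inv (h : ReducesTo toZMod y b) (hb : b ≠ 0) : ReducesTo toZMod y⁻¹ b⁻¹ := by
  obtain ⟨z, hz, rfl⟩ := h
  obtain ⟨w, hw⟩ := (isUnit_iff_toZMod_ne_zero.mpr hb).exists_right_inv
  refine ⟨w, ?_, eq_inv_of_mul_eq_one_right (by rw [← map_mul, hw, map_one])⟩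
  rw [Rat.cast_inv, ← hz]
  exact eq_inv_of_mul_eq_one_right (by exact_mod_cast congrArg ((↑) : ℤ_[p] → ℚ_[p]) hw)

lemma div (h : ReducesTo toZMod x a) (h' : ReducesTo toZMod y b) (hb : b ≠ 0) :
    ReducesTo toZMod (x / y) (a / b) := by
  rw [div_eq_mul_inv, div_eq_mul_inv]
  exact h.mul (h'.inv hb)

lemma prime_mul_iff : ReducesTo π (p * x) (ε a) ↔ ReducesTo toZMod x a := by
  constructor
  · rintro ⟨z, hz, hza⟩
    obtain ⟨w, rfl⟩ : (p : ℤ_[p]) ∣ z := by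
      rw [← toZMod_eq_zero_iff, ← modSqToMod_toZModPow, hza, modSqToMod_primeMul]
    refine ⟨w, ?_, primeMul_injective (by rw [← toZModPow_prime_mul, hza])⟩
    have hp0 : (p : ℚ_[p]) ≠ 0 := Nat.cast_ne_zero.mpr (Fact.out : p.Prime).ne_zero
    exact mul_left_cancel₀ hp0 (by simpa using hz)
  · rintro ⟨z, hz, rfl⟩
    exact ⟨p * z, by push_cast [hz]; rfl, toZModPow_prime_mul z⟩

lemma div_prime_iff : ReducesTo toZMod (x / p) a ↔ ReducesTo π x (ε a) := by
  rw [← prime_mul_iff, mul_div_cancel₀ x (Nat.cast_ne_zero.mpr (Fact.out : p.Prime).ne_zero)]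

lemma primeMul_div (h : ReducesTo π x (ε a)) (h' : ReducesTo toZMod y b) (hb : b ≠ 0) :
    ReducesTo π (x / y) (ε (a / b)) := by
  rw [← div_prime_iff, div_right_comm]
  exact (div_prime_iff.mpr h).div h' hb

lemma ratCast (hx : ¬ p ∣ x.den) : ReducesTo toZMod x (x : ZMod p) := by
  have hden : (x.den : ZMod p) ≠ 0 := by rwa [Ne, ZMod.natCast_eq_zero_iff]
  have h := (intCast x.num).div (natCast x.den) hden
  rwa [Rat.num_div_den, ← Rat.cast_def] at h

end ReducesTo

lemma modCong_two_of_reducesTo {x y : ℚ} {a : ZMod (p ^ 2)} (hx : ReducesTo π x a)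
    (hy : ReducesTo π y a) : modCong p 2 x y := by
  obtain ⟨z, hz, hza⟩ := hx
  obtain ⟨w, hw, hwa⟩ := hy
  refine or_iff_not_imp_left.mpr fun hxy ↦ ?_
  obtain ⟨c, hc⟩ : (p : ℤ_[p]) ^ 2 ∣ z - w := by
    rw [← Ideal.mem_span_singleton, ← ker_toZModPow, RingHom.mem_ker, map_sub, hza, hwa, sub_self]
  have hval : (PadicInt.valuation (z - w) : ℤ) = padicValRat p (x - y) := by
    rw [← Padic.valuation_ratCast, ← PadicInt.valuation_coe]
    push_cast [hz, hw]
    rfl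
  have hne : z - w ≠ 0 := by
    refine sub_ne_zero.mpr fun hzw ↦ hxy ?_
    rw [← Rat.cast_inj (α := ℚ_[p]), ← hz, ← hw, hzw]
  rw [← hval, hc, PadicInt.valuation_p_pow_mul 2 c (right_ne_zero_of_mul (hc ▸ hne))]
  omega

/-! ### Power sums and Bernoulli numbers modulo `p` -/

lemma not_prime_dvd_den_bernoulli (hp : 2 < p) {k : ℕ} (hk : k + 1 < p) :
    ¬ p ∣ (bernoulli k).den := by
  rw [← Rat.padicValuation_le_one_iff]
  rcases Nat.even_or_odd' k with ⟨m, rfl | rfl⟩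
  · obtain ⟨c, hc⟩ := Bernoulli.vonStaudt_clausen m
    rw [eq_sub_of_add_eq hc.symm]
    refine Valuation.map_sub_le _ ?_ (Valuation.map_sum_le _ fun q hq ↦ ?_)
    · simp [Rat.padicValuation_le_one_iff, (Fact.out : p.Prime).ne_one]
    · obtain ⟨hq1, hq2, hq3⟩ := mem_filter.mp hq
      rw [mem_range] at hq1
      rw [Rat.padicValuation_le_one_iff, one_div, Rat.inv_natCast_den_of_pos hq2.pos]
      intro hdvd
      obtain rfl := (Nat.prime_dvd_prime_iff_eq Fact.out hq2).mp hdvd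
      omega
  · rcases Nat.eq_zero_or_pos m with rfl | hm
    · rw [Rat.padicValuation_le_one_iff, mul_zero, zero_add, bernoulli_one]
      norm_num
      exact Nat.not_dvd_of_pos_of_lt two_pos hp
    · rw [bernoulli_eq_zero_of_odd (odd_two_mul_add_one m) (by omega), map_zero]
      exact zero_le

lemma reducesTo_bernoulli (hp : 2 < p) {k : ℕ} (hk : k + 1 < p) :
    ReducesTo toZMod (bernoulli k) (bernoulli k : ZMod p) :=
  .ratCast (not_prime_dvd_den_bernoulli hp hk)

lemma sum_range_pow_zmod (hp : 2 < p) (N : ℕ) {j : ℕ} (hj : j + 1 < p) :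
    ∑ k ∈ range N, (k : ZMod p) ^ j = ∑ l ∈ range (j + 1),
      (bernoulli l : ZMod p) * (j + 1).choose l * N ^ (j + 1 - l) / (j + 1 : ℕ) := by
  have h : ReducesTo toZMod (∑ k ∈ range N, (k : ℚ) ^ j) (∑ k ∈ range N, (k : ZMod p) ^ j) :=
    .sum fun k _ ↦ (ReducesTo.natCast k).pow j
  refine h.unique ?_
  rw [sum_range_pow]
  refine .sum fun l hl ↦ ?_
  rw [mem_range] at hl
  rw [← Nat.cast_add_one j]
  have hterm := ((reducesTo_bernoulli hp (by omega : l + 1 < p)).mul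
    (.natCast ((j + 1).choose l))).mul ((ReducesTo.natCast N).pow (j + 1 - l))
  exact hterm.div (.natCast _) (natCast_ne_zero_of_lt (by omega) hj)

lemma reducesTo_prime_pow_div (hp : 2 < p) {d : ℕ} (hd : 1 ≤ d) (hdp : d < p) :
    ReducesTo toZMod ((p : ℚ) ^ d / (d + 1 : ℕ)) (0 : ZMod p) := by
  rcases eq_or_lt_of_le (Nat.succ_le_of_lt hdp) with h | h
  · have hp0 : (p : ℚ) ≠ 0 := Nat.cast_ne_zero.mpr (by omega)
    obtain ⟨d, rfl⟩ := Nat.exists_eq_add_of_le' hd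
    rw [Nat.succ_eq_add_one] at h
    rw [h, pow_succ, mul_div_cancel_right₀ _ hp0]
    simpa [zero_pow (by omega : d ≠ 0)] using
      (ReducesTo.natCast (f := toZMod (p := p)) p).pow d
  · have hne : ((d + 1 : ℕ) : ZMod p) ≠ 0 := natCast_ne_zero_of_lt d.succ_pos h
    simpa [zero_pow (by omega : d ≠ 0)] using
      ((ReducesTo.natCast (f := toZMod) p).pow d).div (.natCast (d + 1)) hne

lemma reducesTo_prime_mul_bernoulli (hp : 2 < p) {j : ℕ} (hj : j < p) :
    ReducesTo π (p * bernoulli j) (∑ k ∈ range p, (k : ZMod (p ^ 2)) ^ j) := by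
  have hfaulhaber : p * bernoulli j = ∑ k ∈ range p, (k : ℚ) ^ j -
      p * ∑ l ∈ range j, bernoulli l * j.choose l * ((p : ℚ) ^ (j - l) / (j - l + 1 : ℕ)) := by
    rw [sum_range_pow, sum_range_succ, mul_sum, eq_sub_iff_add_eq', Nat.choose_succ_self_right]
    congr 1
    · refine sum_congr rfl fun l hl ↦ ?_
      rw [mem_range] at hl
      have hchoose := congrArg (Nat.cast (R := ℚ)) (Nat.choose_mul_succ_eq j l)
      rw [Nat.succ_sub hl.le, Nat.succ_eq_add_one, pow_succ]
      rw [Nat.succ_sub hl.le] at hchoose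
      push_cast at hchoose ⊢
      have : ((j - l : ℕ) : ℚ) + 1 ≠ 0 := by positivity
      field_simp
      linear_combination bernoulli l * hchoose
    · rw [Nat.add_sub_cancel_left, pow_one]
      push_cast
      field_simp
  have hzero : ReducesTo toZMod (∑ l ∈ range j,
      bernoulli l * j.choose l * ((p : ℚ) ^ (j - l) / (j - l + 1 : ℕ))) (0 : ZMod p) := by
    rw [← sum_const_zero (s := range j)]
    refine .sum fun l hl ↦ ?_
    rw [mem_range] at hl
    simpa using ((reducesTo_bernoulli hp (by omega)).mul (.natCast (j.choose l))).mul
      (reducesTo_prime_pow_div hp (by omega : 1 ≤ j - l) (by omega))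
  have h := (ReducesTo.sum fun k (_ : k ∈ range p) ↦ (ReducesTo.natCast (f := π) k).pow j).sub
    (ReducesTo.prime_mul_iff.mpr hzero)
  rwa [← hfaulhaber, map_zero, sub_zero] at h

lemma sum_range_prime_pow (hp : 2 < p) {j : ℕ} (hj : j + 1 < p) :
    ∑ k ∈ range p, (k : ZMod (p ^ 2)) ^ j = ε (bernoulli j : ZMod p) :=
  (reducesTo_prime_mul_bernoulli hp (by omega)).unique
    (ReducesTo.prime_mul_iff.mpr (reducesTo_bernoulli hp hj))

lemma reducesTo_prime_mul_bernoulli_prime_sub_one (hp : 2 < p) :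
    ReducesTo π (p * bernoulli (p - 1)) (p - 1 + ε (wilsonQuot p)) := by
  convert reducesTo_prime_mul_bernoulli hp (by omega : p - 1 < p) using 1
  have hterm : ∀ k ∈ Ico 1 p, (k : ZMod (p ^ 2)) ^ (p - 1) = 1 + ε (fermatQuot p k) := by
    intro k hk
    rw [mem_Ico] at hk
    rw [← intCast_pow_prime_sub_one (by simpa using natCast_ne_zero_of_lt hk.1 hk.2),
      Int.cast_natCast]
  rw [sum_range_eq_add_Ico _ (by omega), Nat.cast_zero, zero_pow (by omega), zero_add,
    sum_congr rfl hterm, sum_add_distrib, ← map_sum, sum_fermatQuot hp]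
  simp [Nat.cast_sub (by omega : 1 ≤ p)]

lemma bernoulli_eq_neg_mul_sum_pow_mul_fermatQuot (hp : 2 < p) {i : ℕ} (hi : 1 ≤ i)
    (hip : i + 1 < p) :
    (bernoulli i : ZMod p) = -(i * ∑ k ∈ Ico 1 p, (k : ZMod p) ^ i * fermatQuot p k) := by
  refine primeMul_injective ?_
  have hterm : ∀ k ∈ Ico 1 p,
      π (ω k ^ i) = (k : ZMod (p ^ 2)) ^ i + ε (i * (k ^ i * fermatQuot p k)) := by
    intro k hk
    rw [mem_Ico] at hk
    have h := toZModPow_teichmullerChar_intCast (p := p) (a := k)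
      (by simpa using natCast_ne_zero_of_lt hk.1 hk.2)
    rw [Int.cast_natCast, Int.cast_natCast] at h
    rw [map_pow, h, mul_pow, one_add_primeMul_pow, mul_add, mul_one, mul_primeMul, map_pow,
      map_natCast, mul_left_comm]
  have hsum : ∑ a, ω a ^ i = 0 := by
    rw [← MulChar.sum_eq_zero_of_ne_one (teichmullerChar_pow_ne_one hi (by omega : i < p - 1))]
    exact sum_congr rfl fun a _ ↦ (MulChar.pow_apply' ω (by omega) a).symm
  have hsumIco : ∑ k ∈ Ico 1 p, ω (k : ZMod p) ^ i = 0 := by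
    rw [← hsum, sum_zmod_eq_sum_Ico (by rw [MulChar.map_zero, zero_pow (by omega)])]
  rw [← sum_range_prime_pow hp hip, sum_range_eq_add_Ico _ (by omega), Nat.cast_zero,
    zero_pow (by omega), zero_add, map_neg,
    ← add_eq_zero_iff_eq_neg, mul_sum, map_sum, ← sum_add_distrib, ← sum_congr rfl hterm,
    ← map_sum, hsumIco, map_zero]

lemma harmonicMod_eq_sum_pow (hp : 2 < p) {k : ℕ} (hk : 1 ≤ k) (hkp : k ≤ p) :
    harmonicMod p (k - 1) = ∑ i ∈ range k, (i : ZMod p) ^ (p - 2) := by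
  rw [harmonicMod, Nat.sub_add_cancel hk, sum_range_eq_add_Ico _ hk, Nat.cast_zero,
    zero_pow (by omega), zero_add]
  refine sum_congr rfl fun i hi ↦ (eq_inv_of_mul_eq_one_left ?_).symm
  rw [mem_Ico] at hi
  rw [← pow_succ, (by omega : p - 2 + 1 = p - 1),
    ZMod.pow_card_sub_one_eq_one (natCast_ne_zero_of_lt hi.1 (by omega))]

lemma sum_pow_mul_harmonicMod (hp : 2 < p) {j : ℕ} (hj : j + 1 < p) :
    ∑ k ∈ Ico 1 p, (k : ZMod p) ^ j * harmonicMod p (k - 1) = (-1) ^ j * bernoulli j := by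
  have hcast : ((p - 1 : ℕ) : ZMod p) = -1 := by rw [Nat.cast_sub (by omega)]; simp
  have hterm : ∀ k ∈ Ico 1 p, (k : ZMod p) ^ j * harmonicMod p (k - 1) = ∑ l ∈ range (p - 1),
      -((bernoulli l : ZMod p) * (p - 1).choose l) * k ^ (j + (p - 1 - l)) := by
    intro k hk
    rw [mem_Ico] at hk
    rw [harmonicMod_eq_sum_pow hp hk.1 hk.2.le, sum_range_pow_zmod hp k (by omega),
      (by omega : p - 2 + 1 = p - 1), hcast, mul_sum]
    refine sum_congr rfl fun l _ ↦ ?_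
    rw [pow_add]
    ring
  have hpow : ∀ l ∈ range (p - 1), ∑ k ∈ Ico 1 p, (k : ZMod p) ^ (j + (p - 1 - l)) =
      if l = j then -1 else 0 := by
    intro l hl
    rw [mem_range] at hl
    rw [← sum_zmod_eq_sum_Ico (g := fun a ↦ a ^ (j + (p - 1 - l))) (zero_pow (by omega))]
    split_ifs with hlj
    · rw [(by omega : j + (p - 1 - l) = p - 1), sum_pow_prime_sub_one]
    · refine sum_pow_eq_zero fun ⟨c, hc⟩ ↦ ?_
      rcases c with _ | _ | c
      · omega
      · omega
      · have : (p - 1) * 2 ≤ (p - 1) * (c + 1 + 1) := Nat.mul_le_mul_left _ (by omega)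
        omega
  have hchoose := congrArg ρ (neg_one_pow_mul_choose_prime_sub_one (p := p) (by omega : j < p))
  rw [map_sub, modSqToMod_primeMul, map_mul, map_pow, map_neg, map_natCast, map_one, sub_zero]
    at hchoose
  rw [sum_congr rfl hterm, sum_comm]
  simp_rw [← mul_sum]
  rw [sum_congr rfl fun l hl ↦ by rw [hpow l hl], sum_eq_single_of_mem j (mem_range.mpr (by omega))
    fun l _ hl ↦ by rw [if_neg hl, mul_zero], if_pos rfl]
  have hsq : ((-1 : ZMod p) ^ j) * (-1) ^ j = 1 := by rw [← mul_pow]; simp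
  linear_combination (-1) ^ j * (bernoulli j : ZMod p) * hchoose -
    ((p - 1).choose j : ZMod p) * bernoulli j * hsq

lemma fermatCoeff_zero : fermatCoeff p 0 = 0 := by
  rw [fermatCoeff, Nat.choose_zero_right, Nat.div_eq_of_lt (Fact.out : p.Prime).one_lt]
  simp

/-! ### The Fourier expansion of `binom(p, k) / p` -/

lemma sum_fermatCoeff (hp : 2 < p) : ∑ k ∈ Ico 1 p, fermatCoeff p k = 0 := by
  have h := one_sub_pow_prime hp (1 : ℤ)
  rw [sub_self, zero_pow (by omega), one_pow, sub_self, zero_sub] at h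
  simpa using (mul_eq_zero.mp (neg_eq_zero.mp h.symm)).resolve_left (by positivity)

lemma sum_inv_teichmullerChar (hp : 2 < p) : ∑ a, θ a = 0 :=
  MulChar.sum_eq_zero_of_ne_one (inv_ne_one.mpr (by
    simpa using teichmullerChar_pow_ne_one le_rfl (by omega : 1 < p - 1)))

lemma exists_fermatCoeff_eq_add (hp : 2 < p) :
    ∃ D : ZMod p → ℤ_[p], (∀ a, (fermatCoeff p a.val : ℤ_[p]) = θ a + p * D a) ∧
      D 0 = 0 ∧ ∑ a, D a = 0 := by
  have hp0 : (p : ℤ_[p]) ≠ 0 := Nat.cast_ne_zero.mpr (by omega)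
  have hdvd : ∀ a : ZMod p, (p : ℤ_[p]) ∣ fermatCoeff p a.val - θ a := by
    intro a
    rw [← toZMod_eq_zero_iff, map_sub toZMod, map_intCast, toZMod_inv_teichmullerChar, sub_eq_zero]
    rcases eq_or_ne a 0 with rfl | ha
    · simp [fermatCoeff_zero]
    · rw [fermatCoeff_eq_inv (ZMod.val_pos.mpr ha) a.val_lt, ZMod.natCast_zmod_val]
  choose D hD using hdvd
  refine ⟨D, fun a ↦ by rw [← hD, add_sub_cancel], ?_, ?_⟩
  · have h := hD 0
    rw [ZMod.val_zero, fermatCoeff_zero, MulChar.map_zero, Int.cast_zero, sub_self] at h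
    exact (mul_eq_zero.mp h.symm).resolve_left hp0
  · have hsum : ∑ a : ZMod p, (fermatCoeff p a.val : ℤ_[p]) = 0 := by
      rw [sum_zmod_eq_sum_Ico (by rw [ZMod.val_zero, fermatCoeff_zero, Int.cast_zero]),
        sum_congr rfl fun k hk ↦ by rw [ZMod.val_cast_of_lt (mem_Ico.mp hk).2], ← Int.cast_sum,
        sum_fermatCoeff hp, Int.cast_zero]
    refine (mul_eq_zero.mp ?_).resolve_left hp0
    rw [mul_sum, ← sum_congr rfl fun a _ ↦ hD a, sum_sub_distrib, hsum,
      sum_inv_teichmullerChar hp, sub_zero]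

lemma natCast_mul_toZMod_of_fermatCoeff_eq {k : ℕ} (hk : 1 ≤ k) (hkp : k < p) {d : ℤ_[p]}
    (h : (fermatCoeff p k : ℤ_[p]) = θ k + p * d) :
    (k : ZMod p) * toZMod d = fermatQuot p k - harmonicMod p (k - 1) := by
  have hk0 : (k : ZMod p) ≠ 0 := natCast_ne_zero_of_lt hk hkp
  have hω : (k : ZMod (p ^ 2)) * (1 + ε (fermatQuot p k)) * π (θ k) = 1 := by
    have h := toZModPow_teichmullerChar_intCast (p := p) (a := k) (by simpa using hk0)
    rw [Int.cast_natCast, Int.cast_natCast] at h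
    rw [← h, ← map_mul, ← MulChar.mul_apply, mul_inv_cancel, MulChar.one_apply hk0.isUnit, map_one]
  have hsq : ε (fermatQuot p k) * ε (fermatQuot p k) = 0 := by
    rw [mul_primeMul, modSqToMod_primeMul, zero_mul, map_zero]
  have hθ : (k : ZMod (p ^ 2)) * π (θ k) = 1 - ε (fermatQuot p k) := by
    linear_combination (1 - ε (fermatQuot p k)) * hω +
      k * π (θ k) * hsq
  have hcoeff := natCast_mul_fermatCoeff hk hkp
  rw [← map_intCast π, h, map_add π, mul_add, hθ, toZModPow_prime_mul, mul_primeMul,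
    map_natCast] at hcoeff
  refine primeMul_injective ?_
  rw [map_sub]
  linear_combination hcoeff

/-- The residue modulo `p` of the coefficient of `ω⁻ⁱ⁻¹` in the Fourier expansion of
`k ↦ (fermatCoeff p k - ω⁻¹ k) / p`. -/
def fermatFourier (p : ℕ) [Fact p.Prime] (i : ℕ) : ZMod p :=
  (-1) ^ i * (bernoulli i : ZMod p) - ∑ k ∈ Ico 1 p, (k : ZMod p) ^ i * fermatQuot p k

lemma exists_fermatCoeff_eq_sum (hp : 2 < p) : ∃ e : ℕ → ℤ_[p],
    (∀ a : ZMod p, (fermatCoeff p a.val : ℤ_[p]) =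
      θ a + p * ∑ i ∈ range (p - 2), e i * (θ ^ (i + 1)) a) ∧
    ∀ i ∈ range (p - 2), toZMod (e i) = fermatFourier p i := by
  obtain ⟨D, hD, hD0, hDsum⟩ := exists_fermatCoeff_eq_add hp
  have hcard : toZMod ((p - 1 : ℕ) : ℤ_[p]) = -1 := by rw [Nat.cast_sub (by omega)]; simp
  obtain ⟨u, hu⟩ := (isUnit_iff_toZMod_ne_zero.mpr (hcard ▸ neg_ne_zero.mpr one_ne_zero) :
    IsUnit ((p - 1 : ℕ) : ℤ_[p])).exists_left_inv
  refine ⟨fun i ↦ u * ∑ b, D b * (ω ^ (i + 1)) b, fun a ↦ ?_, fun i hi ↦ ?_⟩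
  · rw [hD]
    congr 2
    rcases eq_or_ne a 0 with rfl | ha
    · simp [hD0, MulChar.map_zero]
    have htop : ∑ b, D b * (ω ^ (p - 2 + 1)) b = 0 := by
      rw [(by omega : p - 2 + 1 = p - 1), ← orderOf_teichmullerChar, pow_orderOf_eq_one, ← hDsum]
      refine sum_congr rfl fun b _ ↦ ?_
      rcases eq_or_ne b 0 with rfl | hb
      · rw [hD0, zero_mul]
      · rw [MulChar.one_apply hb.isUnit, mul_one]
    have h := card_sub_one_mul_eq_sum_range teichmullerChar_injective D ha
    rw [ZMod.card, (by omega : p - 1 = p - 2 + 1), sum_range_succ, htop, zero_mul, add_zero,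
      (by omega : p - 2 + 1 = p - 1)] at h
    rw [← one_mul (D a), ← hu, mul_assoc, h, mul_sum]
    simp_rw [mul_assoc]
  · have hu' : toZMod u = -1 := by
      have h := congrArg toZMod hu
      rw [map_mul, hcard, map_one] at h
      linear_combination -h
    rw [mem_range] at hi
    rw [map_mul, hu', map_sum, sum_zmod_eq_sum_Ico (by rw [hD0, zero_mul, map_zero]), fermatFourier,
      ← sum_pow_mul_harmonicMod hp (by omega), ← sum_sub_distrib, neg_one_mul, ← sum_neg_distrib]
    refine sum_congr rfl fun k hk ↦ ?_
    rw [mem_Ico] at hk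
    have hDk := natCast_mul_toZMod_of_fermatCoeff_eq hk.1 hk.2
      (by simpa only [ZMod.val_cast_of_lt hk.2] using hD k)
    rw [map_mul, MulChar.pow_apply' _ i.succ_ne_zero, map_pow, toZMod_teichmullerChar, pow_succ]
    linear_combination -(k : ZMod p) ^ i * hDk

lemma fermatFourier_zero (hp : 2 < p) : fermatFourier p 0 = 1 - wilsonQuot p := by
  simp [fermatFourier, sum_fermatQuot hp]

lemma natCast_mul_fermatFourier (hp : 2 < p) {i : ℕ} (hi : 1 ≤ i) (hip : i + 1 < p) :
    i * fermatFourier p i = ((-1) ^ i * i + 1) * (bernoulli i : ZMod p) := by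
  rw [fermatFourier]
  linear_combination -bernoulli_eq_neg_mul_sum_pow_mul_fermatQuot hp hi hip

lemma fermatFourier_one (hp : 3 < p) : fermatFourier p 1 = 0 := by
  simpa using natCast_mul_fermatFourier (by omega) le_rfl (by omega : 1 + 1 < p)

lemma fermatFourier_of_two_le (hp : 2 < p) {i : ℕ} (hi : 2 ≤ i) (hip : i + 1 < p) :
    fermatFourier p i = (i + 1 : ℕ) * bernoulli i / i := by
  rw [eq_div_iff (natCast_ne_zero_of_lt (by omega) (by omega)), mul_comm,
    natCast_mul_fermatFourier hp (by omega) hip]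
  rcases Nat.even_or_odd i with h | h
  · rw [h.neg_one_pow, one_mul, Nat.cast_succ]
  · simp [bernoulli_eq_zero_of_odd h hi]

/-! ### Fleck quotients as coefficients in the group ring -/

local notation "𝒢" => groupGaussSum (teichmullerChar p)⁻¹

lemma coeff_one_sub_single_pow_prime (hp : 2 < p) (r : ZMod p) :
    ((1 - AddMonoidAlgebra.single (1 : ZMod p) (1 : ℤ_[p])) ^ p).coeff r =
      -(p * (fermatCoeff p r.val : ℤ_[p])) := by
  have hodd : Odd p := (Fact.out : p.Prime).odd_of_ne_two hp.ne'
  rw [coeff_one_sub_single_pow, sum_range_succ, sum_eq_single_of_mem r.val]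
  · rcases eq_or_ne r 0 with rfl | hr
    · simp [fermatCoeff_zero, hodd.neg_one_pow]
    · have h := congrArg (Int.cast (R := ℤ_[p]))
        (prime_mul_fermatCoeff (ZMod.val_pos.mpr hr) r.val_lt)
      push_cast at h
      rw [h, ZMod.natCast_zmod_val, if_pos rfl, ZMod.natCast_self, if_neg hr.symm, pow_succ]
      ring
  · exact mem_range.mpr r.val_lt
  · intro k hk hkr
    refine if_neg fun h ↦ hkr ?_
    rw [← h, ZMod.val_cast_of_lt (mem_range.mp hk)]

-- The Gauss sums of the powers of `ω⁻¹` are unit multiples of powers of `𝒢`, so that the Fourier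
-- expansion of the coefficients of `(1 - X)ᵖ` becomes a polynomial in `𝒢`.
lemma exists_one_sub_single_pow_prime_eq (hp : 2 < p) : ∃ d : ℕ → ℤ_[p],
    (1 - AddMonoidAlgebra.single (1 : ZMod p) (1 : ℤ_[p])) ^ p =
      (-p : ℤ_[p]) • (𝒢 * (1 + (p : ℤ_[p]) • ∑ i ∈ range (p - 2), d i • 𝒢 ^ i)) ∧
    ∀ i ∈ range (p - 2), (-1) ^ i * (i + 1).factorial * toZMod (d i) = fermatFourier p i := by
  obtain ⟨e, he, heFourier⟩ := exists_fermatCoeff_eq_sum hp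
  have hprod : ∀ i ∈ range (p - 2),
      toZMod (jacobiProd θ (i + 1)) = (-1) ^ i * (i + 1).factorial := by
    intro i hi
    rw [mem_range] at hi
    rw [toZMod_jacobiProd hp i.succ_pos (by omega), pow_succ]
    ring
  have hdvd : ∀ i ∈ range (p - 2), ∃ d, e i = d * jacobiProd θ (i + 1) := by
    intro i hi
    have hunit : IsUnit (jacobiProd θ (i + 1)) := by
      rw [isUnit_iff_toZMod_ne_zero, hprod i hi]
      exact mul_ne_zero (pow_ne_zero _ (neg_ne_zero.mpr one_ne_zero))
        (factorial_ne_zero_of_lt (by rw [mem_range] at hi; omega))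
    exact (hunit.dvd (a := e i)).imp fun d hd ↦ by rw [hd, mul_comm]
  choose! d hd using hdvd
  have hcoeff : ∀ r : ZMod p, (𝒢 * ∑ i ∈ range (p - 2), d i • 𝒢 ^ i).coeff r =
      ∑ i ∈ range (p - 2), e i * (θ ^ (i + 1)) r := by
    intro r
    rw [mul_sum, AddMonoidAlgebra.coeff_sum, Finsupp.finsetSum_apply]
    refine sum_congr rfl fun i hi ↦ ?_
    rw [mul_smul_comm, ← pow_succ', groupGaussSum_pow i.succ_pos
      (by rw [orderOf_inv_teichmullerChar]; rw [mem_range] at hi; omega), hd i hi]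
    simp [mul_assoc]
  refine ⟨d, ?_, fun i hi ↦ ?_⟩
  · ext r
    rw [coeff_one_sub_single_pow_prime hp, he, ← hcoeff, mul_one_add, mul_smul_comm]
    simp [mul_add, add_comm]
  · rw [← heFourier i hi, hd i hi, map_mul, hprod i hi, mul_comm]

lemma toZMod_coeff_groupGaussSum_pow (hp : 2 < p) {i : ℕ} (hi : 1 ≤ i) {r : ZMod p} (hr : r ≠ 0) :
    toZMod ((𝒢 ^ i).coeff r) = -((-1) ^ i * i.factorial * r⁻¹ ^ i) := by
  rcases lt_or_ge i p with hip | hip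
  · rw [coeff_groupGaussSum_pow hi (by rw [orderOf_inv_teichmullerChar]; omega) hr, map_mul,
      toZMod_jacobiProd hp hi hip, MulChar.pow_apply' _ (by omega), map_pow toZMod,
      toZMod_inv_teichmullerChar, neg_mul]
  · have hexp : i = i - (p - 1) + 1 * orderOf θ := by rw [orderOf_inv_teichmullerChar]; omega
    have hfact : (i.factorial : ZMod p) = 0 := by
      rwa [ZMod.natCast_eq_zero_iff, (Fact.out : p.Prime).dvd_factorial]
    rw [hfact, hexp, groupGaussSum_pow_add_mul_orderOf
      (by rw [orderOf_inv_teichmullerChar]; omega) (by omega), ZMod.card]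
    simp

/-- The sum `∑ binom(s + k, s) Bₖ / (k rᵏ)` over `2 ≤ k ≤ p - s - 1`, evaluated modulo `p`. -/
def bernoulliSum {p : ℕ} [Fact p.Prime] (s : ℕ) (r : ZMod p) : ZMod p :=
  ∑ k ∈ Icc 2 (p - s - 1), ((s + k).choose s : ZMod p) * bernoulli k / (k * r ^ k)

lemma bernoulliSum_eq_sum_Ico {s : ℕ} (hs : 1 ≤ s) (hsp : s < p) (r : ZMod p) :
    bernoulliSum s r = ∑ k ∈ Ico 2 (p - 2),
      ((s + k).choose s : ZMod p) * bernoulli k / (k * r ^ k) := by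
  have hprime : p.Prime := Fact.out
  trans ∑ k ∈ Ico 2 (p - 1), ((s + k).choose s : ZMod p) * bernoulli k / (k * r ^ k)
  · refine sum_subset (fun k ↦ by rw [mem_Icc, mem_Ico]; omega) fun k hk hks ↦ ?_
    rw [mem_Ico] at hk
    rw [mem_Icc] at hks
    rw [(ZMod.natCast_eq_zero_iff _ p).mpr (hprime.dvd_choose_add _ _ _)]
    · simp
    all_goals omega
  · refine (sum_subset (fun k ↦ by rw [mem_Ico, mem_Ico]; omega) fun k hk hks ↦ ?_).symm
    rw [mem_Ico] at hk hks
    obtain rfl : k = p - 2 := by omega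
    rw [bernoulli_eq_zero_of_odd]
    · simp
    · exact Nat.Odd.sub_even (by omega) (hprime.odd_of_ne_two (by omega)) even_two
    · omega

lemma sum_fermatFourier_mul_factorial_div (hp : 2 < p) {s : ℕ} (hs : 1 ≤ s) (hsp : s < p)
    (r : ZMod p) :
    ∑ i ∈ range (p - 2),
        fermatFourier p i * ((s + i).factorial / (i + 1).factorial) * r⁻¹ ^ i =
      s.factorial * (1 - wilsonQuot p + bernoulliSum s r) := by
  have hterm : ∀ k ∈ Ico 2 (p - 2),
      fermatFourier p k * ((s + k).factorial / (k + 1).factorial) * r⁻¹ ^ k =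
        s.factorial * (((s + k).choose s : ZMod p) * bernoulli k / (k * r ^ k)) := by
    intro k hk
    rw [mem_Ico] at hk
    have hk0 : (k : ZMod p) ≠ 0 := natCast_ne_zero_of_lt (by omega) (by omega)
    have hk1 : ((k + 1 : ℕ) : ZMod p) ≠ 0 := natCast_ne_zero_of_lt (by omega) (by omega)
    have hfact : (k.factorial : ZMod p) ≠ 0 := factorial_ne_zero_of_lt (by omega)
    rw [fermatFourier_of_two_le hp hk.1 (by omega), ← Nat.add_choose_mul_factorial_mul_factorial,
      Nat.choose_symm_add, Nat.factorial_succ, Nat.cast_mul, Nat.cast_mul, Nat.cast_mul, inv_pow]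
    field_simp
  rw [bernoulliSum_eq_sum_Ico hs hsp, mul_add, mul_sum, ← sum_congr rfl hterm]
  rcases eq_or_lt_of_le (Nat.succ_le_of_lt hp) with rfl | h3
  · simp [fermatFourier_zero hp]; ring
  · rw [sum_range_eq_add_Ico _ (by omega), sum_eq_sum_Ico_succ_bot (by omega),
      fermatFourier_zero hp, zero_add, fermatFourier_one h3]
    simp [mul_comm]

lemma toZMod_coeff_groupGaussSum_pow_mul_sum (hp : 2 < p) {d : ℕ → ℤ_[p]}
    (hd : ∀ i ∈ range (p - 2), (-1) ^ i * (i + 1).factorial * toZMod (d i) = fermatFourier p i)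
    {s : ℕ} (hs : 1 ≤ s) (hsp : s < p) {r : ZMod p} (hr : r ≠ 0) :
    toZMod ((𝒢 ^ s * ∑ i ∈ range (p - 2), d i • 𝒢 ^ i).coeff r) =
      -((-1) ^ s * r⁻¹ ^ s * (s.factorial * (1 - wilsonQuot p + bernoulliSum s r))) := by
  rw [mul_sum, AddMonoidAlgebra.coeff_sum, Finsupp.finsetSum_apply, map_sum,
    ← sum_fermatFourier_mul_factorial_div hp hs hsp, mul_sum, ← sum_neg_distrib]
  refine sum_congr rfl fun i hi ↦ ?_
  rw [mul_smul_comm, ← pow_add, AddMonoidAlgebra.coeff_smul, Finsupp.smul_apply, smul_eq_mul,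
    map_mul, toZMod_coeff_groupGaussSum_pow hp (by omega) hr, ← hd i hi]
  have hfact : ((i + 1).factorial : ZMod p) ≠ 0 :=
    factorial_ne_zero_of_lt (by rw [mem_range] at hi; omega)
  field_simp
  ring

lemma Cp_eq_coeff (N : ℕ) (r : ℤ) : ((Cp p N r : ℚ) : ℚ_[p]) =
    (((1 - AddMonoidAlgebra.single (1 : ZMod p) (1 : ℤ_[p])) ^ N).coeff (r : ZMod p) : ℤ_[p]) := by
  rw [coeff_one_sub_single_pow, PadicInt.coe_sum, Cp, Rat.cast_sum]
  refine sum_congr rfl fun k _ ↦ ?_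
  have hiff : ((k : ℤ) - r) % p = 0 ↔ (k : ZMod p) = (r : ZMod p) := by
    rw [← Int.dvd_iff_emod_eq_zero, ← ZMod.intCast_zmod_eq_zero_iff_dvd]
    push_cast
    rw [sub_eq_zero]
  simp only [hiff]
  split_ifs <;> push_cast <;> rfl

lemma Fp_prime_mul_eq_coeff (hp : 2 < p) {y : AddMonoidAlgebra ℤ_[p] (ZMod p)}
    (hy : (1 - AddMonoidAlgebra.single (1 : ZMod p) (1 : ℤ_[p])) ^ p = (-p : ℤ_[p]) • (𝒢 * y))
    {n s m : ℕ} (hn : n = s + m * (p - 1)) (hs : 1 ≤ s) (hsp : s < p) (r : ℤ) :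
    ((Fp p (p * n) r : ℚ) : ℚ_[p]) =
      (jacobiProd θ (p - 2) ^ m * (𝒢 ^ s * y ^ n).coeff (r : ZMod p) : ℤ_[p]) := by
  have hp0 : (-p : ℚ_[p]) ≠ 0 := neg_ne_zero.mpr (Nat.cast_ne_zero.mpr (by omega))
  have hgauss : 𝒢 ^ n = (-p * jacobiProd θ (p - 2)) ^ m • 𝒢 ^ s := by
    rw [hn, ← orderOf_inv_teichmullerChar, groupGaussSum_pow_add_mul_orderOf _ hs,
      inv_teichmullerChar_neg_one hp, ZMod.card, neg_one_mul, orderOf_inv_teichmullerChar,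
      Nat.sub_sub]
    rw [orderOf_inv_teichmullerChar]
    omega
  have hpow : (1 - AddMonoidAlgebra.single (1 : ZMod p) (1 : ℤ_[p])) ^ (p * n) =
      ((-p : ℤ_[p]) ^ (n + m) * jacobiProd θ (p - 2) ^ m) • (𝒢 ^ s * y ^ n) := by
    rw [pow_mul, hy, smul_pow, mul_pow, hgauss, smul_mul_assoc, smul_smul, mul_pow, pow_add,
      mul_assoc]
  rw [Fp, if_neg (mul_ne_zero (by omega) (by omega)), add_zero,
    fdiv_prime_mul_sub_one (by omega) hn hs hsp, zpow_neg, zpow_natCast]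
  push_cast
  rw [Cp_eq_coeff, hpow, AddMonoidAlgebra.coeff_smul, Finsupp.smul_apply, smul_eq_mul]
  push_cast
  rw [mul_assoc, inv_mul_cancel_left₀ (pow_ne_zero _ hp0)]

lemma toZModPow_coeff_mul_one_add_prime_smul_pow (x y : AddMonoidAlgebra ℤ_[p] (ZMod p)) (n : ℕ)
    (r : ZMod p) : π ((x * (1 + (p : ℤ_[p]) • y) ^ n).coeff r) =
      π (x.coeff r) + ε (n * toZMod ((x * y).coeff r)) := by
  obtain ⟨z, hz⟩ := Polynomial.powAddExpansion 1 ((p : ℤ_[p]) • y) n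
  have hexpand : x * (1 + (p : ℤ_[p]) • y) ^ n =
      x + (p : ℤ_[p]) • ((n : ℤ_[p]) • (x * y) + (p : ℤ_[p]) • (x * (z * y ^ 2))) := by
    rw [hz]
    simp only [Algebra.smul_def, map_natCast]
    ring
  rw [hexpand, AddMonoidAlgebra.coeff_add, Finsupp.add_apply, map_add π,
    AddMonoidAlgebra.coeff_smul, Finsupp.smul_apply, smul_eq_mul, toZModPow_prime_mul]
  simp

lemma neg_intCast_pow_eq_toZModPow (hp : 2 < p) {r : ℤ} (hr : (r : ZMod p) ≠ 0) {n s m : ℕ}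
    (hn : n = s + m * (p - 1)) :
    (-r : ZMod (p ^ 2)) ^ n = (-1) ^ s * π (ω r) ^ s * (1 + ε (-(n * fermatQuot p r))) := by
  have hperiod : ω (r : ZMod p) ^ (p - 1) = 1 := by
    rw [← MulChar.pow_apply' _ (by omega), ← orderOf_teichmullerChar (p := p), pow_orderOf_eq_one,
      MulChar.one_apply hr.isUnit]
  have hω : ω (r : ZMod p) ^ n = ω (r : ZMod p) ^ s := by
    rw [hn, pow_add, mul_comm m, pow_mul, hperiod, one_pow, mul_one]
  have hsign : (-1 : ZMod (p ^ 2)) ^ n = (-1) ^ s := by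
    rw [hn, pow_add, (((Fact.out : p.Prime).even_sub_one hp.ne').mul_left m).neg_one_pow, mul_one]
  have hcancel : (1 + ε (n * fermatQuot p r)) * (1 + ε (-(n * fermatQuot p r))) = 1 := by
    rw [one_add_primeMul_mul_one_add_primeMul, add_neg_cancel, map_zero, add_zero]
  rw [← map_pow π, ← hω, map_pow π, toZModPow_teichmullerChar_intCast hr, mul_pow,
    one_add_primeMul_pow, neg_pow, hsign, mul_assoc, mul_assoc, hcancel, mul_one]

lemma toZModPow_teichmullerChar_pow_mul_coeff (hp : 2 < p) {s : ℕ} (hs : 1 ≤ s) (hsp : s < p)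
    {r : ZMod p} (hr : r ≠ 0) {y : AddMonoidAlgebra ℤ_[p] (ZMod p)} {c : ZMod p}
    (hy : toZMod ((𝒢 ^ s * y).coeff r) = -((-1) ^ s * r⁻¹ ^ s * (s.factorial * c))) (n : ℕ) :
    (-1) ^ s * π (ω r) ^ s * π ((𝒢 ^ s * (1 + (p : ℤ_[p]) • y) ^ n).coeff r) =
      -s.factorial * (1 + ε (s * harmonicMod p s - s + n * c)) := by
  have hsign (R : Type) [CommRing R] : (-1 : R) ^ s * (-1) ^ s = 1 := by
    rw [← mul_pow, neg_one_mul, neg_neg, one_pow]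
  have hinv : π (ω r) ^ s * π ((θ ^ s) r) = 1 := by
    rw [← map_pow π, ← map_mul π, ← MulChar.pow_apply' _ (by omega), ← MulChar.mul_apply,
      ← mul_pow, mul_inv_cancel, one_pow, MulChar.one_apply hr.isUnit, map_one]
  have hinv' : r ^ s * r⁻¹ ^ s = 1 := by rw [← mul_pow, mul_inv_cancel₀ hr, one_pow]
  have hlead : (-1) ^ s * π (ω r) ^ s * π ((𝒢 ^ s).coeff r) =
      -s.factorial * (1 + ε (s * harmonicMod p s - s)) := by
    rw [coeff_groupGaussSum_pow hs (by rw [orderOf_inv_teichmullerChar]; omega) hr, map_mul,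
      toZModPow_jacobiProd hp hs hsp, pow_succ (-1 : ZMod (p ^ 2)) s]
    linear_combination (-s.factorial * (1 + ε (s * harmonicMod p s - s))) *
      (hsign (ZMod (p ^ 2)) + (-1) ^ s * (-1) ^ s * hinv)
  have hcorr : (-1) ^ s * r ^ s * (n * -((-1) ^ s * r⁻¹ ^ s * (s.factorial * c))) =
      -(s.factorial * (n * c)) := by
    linear_combination (-(s.factorial * (n * c))) *
      (hsign (ZMod p) + (-1) ^ s * (-1) ^ s * hinv')
  rw [toZModPow_coeff_mul_one_add_prime_smul_pow, hy, mul_add, hlead, mul_primeMul, map_mul ρ,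
    map_pow ρ, map_pow ρ, map_neg ρ, map_one ρ, modSqToMod_toZModPow, toZMod_teichmullerChar, hcorr,
    map_add ε, mul_add, mul_add, mul_add, mul_primeMul, mul_primeMul, map_neg ρ, map_natCast,
    neg_mul (s.factorial : ZMod p) (n * c), add_assoc]

lemma reducesTo_neg_pow_mul_Fp (hp : 2 < p) {r : ℤ} (hr : (r : ZMod p) ≠ 0) {n s m : ℕ}
    (hn : n = s + m * (p - 1)) (hs : 1 ≤ s) (hsp : s < p) :
    ReducesTo π ((-(r : ℚ)) ^ n * Fp p (p * n) r)
      (-s.factorial * (1 + ε (n * (bernoulliSum s (r : ZMod p) - fermatQuot p r) +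
        s * (harmonicMod p s - wilsonQuot p)))) := by
  obtain ⟨d, hpow, hd⟩ := exists_one_sub_single_pow_prime_eq hp
  set y := ∑ i ∈ range (p - 2), d i • 𝒢 ^ i
  have hF : ReducesTo π (Fp p (p * n) r) _ := ⟨_, (Fp_prime_mul_eq_coeff hp hpow hn hs hsp r).symm,
    (map_mul π _ _).trans (congrArg (· * _) (map_pow π _ _))⟩
  have hcoeff := toZModPow_teichmullerChar_pow_mul_coeff hp hs hsp hr
    (toZMod_coeff_groupGaussSum_pow_mul_sum hp hd hs hsp hr) n
  have hnm : (n + m : ZMod p) = s := by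
    rw [hn, Nat.cast_add, Nat.cast_mul, Nat.cast_sub (by omega)]
    simp
  have hsum : n * (bernoulliSum s (r : ZMod p) - fermatQuot p r) +
      s * (harmonicMod p s - wilsonQuot p) = s * harmonicMod p s - s +
        n * (1 - wilsonQuot p + bernoulliSum s (r : ZMod p)) + -(n * fermatQuot p r) +
        m * (1 - wilsonQuot p) := by
    linear_combination (wilsonQuot p - 1) * hnm
  have h := ((ReducesTo.intCast (f := π) (-r)).pow n).mul hF
  rw [Int.cast_neg, Int.cast_neg, neg_intCast_pow_eq_toZModPow hp hr hn,
    toZModPow_jacobiProd_prime_sub_two hp, one_add_primeMul_pow] at h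
  convert h using 1
  rw [hsum, ← one_add_primeMul_mul_one_add_primeMul, ← one_add_primeMul_mul_one_add_primeMul]
  linear_combination (-(1 + ε (-(n * fermatQuot p r))) * (1 + ε (m * (1 - wilsonQuot p)))) * hcoeff

lemma reducesTo_neg_pow_mul_Fp_add_factorial_div (hp : 2 < p) {r : ℤ} (hr : (r : ZMod p) ≠ 0)
    {n s m : ℕ} (hn : n = s + m * (p - 1)) (hs : 1 ≤ s) (hsp : s < p) :
    ReducesTo π (((-(r : ℚ)) ^ n * Fp p (p * n) r + s.factorial) / (s.factorial * s))
      (ε (n / s * (fermatQuot p r - bernoulliSum s (r : ZMod p)) +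
        (wilsonQuot p - harmonicMod p s))) := by
  have hs0 : (s : ZMod p) ≠ 0 := natCast_ne_zero_of_lt hs hsp
  have hfact : (s.factorial : ZMod p) ≠ 0 := factorial_ne_zero_of_lt hsp
  have h := (reducesTo_neg_pow_mul_Fp hp hr hn hs hsp).add (.natCast s.factorial)
  rw [neg_mul, mul_one_add, neg_add, add_right_comm, neg_add_cancel, zero_add, mul_primeMul,
    map_natCast, ← map_neg] at h
  convert h.primeMul_div ((ReducesTo.natCast s.factorial).mul (.natCast s))
    (mul_ne_zero hfact hs0) using 2
  field_simp
  ring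

lemma reducesTo_fermatQuot {r : ℤ} (hr : (r : ZMod p) ≠ 0) :
    ReducesTo toZMod (((r : ℚ) ^ (p - 1) - 1) / p) (fermatQuot p r) := by
  rw [ReducesTo.div_prime_iff, ← add_sub_cancel_left 1 (ε (fermatQuot p r)),
    ← intCast_pow_prime_sub_one hr]
  simpa using ((ReducesTo.intCast r).pow (p - 1)).sub (.intCast 1)

lemma reducesTo_harm {s : ℕ} (hsp : s < p) : ReducesTo toZMod (harm s) (harmonicMod p s) := by
  have hIcc : harmonicMod p s = ∑ k ∈ Icc 1 s, 1 / (k : ZMod p) := by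
    simp only [harmonicMod, one_div, Ico_add_one_right_eq_Icc]
  rw [hIcc]
  refine .sum fun k hk ↦ ?_
  rw [mem_Icc] at hk
  exact .div (by simpa using ReducesTo.natCast (f := toZMod (p := p)) 1) (.natCast k)
    (natCast_ne_zero_of_lt hk.1 (by omega))

lemma reducesTo_bernoulliSum (hp : 2 < p) {s : ℕ} (hs : 1 ≤ s) {r : ℤ} (hr : (r : ZMod p) ≠ 0) :
    ReducesTo toZMod
      (∑ k ∈ Icc 2 (p - s - 1), ((s + k).choose s : ℚ) * bernoulli k / (k * (r : ℚ) ^ k))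
      (bernoulliSum s (r : ZMod p)) := by
  refine .sum fun k hk ↦ ?_
  rw [mem_Icc] at hk
  exact ((ReducesTo.natCast (f := toZMod (p := p)) _).mul (reducesTo_bernoulli hp (by omega))).div
    ((ReducesTo.natCast k).mul ((ReducesTo.intCast r).pow k))
    (mul_ne_zero (natCast_ne_zero_of_lt (by omega) (by omega)) (pow_ne_zero _ hr))

end OddPrime

theorem stmt11_general (p n : ℕ) (r : ℤ) (hp : p.Prime) (hodd : Odd p) (hn : 0 < n)
    (hpr : ¬ (p:ℤ) ∣ r) :
    modCong p 2
      ((((-(r:ℚ))^n * Fp p (p*n) r + ((nLow p n).factorial : ℚ))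
          / (((nLow p n).factorial : ℚ) * (nLow p n : ℚ)))
        + (p:ℚ) * harm (nLow p n) - (p:ℚ) * bernoulli (p-1) + (p:ℚ) - 1)
      (((p:ℚ) * (n:ℚ) / (nLow p n : ℚ)) *
        (((r:ℚ)^(p-1) - 1) / (p:ℚ)
          - ∑ k ∈ Finset.Icc 2 (p - nLow p n - 1),
              (((nLow p n + k).choose (nLow p n) : ℕ) : ℚ) * bernoulli k / ((k:ℚ) * (r:ℚ)^k))) := by
  have : Fact p.Prime := ⟨hp⟩
  have hp2 : 2 < p := hp.two_le.lt_of_ne (by rintro rfl; exact absurd hodd (by decide))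
  have hr : (r : ZMod p) ≠ 0 := by rwa [Ne, ZMod.intCast_zmod_eq_zero_iff_dvd]
  have hs := one_le_nLow hp.one_lt hn
  have hsp := nLow_lt hp.one_lt hn
  obtain ⟨m, hm⟩ := exists_eq_nLow_add_mul hp.one_lt hn
  have hleft := (((((reducesTo_neg_pow_mul_Fp_add_factorial_div hp2 hr hm hs hsp).add
    (ReducesTo.prime_mul_iff.mpr (reducesTo_harm hsp))).sub
    (reducesTo_prime_mul_bernoulli_prime_sub_one hp2)).add (.natCast p)).sub (.natCast 1))
  have hright := ReducesTo.prime_mul_iff.mpr (((ReducesTo.natCast n).div (.natCast (nLow p n))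
    (natCast_ne_zero_of_lt hs hsp)).mul
    ((reducesTo_fermatQuot hr).sub (reducesTo_bernoulliSum hp2 hs hr)))
  rw [← mul_assoc, ← mul_div_assoc] at hright
  rw [Nat.cast_one] at hleft
  refine modCong_two_of_reducesTo hleft ?_
  convert hright using 1
  rw [map_add, map_sub]
  push_cast
  ring

theorem stmt11 (p n : ℕ) (r : ℤ) (hp : p.Prime) (hodd : Odd p) (hn : 0 < n)
    (h1 : ¬ (p - 1) ∣ n) (h2 : ¬ (p:ℤ) ∣ r) :
    modCong p 2
      ((((-(r:ℚ))^n * Fp p (p*n) r + ((nLow p n).factorial : ℚ))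
          / (((nLow p n).factorial : ℚ) * (nLow p n : ℚ)))
        + (p:ℚ) * harm (nLow p n) - (p:ℚ) * bernoulli (p-1) + (p:ℚ) - 1)
      (((p:ℚ) * (n:ℚ) / (nLow p n : ℚ)) *
        (((r:ℚ)^(p-1) - 1) / (p:ℚ)
          - ∑ k ∈ Finset.Icc 2 (p - nLow p n - 1),
              (((nLow p n + k).choose (nLow p n) : ℕ) : ℚ) * bernoulli k / ((k:ℚ) * (r:ℚ)^k))) :=
  stmt11_general p n r hp hodd hn h2
end

section
/- Let p be a prime, and let a ≥ 1, l ≥ 0, m ≥ 0, n ≥ 0 be integers with m < p and 2 ≤ n−l−m ≤ p. Let d be a positive integer with d = 1 if a ≤ 2, and 1 ≤ d ≤ p^{a−2} if a ≥ 2. Then (1/p^{n−l})·Σ_{k=l+1}^{n} binom(p^a·n − p^{a−1}·m − d, p^a·k − p^{a−1}·m − d)·(−1)^{pk}·binom(k−1, l) ≡ (−1)^{l−1}·(n!/l!)/(∏_{k=0}^{m} (n−l−k)) · B^{(m+1)}_{p−n+l+m} (mod p). -/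
open Finset

/-- The `m`-th order Bernoulli number
`B_k^{(m)} = k! ∑_{i₁+⋯+i_m = k} ∏_j B_{i_j}/i_j!`. -/
noncomputable def bernHigher (m k : ℕ) : ℚ :=
  (k.factorial : ℚ) *
    ∑ i ∈ Finset.Nat.antidiagonalTuple m k, ∏ j, bernoulli (i j) / (i j).factorial

/-! Put `q = p ^ a` and `e = p ^ (a - 1) * m + d`, and let `T` be the Cartier operator, which keeps
the coefficients of index `q (i + 1) - 1` of a polynomial, taken in the coordinate `1 - X`. Up to
sign the sum is the coefficient of `X ^ l` in `T ((1 - X) ^ (e - 1) * X ^ (q n - e))`.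

Write `X ^ q = 1 - (1 - X) ^ q + p H`. Since `T` turns multiplication by `1 - (1 - X) ^ q` into
multiplication by `X`, the coefficients of `T (f * X ^ (q i))` obey a recursion of Pascal type in
which every factor `H` costs a factor `p`. This gives the divisibility by `p ^ (n - l)`, and modulo
`p` the quotient is the product of `binom(n, l)` and a coefficient of the image under `T` of a
polynomial. Modulo `p` the coordinates `X` and `1 - X` yield the same operator and `H` is `X K`
evaluated at `X ^ (p ^ (a - 1))`, where `(1 - X) ^ p = 1 - X ^ p + p X K`; hence that coefficient
is, up to sign, the coefficient of `X ^ (p + m)` in `(1 - X) ^ m * (X K) ^ (n - l)`.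

Finally `X K` agrees with `log (1 - X)` modulo `p` in degrees below `p`. The substitution
`X = exp Z - 1` under the residue turns the coefficient of `X ^ (p + m)` in
`(1 + X) ^ m * log (1 + X) ^ (n - l)` into a coefficient of
`exp ((m + 1) Z) * (Z / (exp Z - 1)) ^ (p + m + 1)`. The `p`-th power of `Z / (exp Z - 1)` is `1`
modulo `p` in the relevant degrees, which leaves a Bernoulli number of order `m + 1`, and Wilson's
theorem converts the factorials.
-/

namespace FleckQuotient

section Cartier

open Polynomial

variable {R : Type*} [CommRing R] {q : ℕ} [NeZero q]

variable (q) in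
/-- The Cartier operator `∑ c_j X ^ j ↦ ∑ c_{q (i + 1) - 1} X ^ i`, i.e. the operator which sends
the differential `X ^ (q i) dX / X` to `X ^ i dX / X` and the other monomials to zero. -/
noncomputable def cartier : R[X] →ₗ[R] R[X] where
  toFun f := divX (contract q (X * f))
  map_add' f g := by rw [mul_add, contract_add (NeZero.ne q), divX_add]
  map_smul' c f := by
    ext i
    simp [coeff_divX, coeff_contract (NeZero.ne q)]

theorem coeff_cartier (f : R[X]) (i : ℕ) :
    (cartier q f).coeff i = f.coeff (q * (i + 1) - 1) := by
  have hq := NeZero.pos q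
  obtain ⟨j, hj⟩ : ∃ j, (i + 1) * q = j + 1 := Nat.exists_eq_succ_of_ne_zero (by positivity)
  change (divX (contract q (X * f))).coeff i = _
  rw [coeff_divX, coeff_contract hq.ne', hj, coeff_X_mul, mul_comm q, hj, Nat.add_sub_cancel]

theorem X_mul_cartier (f : R[X]) : X * cartier q f = contract q (X * f) := by
  have h := X_mul_divX_add (contract q (X * f))
  rwa [coeff_contract (NeZero.ne q), zero_mul, coeff_X_mul_zero, C_0, add_zero] at h

theorem cartier_mul_expand (f g : R[X]) : cartier q (f * expand R q g) = cartier q f * g := by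
  refine isRegular_X.left ?_
  change X * cartier q (f * expand R q g) = X * (cartier q f * g)
  rw [X_mul_cartier, ← mul_assoc, ← mul_assoc, X_mul_cartier, contract_mul_expand (NeZero.ne q)]

theorem cartier_map {S : Type*} [CommRing S] (φ : R →+* S) (f : R[X]) :
    cartier q (f.map φ) = (cartier q f).map φ := by
  ext i
  simp only [coeff_cartier, coeff_map]

theorem cartier_of_natDegree_lt {f : R[X]} (hf : f.natDegree < q) :
    cartier q f = C (f.coeff (q - 1)) := by
  ext i
  rw [coeff_cartier, coeff_C]
  split_ifs with hi
  · rw [hi, zero_add, mul_one]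
  · refine coeff_eq_zero_of_natDegree_lt (hf.trans_le ?_)
    obtain ⟨j, rfl⟩ := Nat.exists_eq_succ_of_ne_zero hi
    rw [mul_add, mul_one, Nat.le_sub_iff_add_le (by nlinarith)]
    nlinarith [NeZero.pos q]

omit [NeZero q] in
theorem coeff_mul_expand_of_natDegree_le {f : R[X]} {s : ℕ} (hf : f.natDegree ≤ s) (hs : s < q)
    (g : R[X]) (i : ℕ) : (f * expand R q g).coeff (q * i + s) = f.coeff s * g.coeff i := by
  have hdeg : (f * X ^ (q - 1 - s)).natDegree < q := by
    refine (natDegree_mul_le_of_le hf (natDegree_X_pow_le _)).trans_lt ?_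
    omega
  have : NeZero q := ⟨by omega⟩
  have h := cartier_mul_expand (q := q) (f * X ^ (q - 1 - s)) g
  rw [cartier_of_natDegree_lt hdeg] at h
  have hi := congrArg (coeff · i) h
  simp only [coeff_cartier, coeff_C_mul] at hi
  rw [mul_right_comm, show q * (i + 1) - 1 = q * i + s + (q - 1 - s) by rw [mul_add]; omega,
    coeff_mul_X_pow] at hi
  rw [hi]
  congr 1
  rw [show q - 1 = s + (q - 1 - s) by omega, Nat.add_sub_cancel_left, coeff_mul_X_pow]

variable (q) in
/-- The Cartier operator in the coordinate `1 - X`. It sends `(1 - X) ^ (e - 1) * X ^ (q n - e)` to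
a polynomial whose coefficients are the Fleck sums up to sign. -/
noncomputable def cartierOneSub : R[X] →ₗ[R] R[X] :=
  (aeval (1 - X)).toLinearMap ∘ₗ cartier q ∘ₗ (aeval (1 - X)).toLinearMap

theorem cartierOneSub_apply (f : R[X]) :
    cartierOneSub q f = (cartier q (f.comp (1 - X))).comp (1 - X) := by
  simp [cartierOneSub, comp_eq_aeval]

theorem cartierOneSub_mul_one_sub (f : R[X]) :
    cartierOneSub q (f * (1 - (1 - X) ^ q)) = cartierOneSub q f * X := by
  have h : (1 - (1 - X) ^ q : R[X]).comp (1 - X) = expand R q (1 - X) := by simp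
  rw [cartierOneSub_apply, mul_comp, h, cartier_mul_expand, mul_comp, cartierOneSub_apply]
  simp

theorem cartierOneSub_map {S : Type*} [CommRing S] (φ : R →+* S) (f : R[X]) :
    cartierOneSub q (f.map φ) = (cartierOneSub q f).map φ := by
  have h : (1 - X : S[X]) = (1 - X : R[X]).map φ := by simp
  rw [cartierOneSub_apply, cartierOneSub_apply, h, ← Polynomial.map_comp, cartier_map,
    Polynomial.map_comp]

theorem coeff_one_sub_X_pow (t k : ℕ) :
    ((1 - X : R[X]) ^ t).coeff k = (-1) ^ k * (t.choose k : R) := by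
  have h : (1 - X : R[X]) ^ t = ((1 + X) ^ t).comp (C (-1) * X) := by simp [sub_eq_add_neg]
  rw [h, comp_C_mul_X_coeff, coeff_one_add_X_pow, mul_comm]

theorem coeff_comp_one_sub_X (f : R[X]) {N : ℕ} (hN : f.natDegree < N) (l : ℕ) :
    (f.comp (1 - X)).coeff l = (-1) ^ l * ∑ k ∈ range N, f.coeff k * (k.choose l : R) := by
  rw [comp, eval₂_eq_sum_range' C hN, finsetSum_coeff, mul_sum]
  refine sum_congr rfl fun k _ => ?_
  rw [coeff_C_mul, coeff_one_sub_X_pow]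
  ring

theorem natDegree_one_sub_X_pow_le (t : ℕ) : ((1 - X : R[X]) ^ t).natDegree ≤ t := by
  compute_degree

/- Both operators turn multiplication by `X ^ q = 1 - (1 - X) ^ q` into multiplication by `X`, so it
suffices to compare them on `X ^ s` with `s < q`. -/
theorem cartierOneSub_eq_cartier {p a : ℕ} [Fact p.Prime] [CharP R p] :
    (cartierOneSub (p ^ a) : R[X] →ₗ[R] R[X]) = cartier (p ^ a) := by
  set q := p ^ a with hq
  have hqX : (1 - (1 - X) ^ q : R[X]) = X ^ q := by
    rw [hq, sub_pow_char_pow, one_pow, sub_sub_cancel]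
  have hsmall (s : ℕ) (hs : s < q) : cartierOneSub q (X ^ s : R[X]) = cartier q (X ^ s) := by
    have hdeg := (natDegree_one_sub_X_pow_le (R := R) s).trans_lt hs
    rw [cartierOneSub_apply, X_pow_comp, cartier_of_natDegree_lt hdeg,
      cartier_of_natDegree_lt ((natDegree_X_pow_le s).trans_lt hs), C_comp, coeff_one_sub_X_pow,
      coeff_X_pow]
    split_ifs with h
    · have hsign : (-1 : R) ^ (q - 1) * (-1) ^ 1 = -1 := by
        rw [← pow_add, Nat.sub_add_cancel NeZero.one_le, hq, neg_one_pow_char_pow]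
      rw [h, Nat.choose_self, Nat.cast_one, mul_one, ← h]
      congr 1
      linear_combination -hsign
    · rw [Nat.choose_eq_zero_of_lt (by omega), Nat.cast_zero, mul_zero]
  have hstep (f : R[X]) (i : ℕ) :
      cartierOneSub q (f * X ^ (q * i)) = cartierOneSub q f * X ^ i := by
    induction i with
    | zero => simp
    | succ i ih =>
      rw [mul_add_one, pow_add, ← mul_assoc, ← hqX, cartierOneSub_mul_one_sub, ih, pow_succ,
        mul_assoc]
  ext n : 2
  simp only [LinearMap.comp_apply, monomial_one_right_eq_X_pow]
  rw [← Nat.mod_add_div n q, pow_add, hstep, hsmall _ (Nat.mod_lt _ (NeZero.pos q)),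
    pow_mul, ← expand_X q, ← map_pow, cartier_mul_expand]

end Cartier

section PascalRecursion

open Polynomial

variable {R : Type*} [CommRing R] {q : ℕ} [NeZero q] {π : R} {H : R[X]}

theorem cartierOneSub_mul_X_pow (hH : X ^ q = 1 - (1 - X) ^ q + C π * H) (f : R[X]) :
    cartierOneSub q (f * X ^ q) = cartierOneSub q f * X + C π * cartierOneSub q (f * H) := by
  rw [hH, mul_add, map_add, cartierOneSub_mul_one_sub, mul_left_comm, C_mul', C_mul', map_smul]

theorem coeff_zero_cartierOneSub_mul_X_pow (hH : X ^ q = 1 - (1 - X) ^ q + C π * H) (f : R[X]) :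
    (cartierOneSub q (f * X ^ q)).coeff 0 = π * (cartierOneSub q (f * H)).coeff 0 := by
  rw [cartierOneSub_mul_X_pow hH, coeff_add, coeff_mul_X_zero, zero_add, coeff_C_mul]

theorem coeff_succ_cartierOneSub_mul_X_pow (hH : X ^ q = 1 - (1 - X) ^ q + C π * H) (f : R[X])
    (l : ℕ) : (cartierOneSub q (f * X ^ q)).coeff (l + 1) =
      (cartierOneSub q f).coeff l + π * (cartierOneSub q (f * H)).coeff (l + 1) := by
  rw [cartierOneSub_mul_X_pow hH, coeff_add, coeff_mul_X, coeff_C_mul]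

theorem dvd_coeff_cartierOneSub_sub {f g : R[X]} {c : R} (h : C c ∣ f - g) (l : ℕ) :
    c ∣ (cartierOneSub q f).coeff l - (cartierOneSub q g).coeff l := by
  obtain ⟨k, hk⟩ := h
  rw [← coeff_sub, ← map_sub, hk, C_mul', map_smul, coeff_smul]
  exact dvd_mul_right _ _

/- With `u s l = coeff l (T (f * H ^ (r - s) * X ^ (q * (l + s))))`, the projection formula reads
`u (s + 1) l = u (s + 1) (l - 1) + π * u s l`, which is Pascal's rule up to the powers of `π`. -/
theorem pow_mul_dvd_coeff_cartierOneSub_sub (hH : X ^ q = 1 - (1 - X) ^ q + C π * H) {c : ℕ}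
    {x y : R} (r : ℕ) (f : R[X])
    (hbase : ∀ l, y ∣ (cartierOneSub q (f * H ^ r * (X ^ q) ^ l)).coeff l - (l + c).choose l * x)
    (l : ℕ) :
    π ^ r * y ∣ (cartierOneSub q (f * (X ^ q) ^ (l + r))).coeff l -
      π ^ r * ((l + c + r).choose l * x) := by
  induction r generalizing f l with
  | zero => simpa using hbase l
  | succ r ihr =>
    have hf (l : ℕ) : π ^ (r + 1) * y ∣ π * (cartierOneSub q (f * H * (X ^ q) ^ (l + r))).coeff l -
        π ^ (r + 1) * ((l + c + r).choose l * x) := by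
      rw [pow_succ', mul_assoc π, mul_assoc π, ← mul_sub]
      refine mul_dvd_mul_left π (ihr (f * H) (fun l => ?_) l)
      rw [mul_assoc f, ← pow_succ']
      exact hbase l
    induction l with
    | zero =>
      rw [zero_add, pow_succ (X ^ q), ← mul_assoc,
        coeff_zero_cartierOneSub_mul_X_pow hH, mul_right_comm]
      simpa using hf 0
    | succ l ihl =>
      have hpascal : (l + 1 + c + (r + 1)).choose (l + 1) =
          (l + c + (r + 1)).choose l + (l + 1 + c + r).choose (l + 1) := by
        rw [show l + 1 + c + (r + 1) = l + c + (r + 1) + 1 by ring, Nat.choose_succ_succ,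
          show l + c + (r + 1) = l + 1 + c + r by ring]
      rw [← add_assoc, pow_succ (X ^ q), ← mul_assoc, coeff_succ_cartierOneSub_mul_X_pow hH,
        add_right_comm l 1 r, hpascal, mul_right_comm f]
      convert dvd_add ihl (hf (l + 1)) using 1
      rw [← add_assoc l r 1, add_right_comm l 1 r]
      push_cast
      ring

theorem dvd_coeff_cartierOneSub_mul_X_pow_sub (hH : X ^ q = 1 - (1 - X) ^ q + C π * H) (f : R[X])
    (l : ℕ) : π ∣ (cartierOneSub q (f * (X ^ q) ^ l)).coeff l - (cartierOneSub q f).coeff 0 := by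
  induction l with
  | zero => simp
  | succ l ih =>
    rw [pow_succ, ← mul_assoc, coeff_succ_cartierOneSub_mul_X_pow hH, add_sub_right_comm]
    exact dvd_add ih (dvd_mul_right _ _)

theorem pow_dvd_coeff_cartierOneSub_sub (hH : X ^ q = 1 - (1 - X) ^ q + C π * H) {f A : R[X]}
    {r : ℕ} (hA : C π ^ 2 ∣ f * H ^ r - A * X ^ q) (l : ℕ) :
    π ^ (r + 2) ∣ (cartierOneSub q (f * (X ^ q) ^ (l + r))).coeff l -
      π ^ (r + 1) * ((l + r + 1).choose l * (cartierOneSub q (A * H)).coeff 0) := by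
  set κ := (cartierOneSub q (A * H)).coeff 0
  have hAX (l : ℕ) : π ^ 2 ∣ (cartierOneSub q (A * (X ^ q) ^ (l + 1))).coeff l -
      (l + 1).choose l * (π * κ) := by
    have h := pow_mul_dvd_coeff_cartierOneSub_sub hH (c := 0) (x := κ) (y := π) 1 A
      (fun l => by simpa using dvd_coeff_cartierOneSub_mul_X_pow_sub hH (A * H) l) l
    rwa [pow_one, ← sq, add_zero, mul_left_comm] at h
  have hbase (l : ℕ) : π ^ 2 ∣ (cartierOneSub q (f * H ^ r * (X ^ q) ^ l)).coeff l -
      (l + 1).choose l * (π * κ) := by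
    have hdvd : C (π ^ 2) ∣ f * H ^ r * (X ^ q) ^ l - A * (X ^ q) ^ (l + 1) := by
      rw [C_pow, pow_succ' (X ^ q), ← mul_assoc, ← sub_mul]
      exact hA.mul_right _
    have h := dvd_add (dvd_coeff_cartierOneSub_sub (q := q) hdvd l) (hAX l)
    rwa [sub_add_sub_cancel] at h
  have h := pow_mul_dvd_coeff_cartierOneSub_sub hH r f hbase l
  rw [← pow_add] at h
  convert h using 2
  rw [add_right_comm l r 1]
  ring

end PascalRecursion

section SumFormula

open Polynomial

variable {R : Type*} [CommRing R] {q e n : ℕ} [NeZero q]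

theorem coeff_cartier_X_pow_mul_one_sub_X_pow (he : 1 ≤ e) (heq : e ≤ q) (N k : ℕ) :
    (cartier q (X ^ (e - 1) * (1 - X : R[X]) ^ N)).coeff k =
      (-1) ^ e * ((N.choose (q * (k + 1) - e) : R) * (-1) ^ (q * (k + 1))) := by
  have hk : e ≤ q * (k + 1) := heq.trans (Nat.le_mul_of_pos_right _ k.succ_pos)
  have hsign : (-1 : R) ^ (q * (k + 1) - e) = (-1) ^ e * (-1) ^ (q * (k + 1)) := by
    conv_rhs => rw [← Nat.sub_add_cancel hk, pow_add]
    rw [mul_left_comm, ← mul_pow, neg_one_mul, neg_neg, one_pow, mul_one]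
  rw [coeff_cartier, show q * (k + 1) - 1 = q * (k + 1) - e + (e - 1) by omega, coeff_X_pow_mul,
    coeff_one_sub_X_pow, hsign]
  ring

theorem natDegree_cartier_X_pow_mul_one_sub_X_pow_lt (he : 1 ≤ e) (heq : e ≤ q) (hn : 1 ≤ n) :
    (cartier q (X ^ (e - 1) * (1 - X : R[X]) ^ (q * n - e))).natDegree < n := by
  refine (natDegree_le_iff_coeff_eq_zero.2 fun k hk => ?_).trans_lt (Nat.sub_one_lt_of_lt hn)
  have hqk : q * n < q * (k + 1) := Nat.mul_lt_mul_of_pos_left (by omega) (NeZero.pos q)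
  have hqn : q ≤ q * n := Nat.le_mul_of_pos_right _ hn
  rw [coeff_cartier_X_pow_mul_one_sub_X_pow he heq, Nat.choose_eq_zero_of_lt (by omega),
    Nat.cast_zero, zero_mul, mul_zero]

theorem sum_range_mul_choose_eq_sum_Icc (g : ℕ → R) (l n : ℕ) :
    ∑ k ∈ range n, g (k + 1) * (k.choose l : R) =
      ∑ k ∈ Icc (l + 1) n, g k * ((k - 1).choose l : R) := by
  have hshift := sum_Ico_add' (fun k => g k * ((k - 1).choose l : R)) 0 n 1
  simp only [Nat.add_sub_cancel, ← range_eq_Ico] at hshift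
  rw [hshift]
  refine (sum_subset (fun k hk => ?_) fun k hk hkl => ?_).symm
  · simp only [mem_Icc, mem_Ico] at hk ⊢
    omega
  · simp only [mem_Icc, mem_Ico] at hk hkl
    rw [Nat.choose_eq_zero_of_lt (by omega), Nat.cast_zero, mul_zero]

theorem coeff_cartierOneSub_one_sub_X_pow_mul_X_pow (he : 1 ≤ e) (heq : e ≤ q) (hn : 1 ≤ n)
    (l : ℕ) :
    (cartierOneSub q ((1 - X : R[X]) ^ (e - 1) * X ^ (q * n - e))).coeff l =
      (-1) ^ (l + e) * ∑ k ∈ Icc (l + 1) n,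
        ((q * n - e).choose (q * k - e) : R) * (-1) ^ (q * k) * ((k - 1).choose l : R) := by
  rw [cartierOneSub_apply, mul_comp, pow_comp, X_pow_comp, sub_comp, one_comp, X_comp,
    sub_sub_cancel,
    coeff_comp_one_sub_X _ (natDegree_cartier_X_pow_mul_one_sub_X_pow_lt he heq hn)]
  simp only [coeff_cartier_X_pow_mul_one_sub_X_pow he heq, mul_assoc ((-1 : R) ^ e)]
  rw [← mul_sum, ← mul_assoc, ← pow_add, ← sum_range_mul_choose_eq_sum_Icc]

end SumFormula

section Quotient

open Polynomial

variable {p : ℕ}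

theorem natCast_dvd_iff_map_eq_zero {f : ℤ[X]} :
    (p : ℤ[X]) ∣ f ↔ f.map (Int.castRingHom (ZMod p)) = 0 := by
  rw [← C_eq_natCast, C_dvd_iff_dvd_coeff, Polynomial.ext_iff]
  refine forall_congr' fun i => ?_
  rw [coeff_map, coeff_zero, eq_intCast, ZMod.intCast_zmod_eq_zero_iff_dvd]

theorem natCast_dvd_one_sub_X_pow_sub [Fact p.Prime] (b : ℕ) :
    (p : ℤ[X]) ∣ (1 - X) ^ p ^ b - (1 - X ^ p ^ b) := by
  rw [natCast_dvd_iff_map_eq_zero]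
  simp [sub_pow_char_pow]

variable (p) in
theorem exists_one_sub_X_pow_prime_eq [Fact p.Prime] :
    ∃ K : ℤ[X], (1 - X) ^ p = 1 - X ^ p + (p : ℤ[X]) * (X * K) := by
  have hp : p.Prime := Fact.out
  obtain ⟨F, hF⟩ := natCast_dvd_one_sub_X_pow_sub (p := p) 1
  rw [pow_one] at hF
  have hX : X ∣ F := by
    rw [X_dvd_iff]
    have := congrArg (coeff · 0) hF
    simpa [coeff_zero_eq_eval_zero, hp.ne_zero] using this
  obtain ⟨K, rfl⟩ := hX
  exact ⟨K, by linear_combination hF⟩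

theorem exists_one_sub_X_pow_prime_sq_eq {K : ℤ[X]}
    (hK : (1 - X) ^ p = 1 - X ^ p + (p : ℤ[X]) * (X * K)) :
    ∃ J : ℤ[X], (1 - X) ^ p ^ 2 =
      1 - X ^ p ^ 2 + (p : ℤ[X]) * expand ℤ p (X * K) + (p : ℤ[X]) ^ 2 * (X * J) := by
  obtain ⟨k, hk⟩ := powAddExpansion (1 - X ^ p : ℤ[X]) ((p : ℤ[X]) * (X * K)) p
  have hexp := congrArg (expand ℤ p) hK
  simp only [map_pow, map_sub, map_one, expand_X, map_add, map_mul, map_natCast] at hexp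
  refine ⟨K * (1 - X ^ p) ^ (p - 1) + k * X * K ^ 2, ?_⟩
  rw [pow_two p, pow_mul, hK, hk, hexp, map_mul, expand_X]
  ring

/- The factor `X ^ d` of the term of order `p` is what makes `X ^ (p ^ (a - 1) * m + d)` divide the
powers of the bracket modulo `p ^ 2`; for `2 ≤ a` it is available because `d ≤ p ^ (a - 2)`. -/
theorem exists_X_pow_eq_one_sub_add [Fact p.Prime] {K : ℤ[X]}
    (hK : (1 - X) ^ p = 1 - X ^ p + (p : ℤ[X]) * (X * K)) {a d : ℕ} (ha : 1 ≤ a)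
    (hd : d ≤ p ^ (a - 2)) :
    ∃ ε η : ℤ[X], X ^ p ^ a = 1 - (1 - X) ^ p ^ a + (p : ℤ[X]) *
      (expand ℤ (p ^ (a - 1)) (X * K) + (p : ℤ[X]) * (X ^ d * ε) + (p : ℤ[X]) ^ 2 * η) := by
  obtain rfl | ha : a = 1 ∨ 2 ≤ a := by omega
  · refine ⟨0, 0, ?_⟩
    simp only [pow_one, hK, tsub_self, pow_zero, expand_one]
    ring
  obtain ⟨b, rfl⟩ := Nat.exists_eq_add_of_le' ha
  rw [Nat.add_sub_cancel] at hd
  obtain ⟨J, hJ⟩ := exists_one_sub_X_pow_prime_sq_eq hK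
  have hexp := congrArg (expand ℤ (p ^ b)) hJ
  simp only [map_pow, map_sub, map_one, expand_X, map_add, map_mul, map_natCast, expand_expand,
    ← pow_mul, ← pow_add, ← pow_succ] at hexp
  obtain ⟨η, hη⟩ := dvd_sub_pow_of_dvd_sub (natCast_dvd_one_sub_X_pow_sub (p := p) b) 2
  rw [← pow_mul, ← pow_add, hexp] at hη
  have hX : (X : ℤ[X]) ^ d * X ^ (p ^ b - d) = X ^ p ^ b := by
    rw [← pow_add, Nat.add_sub_cancel' hd]
  refine ⟨X ^ (p ^ b - d) * expand ℤ (p ^ b) J, η, ?_⟩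
  rw [show b + 2 - 1 = b + 1 by omega]
  simp only [map_mul, expand_X]
  linear_combination (-(p : ℤ[X]) ^ 2 * expand ℤ (p ^ b) J) * hX + hη

theorem exists_sq_dvd_pow_sub_pow_mul {R : Type*} [CommRing R] {x π g ε η : R} {P d e j : ℕ}
    (hg : x ^ P ∣ g) (he : e ≤ P * (j + 1)) (hed : e ≤ P * j + d) :
    ∃ A, π ^ 2 ∣ (g + π * (x ^ d * ε) + π ^ 2 * η) ^ (j + 1) - x ^ e * A := by
  obtain ⟨k, hk⟩ := Polynomial.powAddExpansion g (π * (x ^ d * ε)) (j + 1)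
  have hpow (i : ℕ) : x ^ (P * i) ∣ g ^ i := by
    rw [pow_mul]
    exact pow_dvd_pow_of_dvd hg i
  have hlead : x ^ e ∣ g ^ (j + 1) := (pow_dvd_pow x he).trans (hpow (j + 1))
  have hnext : x ^ e ∣ g ^ j * x ^ d := by
    refine (pow_dvd_pow x hed).trans ?_
    rw [pow_add]
    exact mul_dvd_mul_right (hpow j) _
  obtain ⟨A, hA⟩ := hlead
  obtain ⟨B, hB⟩ := hnext
  obtain ⟨Q, hQ⟩ :=
    sub_dvd_pow_sub_pow (g + π * (x ^ d * ε) + π ^ 2 * η) (g + π * (x ^ d * ε)) (j + 1)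
  refine ⟨A + (j + 1) * π * ε * B, k * (x ^ d * ε) ^ 2 + η * Q, ?_⟩
  rw [Nat.add_sub_cancel] at hk
  push_cast at hk
  linear_combination hQ + hk + hA + ((j + 1) * π * ε) * hB

end Quotient

section FleckSum

open Polynomial

variable {p : ℕ} [Fact p.Prime]

theorem coeff_one_sub_X_pow_mul_expand {R : Type*} [CommRing R] [CharP R p] {b d : ℕ} (hd1 : 1 ≤ d)
    (hd : d ≤ p ^ b) (m i : ℕ) (f : R[X]) :
    ((1 - X) ^ (p ^ b * m + (d - 1)) * expand R (p ^ b) f).coeff (p ^ b * i + (d - 1)) =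
      (-1) ^ (d - 1) * ((1 - X) ^ m * f).coeff i := by
  have h : (1 - X : R[X]) ^ (p ^ b * m + (d - 1)) * expand R (p ^ b) f =
      (1 - X) ^ (d - 1) * expand R (p ^ b) ((1 - X) ^ m * f) := by
    rw [pow_add, pow_mul, sub_pow_char_pow, one_pow, map_mul, map_pow, map_sub, map_one, expand_X]
    ring
  rw [h, coeff_mul_expand_of_natDegree_le (natDegree_one_sub_X_pow_le _) (by omega),
    coeff_one_sub_X_pow, Nat.choose_self, Nat.cast_one, mul_one]

theorem coeff_zero_cartier_of_expand_pow_eq {R : Type*} [CommRing R] [CharP R p] {b d m r : ℕ}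
    (hd1 : 1 ≤ d) (hd : d ≤ p ^ b) {A B : R[X]}
    (hA : expand R (p ^ b) B ^ r = X ^ (p ^ b * m + d) * A) :
    (cartier (p ^ (b + 1)) ((1 - X) ^ (p ^ b * m + d - 1) * A * expand R (p ^ b) B)).coeff 0 =
      (-1) ^ (d - 1) * ((1 - X) ^ m * B ^ (r + 1)).coeff (p + m) := by
  have hindex : p ^ b * (p + m) + (d - 1) = p ^ (b + 1) * (0 + 1) - 1 + (p ^ b * m + d) := by
    have := NeZero.one_le (n := p ^ b * p)
    rw [zero_add, mul_one, mul_add, pow_succ]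
    omega
  rw [← coeff_one_sub_X_pow_mul_expand hd1 hd, map_pow, pow_succ (expand R (p ^ b) B),
    hA, hindex, coeff_cartier, ← coeff_mul_X_pow _ (p ^ b * m + d), Nat.add_sub_assoc hd1]
  congr 1
  ring

theorem intCast_coeff_zero_cartierOneSub {b d m r : ℕ} (hd1 : 1 ≤ d) (hd : d ≤ p ^ b)
    {A B H : ℤ[X]} (hH : (p : ℤ[X]) ∣ H - expand ℤ (p ^ b) B)
    (hA : (p : ℤ[X]) ∣ H ^ r - X ^ (p ^ b * m + d) * A) :
    (((cartierOneSub (p ^ (b + 1)) ((1 - X) ^ (p ^ b * m + d - 1) * A * H)).coeff 0 : ℤ) : ZMod p) =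
      (-1) ^ (d - 1) * (((1 - X) ^ m * B ^ (r + 1)).coeff (p + m) : ℤ) := by
  let φ := Int.castRingHom (ZMod p)
  rw [natCast_dvd_iff_map_eq_zero, Polynomial.map_sub, sub_eq_zero] at hH hA
  rw [map_expand] at hH
  simp only [Polynomial.map_pow, Polynomial.map_mul, map_X, hH] at hA
  have h := coeff_zero_cartier_of_expand_pow_eq hd1 hd hA
  rw [← cartierOneSub_eq_cartier, ← hH] at h
  rw [← eq_intCast φ, ← eq_intCast φ, ← coeff_map, ← coeff_map, ← cartierOneSub_map]
  simpa [φ] using h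

theorem exists_pow_dvd_coeff_cartierOneSub_sub {K : ℤ[X]}
    (hK : (1 - X) ^ p = 1 - X ^ p + (p : ℤ[X]) * (X * K)) {b d m : ℕ} (hm : m < p) (hd1 : 1 ≤ d)
    (hd : d ≤ p ^ (b - 1)) (j : ℕ) :
    ∃ κ : ℤ, (κ : ZMod p) =
        (-1) ^ (d - 1) * (((1 - X) ^ m * (X * K) ^ (m + j + 2)).coeff (p + m) : ℤ) ∧
      ∀ l, (p : ℤ) ^ (m + j + 3) ∣
        (cartierOneSub (p ^ (b + 1)) ((1 - X) ^ (p ^ b * m + d - 1) *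
          X ^ (p ^ (b + 1) * (l + (m + j + 2)) - (p ^ b * m + d)))).coeff l -
        p ^ (m + j + 2) * ((l + (m + j + 2)).choose l * κ) := by
  obtain ⟨ε, η, hH⟩ := exists_X_pow_eq_one_sub_add hK (Nat.le_add_left 1 b) hd
  set e := p ^ b * m + d with he
  set q := p ^ (b + 1) with hq
  set H := expand ℤ (p ^ (b + 1 - 1)) (X * K) + (p : ℤ[X]) * (X ^ d * ε) + (p : ℤ[X]) ^ 2 * η
    with hHdef
  rw [Nat.add_sub_cancel] at hHdef
  have hdb : d ≤ p ^ b := hd.trans (Nat.pow_le_pow_right (NeZero.pos p) (Nat.sub_le b 1))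
  have heq : e ≤ q := by
    rw [hq, pow_succ]
    nlinarith
  obtain ⟨A, hA⟩ := exists_sq_dvd_pow_sub_pow_mul (x := (X : ℤ[X])) (π := (p : ℤ[X])) (P := p ^ b)
    (d := d) (e := e) (j := m + j) (g := expand ℤ (p ^ b) (X * K)) (ε := ε) (η := η) (by simp)
    (by nlinarith) (by nlinarith)
  rw [← hHdef] at hA
  have hHB : (p : ℤ[X]) ∣ H - expand ℤ (p ^ b) (X * K) :=
    ⟨X ^ d * ε + (p : ℤ[X]) * η, by rw [hHdef]; ring⟩
  have hXA : C (p : ℤ) ^ 2 ∣ (1 - X) ^ (e - 1) * X ^ (q - e) * H ^ (m + j + 1) -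
      (1 - X) ^ (e - 1) * A * X ^ q := by
    have hXq : (X : ℤ[X]) ^ (q - e) * X ^ e = X ^ q := pow_sub_mul_pow X heq
    convert hA.mul_left ((1 - X) ^ (e - 1) * X ^ (q - e)) using 1
    · rw [C_eq_natCast]
    · rw [← hXq]
      ring
  refine ⟨_, intCast_coeff_zero_cartierOneSub (A := A) hd1 hdb hHB
    ((dvd_pow_self _ two_ne_zero).trans hA), fun l => ?_⟩
  have h := pow_dvd_coeff_cartierOneSub_sub (by simpa using hH) hXA l
  have hexp : q * (l + (m + j + 2)) - e = q - e + q * (l + (m + j + 1)) := by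
    rw [← Nat.sub_add_comm heq]
    congr 1
    ring
  rwa [mul_assoc ((1 - X) ^ (e - 1)), ← pow_mul, ← pow_add, ← hexp] at h

theorem neg_one_pow_pow_mul {R : Type*} [Monoid R] [HasDistribNeg R] {a : ℕ} (ha : a ≠ 0)
    (q k : ℕ) : (-1 : R) ^ (q ^ a * k) = (-1) ^ (q * k) := by
  refine neg_one_pow_congr ?_
  simp [Nat.even_mul, Nat.even_pow, ha]

theorem exists_sum_Icc_eq_pow_mul {K : ℤ[X]}
    (hK : (1 - X) ^ p = 1 - X ^ p + (p : ℤ[X]) * (X * K)) {a d m l n : ℕ} (ha : 1 ≤ a) (hm : m < p)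
    (hn : l + m + 2 ≤ n) (hd1 : 1 ≤ d) (hd : d ≤ p ^ (a - 2)) :
    ∃ S : ℤ, ∑ k ∈ Icc (l + 1) n,
        ((p ^ a * n - (p ^ (a - 1) * m + d)).choose (p ^ a * k - (p ^ (a - 1) * m + d)) : ℤ)
          * (-1) ^ (p * k) * ((k - 1).choose l : ℤ) = p ^ (n - l) * S ∧
      (S : ZMod p) = (-1) ^ (l + m + 1) * n.choose l *
        (((1 - X) ^ m * (X * K) ^ (n - l)).coeff (p + m) : ℤ) := by
  obtain ⟨b, rfl⟩ := Nat.exists_eq_add_of_le' ha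
  obtain ⟨j, rfl⟩ : ∃ j, n = l + (m + j + 2) := ⟨n - (l + m + 2), by omega⟩
  obtain ⟨κ, hκ, hdvd⟩ := exists_pow_dvd_coeff_cartierOneSub_sub (b := b) hK hm hd1 hd j
  have heq : p ^ b * m + d ≤ p ^ (b + 1) := by
    have := hd.trans (Nat.pow_le_pow_right (NeZero.pos p) (by omega : b + 1 - 2 ≤ b))
    rw [pow_succ]
    nlinarith
  obtain ⟨t, ht⟩ := hdvd l
  rw [coeff_cartierOneSub_one_sub_X_pow_mul_X_pow (by omega) heq (by omega)] at ht
  simp only [neg_one_pow_pow_mul b.succ_ne_zero] at ht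
  rw [Nat.add_sub_cancel, Nat.add_sub_cancel_left]
  set e := p ^ b * m + d with he
  have hsq : (-1 : ℤ) ^ (l + e) * (-1) ^ (l + e) = 1 := by rw [← mul_pow]; simp
  refine ⟨(-1) ^ (l + e) * ((l + (m + j + 2)).choose l * κ + p * t), ?_, ?_⟩
  · linear_combination (-1) ^ (l + e) * ht - (∑ k ∈ Icc (l + 1) _, _) * hsq
  · have hsign : (-1 : ZMod p) ^ (l + e) * (-1) ^ (d - 1) = (-1) ^ (l + m + 1) := by
      rw [he, pow_add, pow_add, pow_mul, neg_one_pow_char_pow, mul_assoc, mul_assoc, ← pow_add,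
        show d + (d - 1) = 2 * (d - 1) + 1 by omega, pow_succ, pow_mul]
      ring
    push_cast
    rw [hκ, CharP.cast_eq_zero (ZMod p) p, ← hsign]
    ring

end FleckSum

section ChangeOfVariables

open PowerSeries

theorem constantCoeff_bernoulliPowerSeries : constantCoeff (bernoulliPowerSeries ℚ) = 1 := by
  simp [bernoulliPowerSeries, ← coeff_zero_eq_constantCoeff_apply]

theorem isLeftRegular_exp_sub_one : IsLeftRegular (exp ℚ - 1) := by
  have h : IsLeftRegular (bernoulliPowerSeries ℚ * (exp ℚ - 1)) := by
    rw [bernoulliPowerSeries_mul_exp_sub_one]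
    exact (IsRegular.of_ne_zero X_ne_zero).left
  exact h.of_mul

theorem evalNegHom_bernoulliPowerSeries :
    evalNegHom (bernoulliPowerSeries ℚ) = exp ℚ * bernoulliPowerSeries ℚ := by
  have h := bernoulliPowerSeries_mul_exp_sub_one ℚ
  have hneg := congrArg evalNegHom h
  rw [map_mul, map_sub, map_one, evalNegHom_X] at hneg
  have hexp := exp_mul_exp_neg_eq_one (A := ℚ)
  refine isLeftRegular_exp_sub_one ?_
  linear_combination (-exp ℚ) * hneg + evalNegHom (bernoulliPowerSeries ℚ) * hexp - exp ℚ * h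

theorem X_mul_derivative_bernoulliPowerSeries :
    X * derivative ℚ (bernoulliPowerSeries ℚ) =
      bernoulliPowerSeries ℚ * (1 - exp ℚ * bernoulliPowerSeries ℚ) := by
  have h := bernoulliPowerSeries_mul_exp_sub_one ℚ
  have hd := congrArg (derivative ℚ) h
  rw [Derivation.leibniz, map_sub, derivative_exp, derivative_one, derivative_X, smul_eq_mul,
    smul_eq_mul, sub_zero] at hd
  refine isLeftRegular_exp_sub_one ?_
  linear_combination X * hd - (1 - exp ℚ * bernoulliPowerSeries ℚ) * h

theorem coeff_succ_exp_mul_bernoulliPowerSeries_pow (n : ℕ) :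
    coeff (n + 1) (exp ℚ * bernoulliPowerSeries ℚ ^ (n + 2)) = 0 := by
  have h : C (n + 1 : ℚ) * (exp ℚ * bernoulliPowerSeries ℚ ^ (n + 2)) =
      C (n + 1 : ℚ) * bernoulliPowerSeries ℚ ^ (n + 1) -
        X * derivative ℚ (bernoulliPowerSeries ℚ ^ (n + 1)) := by
    rw [derivative_pow, Nat.add_sub_cancel]
    simp only [map_add, map_natCast, map_one, Nat.cast_add, Nat.cast_one]
    linear_combination ((n : ℚ⟦X⟧) + 1) * bernoulliPowerSeries ℚ ^ n *
      X_mul_derivative_bernoulliPowerSeries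
  have hcoeff := congrArg (coeff (n + 1)) h
  rw [map_sub, coeff_C_mul, coeff_C_mul, coeff_succ_X_mul, coeff_derivative, mul_comm _ (_ + 1),
    sub_self] at hcoeff
  exact (mul_eq_zero.1 hcoeff).resolve_left (by positivity)

theorem subst_exp_sub_one_C_add_X_mul (c : ℚ) (G : ℚ⟦X⟧) :
    (C c + X * G).subst (exp ℚ - 1) = C c + (exp ℚ - 1) * G.subst (exp ℚ - 1) := by
  rw [← coe_substAlgHom HasSubst.exp_sub_one, map_add, map_mul, substAlgHom_X, C_eq_algebraMap,
    AlgHom.commutes]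

theorem exists_eq_C_add_X_mul {R : Type*} [CommSemiring R] (F : R⟦X⟧) :
    ∃ (c : R) (G : R⟦X⟧), F = C c + X * G :=
  ⟨_, _, (eq_X_mul_shift_add_const F).trans (add_comm _ _)⟩

/- The invariance of residues under `X = exp Z - 1`: the left-hand side is the residue of
`F dX / X ^ (n + 1)`. -/
theorem coeff_eq_coeff_subst_exp_sub_one (F : ℚ⟦X⟧) (n : ℕ) :
    coeff n F = coeff n (F.subst (exp ℚ - 1) * (exp ℚ * bernoulliPowerSeries ℚ ^ (n + 1))) := by
  induction n generalizing F with
  | zero =>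
    obtain ⟨c, G, rfl⟩ := exists_eq_C_add_X_mul F
    simp [subst_exp_sub_one_C_add_X_mul, constantCoeff_bernoulliPowerSeries]
  | succ n ih =>
    obtain ⟨c, G, rfl⟩ := exists_eq_C_add_X_mul F
    have h : (C c + X * G).subst (exp ℚ - 1) * (exp ℚ * bernoulliPowerSeries ℚ ^ (n + 2)) =
        C c * (exp ℚ * bernoulliPowerSeries ℚ ^ (n + 2)) +
          X * (G.subst (exp ℚ - 1) * (exp ℚ * bernoulliPowerSeries ℚ ^ (n + 1))) := by
      rw [subst_exp_sub_one_C_add_X_mul]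
      linear_combination (G.subst (exp ℚ - 1) * (exp ℚ * bernoulliPowerSeries ℚ ^ (n + 1))) *
        bernoulliPowerSeries_mul_exp_sub_one ℚ
    rw [h, map_add, map_add, coeff_C_mul, coeff_succ_exp_mul_bernoulliPowerSeries_pow,
      coeff_succ_X_mul, coeff_succ_X_mul, ← ih, coeff_C, if_neg n.succ_ne_zero, mul_zero]

theorem derivative_log_mul_one_add_X : derivative ℚ (log ℚ) * (1 + X) = 1 := by
  rw [deriv_log, mul_add, mul_one]
  ext (_ | n)
  · simp
  · simp [coeff_succ_mul_X, pow_succ, coeff_one]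

theorem log_subst_exp_sub_one : (log ℚ).subst (exp ℚ - 1) = (X : ℚ⟦X⟧) := by
  have hsubst := HasSubst.exp_sub_one (A := ℚ)
  refine derivative.ext ?_ ?_
  · have h := congrArg (subst (exp ℚ - 1)) derivative_log_mul_one_add_X
    rw [derivative_subst hsubst, map_sub, derivative_exp, derivative_one, sub_zero, derivative_X]
    rw [← coe_substAlgHom hsubst] at h ⊢
    simpa only [map_mul, map_add, map_one, substAlgHom_X, add_sub_cancel] using h
  · rw [constantCoeff_X]
    exact constantCoeff_subst_eq_zero
      (by rw [map_sub, map_one, ← constantCoeff_eq, constantCoeff_exp, sub_self]) _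
      constantCoeff_log

theorem coeff_one_add_X_pow_mul_log_pow (m v n : ℕ) :
    coeff n ((1 + X) ^ m * log ℚ ^ v) =
      coeff n (X ^ v * (exp ℚ ^ (m + 1) * bernoulliPowerSeries ℚ ^ (n + 1))) := by
  have hsubst := HasSubst.exp_sub_one (A := ℚ)
  have h : ((1 + X) ^ m * log ℚ ^ v).subst (exp ℚ - 1) = exp ℚ ^ m * X ^ v := by
    have hlog := log_subst_exp_sub_one
    rw [← coe_substAlgHom hsubst] at hlog ⊢
    simp only [map_mul, map_add, map_one, map_pow, substAlgHom_X, add_sub_cancel, hlog]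
  rw [coeff_eq_coeff_subst_exp_sub_one, h]
  congr 1
  ring

end ChangeOfVariables

section IntegralUpTo

open PowerSeries

variable {R Γ₀ : Type*} [CommRing R] [LinearOrderedCommGroupWithZero Γ₀] (v : Valuation R Γ₀)
  (D : ℕ)

/-- The ring of power series whose coefficients of degree at most `D` are integral for the
valuation `v`. The bound is there for `Z / (exp Z - 1)`, which is `p`-integral only up to degree
`p - 2`. -/
def integralUpTo : Subring R⟦X⟧ where
  carrier := {f | ∀ i ≤ D, v (coeff i f) ≤ 1}
  mul_mem' {f g} hf hg i hi := by
    rw [coeff_mul]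
    refine v.map_sum_le fun x hx => ?_
    have hx := mem_antidiagonal.1 hx
    rw [map_mul]
    exact mul_le_one' (hf _ (by omega)) (hg _ (by omega))
  one_mem' i _ := by
    rw [coeff_one]
    split_ifs <;> simp
  add_mem' {f g} hf hg i hi := by
    rw [map_add]
    exact v.map_add_le (hf i hi) (hg i hi)
  zero_mem' i _ := by simp
  neg_mem' {f} hf i hi := by
    rw [map_neg, Valuation.map_neg]
    exact hf i hi

/-- The ideal of power series in `integralUpTo v D` whose coefficients of degree at most `D` lie in
the maximal ideal of the valuation `v`. Congruences of coefficients up to degree `D` are equalities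
in the quotient by it. -/
def smallUpTo : Ideal (integralUpTo v D) where
  carrier := {f | ∀ i ≤ D, v (coeff i (f : R⟦X⟧)) < 1}
  add_mem' {f g} hf hg i hi := by
    rw [Subring.coe_add, map_add]
    exact v.map_add_lt (hf i hi) (hg i hi)
  zero_mem' i _ := by simp
  smul_mem' f g hg i hi := by
    rw [smul_eq_mul, Subring.coe_mul, coeff_mul]
    refine v.map_sum_lt one_ne_zero fun x hx => ?_
    have hx := mem_antidiagonal.1 hx
    rw [map_mul]
    exact mul_lt_one_of_nonneg_of_lt_one_right (f.2 _ (by omega)) zero_le (hg _ (by omega))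

variable {v D} {f g h : R⟦X⟧}

theorem mem_integralUpTo_of_mul_eq_one (hg : g ∈ integralUpTo v D) (hg1 : constantCoeff g = 1)
    (hfg : f * g = 1) : f ∈ integralUpTo v D := by
  intro i
  induction i using Nat.strong_induction_on with
  | _ i ih =>
    intro hi
    have hcoeff := congrArg (coeff i) hfg
    cases i with
    | zero =>
      rw [coeff_zero_eq_constantCoeff_apply, map_mul, hg1, mul_one, coeff_zero_one] at hcoeff
      rw [coeff_zero_eq_constantCoeff_apply, hcoeff, map_one]
    | succ i =>
      rw [coeff_mul, Nat.sum_antidiagonal_succ', coeff_zero_eq_constantCoeff_apply, hg1, mul_one,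
        coeff_one, if_neg (Nat.succ_ne_zero i)] at hcoeff
      rw [eq_neg_of_add_eq_zero_left hcoeff, Valuation.map_neg]
      refine v.map_sum_le fun x hx => ?_
      have hx := mem_antidiagonal.1 hx
      rw [map_mul]
      exact mul_le_one' (ih _ (by omega) (by omega)) (hg _ (by omega))

theorem valuation_coeff_mul_pow_sub_lt_one (hf : f ∈ integralUpTo v D) (hg : g ∈ integralUpTo v D)
    (hh : h ∈ integralUpTo v D) (hgh : ∀ i ≤ D, v (coeff i g - coeff i h) < 1) (n : ℕ) {i : ℕ}
    (hi : i ≤ D) : v (coeff i (f * g ^ n) - coeff i (f * h ^ n)) < 1 := by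
  lift f to integralUpTo v D using hf
  lift g to integralUpTo v D using hg
  lift h to integralUpTo v D using hh
  have hmk : Ideal.Quotient.mk (smallUpTo v D) g = Ideal.Quotient.mk (smallUpTo v D) h :=
    Ideal.Quotient.eq.2 fun i hi => by simpa using hgh i hi
  have hmem : f * g ^ n - f * h ^ n ∈ smallUpTo v D := by
    rw [← Ideal.Quotient.eq, map_mul, map_mul, map_pow, map_pow, hmk]
  simpa using hmem i hi

theorem valuation_coeff_mul_pow_prime_sub_lt_one {p : ℕ} (hp : p.Prime) (hD : D < p)
    (hvp : v p < 1) (hf : f ∈ integralUpTo v D) (hg : g ∈ integralUpTo v D)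
    (hg1 : constantCoeff g = 1) {i : ℕ} (hi : i ≤ D) :
    v (coeff i (f * g ^ p) - coeff i f) < 1 := by
  lift f to integralUpTo v D using hf
  lift g to integralUpTo v D using hg
  have hsub : (g - 1) ^ p ∈ smallUpTo v D := by
    have hdvd : X ∣ (g : R⟦X⟧) - 1 := by rw [X_dvd_iff, map_sub, hg1, map_one, sub_self]
    intro j hj
    simp [X_pow_dvd_iff.1 (pow_dvd_pow_of_dvd hdvd p) j (by omega)]
  have hnat : (p : integralUpTo v D) ∈ smallUpTo v D := by
    intro j _
    rw [Subring.coe_natCast, ← map_natCast C, coeff_C]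
    split_ifs <;> simp [hvp]
  obtain ⟨r, hr⟩ := exists_add_pow_prime_eq hp 1 (g - 1)
  have hmem : f * g ^ p - f ∈ smallUpTo v D := by
    rw [add_sub_cancel, one_pow] at hr
    rw [show f * g ^ p - f = f * (g - 1) ^ p + f * (g - 1) * r * p by rw [hr]; ring]
    exact add_mem (Ideal.mul_mem_left _ _ hsub) (Ideal.mul_mem_left _ _ hnat)
  simpa using hmem i hi

end IntegralUpTo

section BernoulliResidues

open PowerSeries

theorem bernHigher_eq_coeff (m k : ℕ) :
    bernHigher m k = (k.factorial : ℚ) * coeff k (bernoulliPowerSeries ℚ ^ m) := by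
  have h : bernoulliPowerSeries ℚ ^ m = ∏ _j : Fin m, bernoulliPowerSeries ℚ := by simp
  rw [bernHigher, h, PowerSeries.coeff_prod, ← piAntidiag_univ_fin_eq_antidiagonalTuple,
    finsuppAntidiag, sum_map, ← sum_attach]
  simp [bernoulliPowerSeries]

variable {p : ℕ} [Fact p.Prime]

theorem valuation_natCast_eq_one {i : ℕ} (hi : 0 < i) (hip : i < p) :
    Rat.padicValuation p i = 1 := by
  rw [← Int.cast_natCast, Rat.padicValuation_cast, Int.padicValuation_eq_one_iff,
    Int.natCast_dvd_natCast]
  exact Nat.not_dvd_of_pos_of_lt hi hip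

theorem valuation_factorial {i : ℕ} (hi : i < p) : Rat.padicValuation p i.factorial = 1 := by
  rw [← Int.cast_natCast, Rat.padicValuation_cast, Int.padicValuation_eq_one_iff,
    Int.natCast_dvd_natCast, (Fact.out : p.Prime).dvd_factorial]
  exact hi.not_ge

theorem bernoulliPowerSeries_mem_integralUpTo :
    bernoulliPowerSeries ℚ ∈ integralUpTo (Rat.padicValuation p) (p - 2) := by
  have hp2 := (Fact.out : p.Prime).two_le
  set g : ℚ⟦X⟧ := PowerSeries.mk fun i => 1 / ((i + 1).factorial : ℚ) with hg
  have hexp : X * g = exp ℚ - 1 := by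
    ext (_ | i)
    · simp
    · simp [hg, coeff_succ_X_mul, coeff_exp, coeff_one]
  refine mem_integralUpTo_of_mul_eq_one (g := g) ?_ ?_ ?_
  · intro i hi
    rw [coeff_mk, map_div₀, map_one, valuation_factorial (by omega), div_one]
  · simp [hg, ← coeff_zero_eq_constantCoeff_apply]
  · apply mul_left_cancel₀ (X_ne_zero (R := ℚ))
    rw [mul_left_comm, hexp, bernoulliPowerSeries_mul_exp_sub_one, mul_one]

theorem coeff_evalNegHom {R : Type*} [CommRing R] (f : R⟦X⟧) (i : ℕ) :
    coeff i (evalNegHom f) = (-1) ^ i * coeff i f :=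
  coeff_rescale f (-1) i

theorem evalNegHom_mem_integralUpTo {R Γ₀ : Type*} [CommRing R]
    [LinearOrderedCommGroupWithZero Γ₀] {v : Valuation R Γ₀} {D : ℕ} {f : R⟦X⟧}
    (hf : f ∈ integralUpTo v D) : evalNegHom f ∈ integralUpTo v D := by
  intro i hi
  simpa [coeff_evalNegHom] using hf i hi

theorem valuation_coeff_exp_mul_bernoulliPowerSeries_pow_sub_lt_one (r : ℕ) {i : ℕ}
    (hi : i ≤ p - 2) :
    Rat.padicValuation p (coeff i (exp ℚ ^ r * bernoulliPowerSeries ℚ ^ (r + p)) -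
      (-1) ^ i * coeff i (bernoulliPowerSeries ℚ ^ r)) < 1 := by
  have hp : p.Prime := Fact.out
  have hp2 := hp.two_le
  have hmem := bernoulliPowerSeries_mem_integralUpTo (p := p)
  have h := valuation_coeff_mul_pow_prime_sub_lt_one hp (by omega)
    (by rw [Rat.padicValuation_self, ← WithZero.exp_zero, WithZero.exp_lt_exp]; norm_num)
    (evalNegHom_mem_integralUpTo (pow_mem hmem r)) hmem constantCoeff_bernoulliPowerSeries hi
  rwa [coeff_evalNegHom, map_pow, evalNegHom_bernoulliPowerSeries, mul_pow, mul_assoc,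
    ← pow_add] at h

theorem factorial_mul_factorial_eq_neg_one_pow {w : ℕ} (hw : 1 ≤ w) (hwp : w ≤ p) :
    ((w - 1).factorial * (p - w).factorial : ZMod p) = (-1) ^ w := by
  induction w, hw using Nat.le_induction with
  | base => simp [ZMod.wilsons_lemma]
  | succ w hw ih =>
    obtain ⟨u, rfl⟩ := Nat.exists_eq_add_of_le' hw
    obtain ⟨t, rfl⟩ := Nat.exists_eq_add_of_le' hwp
    have hp0 : ((t + (u + 1 + 1) : ℕ) : ZMod (t + (u + 1 + 1))) = 0 := ZMod.natCast_self _
    have ih := ih (by omega)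
    rw [show t + (u + 1 + 1) - (u + 1) = t + 1 by omega, Nat.add_sub_cancel,
      Nat.factorial_succ] at ih
    rw [Nat.add_sub_cancel, Nat.add_sub_cancel, Nat.factorial_succ, pow_succ, ← ih]
    push_cast at hp0 ⊢
    linear_combination ((u.factorial : ZMod (t + (u + 1 + 1))) * t.factorial) * hp0

theorem valuation_intCast_lt_one_iff {z : ℤ} :
    Rat.padicValuation p z < 1 ↔ (z : ZMod p) = 0 := by
  rw [Rat.padicValuation_cast, Int.padicValuation_lt_one_iff, ZMod.intCast_zmod_eq_zero_iff_dvd]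

theorem evalNegHom_log :
    evalNegHom (log ℚ) = X * PowerSeries.mk fun i => -((i + 1 : ℕ) : ℚ)⁻¹ := by
  ext (_ | i)
  · rw [coeff_evalNegHom, coeff_log, coeff_zero_X_mul]
    simp
  · rw [coeff_evalNegHom, coeff_log, if_neg i.succ_ne_zero, coeff_succ_X_mul, coeff_mk]
    simp only [Algebra.algebraMap_self, RingHom.id_apply]
    rw [mul_div_assoc', ← pow_add, show i + 1 + (i + 1 + 1) = 2 * (i + 1) + 1 by ring]
    simp [pow_succ, neg_div]

theorem coeff_one_sub_X_pow_mul_evalNegHom_log_pow (m v n : ℕ) :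
    coeff (n + v) ((1 - X) ^ m * evalNegHom (log ℚ) ^ v) =
      (-1) ^ (n + v) * coeff n (exp ℚ ^ (m + 1) * bernoulliPowerSeries ℚ ^ (n + v + 1)) := by
  have h : (1 - X) ^ m * evalNegHom (log ℚ) ^ v = evalNegHom ((1 + X) ^ m * log ℚ ^ v) := by
    rw [map_mul, map_pow, map_pow, map_add, map_one, evalNegHom_X, sub_eq_add_neg]
  rw [h, coeff_evalNegHom, coeff_one_add_X_pow_mul_log_pow, coeff_X_pow_mul]

theorem valuation_coeff_evalNegHom_log_pow_sub_lt_one {m w : ℕ} (hw : 2 ≤ w) (hwp : w ≤ p) :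
    Rat.padicValuation p (coeff (p + m) ((1 - X) ^ m * evalNegHom (log ℚ) ^ (m + w)) -
      (-1) ^ m * ((w - 1).factorial * bernHigher (m + 1) (p - w))) < 1 := by
  have hsign : (-1 : ℚ) ^ (p + m) * (-1) ^ (p - w) = (-1) ^ m * (-1) ^ w := by
    rw [← pow_add, ← pow_add]
    exact neg_one_pow_congr (by grind)
  set e := coeff (p - w) (exp ℚ ^ (m + 1) * bernoulliPowerSeries ℚ ^ (m + 1 + p))
  set c := coeff (p - w) (bernoulliPowerSeries ℚ ^ (m + 1)) with hc
  have hc1 : Rat.padicValuation p c ≤ 1 :=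
    pow_mem bernoulliPowerSeries_mem_integralUpTo (m + 1) (p - w) (by omega)
  have hec : Rat.padicValuation p (e - (-1) ^ (p - w) * c) < 1 :=
    valuation_coeff_exp_mul_bernoulliPowerSeries_pow_sub_lt_one (m + 1) (by omega)
  have hwilson : Rat.padicValuation p
      (((w - 1).factorial * (p - w).factorial - (-1) ^ w : ℤ) : ℚ) < 1 := by
    rw [valuation_intCast_lt_one_iff]
    push_cast
    rw [factorial_mul_factorial_eq_neg_one_pow (by omega) hwp, sub_self]
  have hcoeff : coeff (p + m) ((1 - X) ^ m * evalNegHom (log ℚ) ^ (m + w)) =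
      (-1) ^ (p + m) * e := by
    have h := coeff_one_sub_X_pow_mul_evalNegHom_log_pow m (m + w) (p - w)
    rwa [show p - w + (m + w) = p + m by omega, show p + m + 1 = m + 1 + p by omega] at h
  have hsplit : (-1) ^ (p + m) * e - (-1) ^ m * ((w - 1).factorial * ((p - w).factorial * c)) =
      (-1) ^ (p + m) * (e - (-1) ^ (p - w) * c) -
        (-1) ^ m * ((((w - 1).factorial * (p - w).factorial - (-1) ^ w : ℤ) : ℚ) * c) := by
    push_cast
    linear_combination c * hsign
  rw [hcoeff, bernHigher_eq_coeff, ← hc, hsplit]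
  refine Valuation.map_sub_lt _ ?_ ?_
  · simpa using hec
  · simpa using mul_lt_one_of_nonneg_of_lt_one_left zero_le hwilson hc1

end BernoulliResidues

section QuotientCoefficients

open Polynomial

variable {p : ℕ} [Fact p.Prime]

theorem natCast_choose_prime_sub_one {i : ℕ} (hi : i < p) :
    ((p - 1).choose i : ZMod p) = (-1) ^ i := by
  have hp : p.Prime := Fact.out
  induction i with
  | zero => simp
  | succ i ih =>
    have hpascal : p.choose (i + 1) = (p - 1).choose i + (p - 1).choose (i + 1) := by
      rw [← Nat.choose_succ_succ', Nat.sub_add_cancel hp.one_le]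
    have hzero : (p.choose (i + 1) : ZMod p) = 0 :=
      (ZMod.natCast_eq_zero_iff _ _).2 (hp.dvd_choose_self i.succ_ne_zero hi)
    rw [hpascal, Nat.cast_add, ih (by omega)] at hzero
    linear_combination hzero

theorem succ_mul_coeff_eq_neg_one {K : ℤ[X]}
    (hK : (1 - X) ^ p = 1 - X ^ p + (p : ℤ[X]) * (X * K)) {i : ℕ} (hi : i + 1 < p) :
    ((i + 1 : ℕ) * K.coeff i : ZMod p) = -1 := by
  have hp : p.Prime := Fact.out
  have hcoeff := congrArg (coeff · (i + 1)) hK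
  simp only [coeff_one_sub_X_pow, coeff_add, coeff_sub, coeff_one, coeff_X_pow,
    coeff_natCast_mul, coeff_X_mul, if_neg i.succ_ne_zero, if_neg hi.ne] at hcoeff
  have hchoose : (p : ℤ) * (p - 1).choose i = p.choose (i + 1) * (i + 1 : ℕ) := by
    have h := Nat.add_one_mul_choose_eq (p - 1) i
    rw [Nat.sub_add_cancel hp.one_le] at h
    exact_mod_cast h
  have hint : ((i + 1 : ℕ) * K.coeff i : ℤ) = (-1) ^ (i + 1) * (p - 1).choose i := by
    apply mul_left_cancel₀ (Nat.cast_ne_zero.2 hp.ne_zero : (p : ℤ) ≠ 0)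
    linear_combination (-(i + 1 : ℕ) : ℤ) * hcoeff - (-1) ^ (i + 1) * hchoose
  have hmod := congrArg (Int.cast : ℤ → ZMod p) hint
  push_cast [natCast_choose_prime_sub_one (show i < p by omega)] at hmod ⊢
  rw [hmod, pow_succ, mul_neg_one, neg_mul, ← mul_pow, neg_one_mul, neg_neg, one_pow]

/-- The inclusion of the integer polynomials into the rational power series, in which `X K` can be
compared with a logarithm. -/
noncomputable def toRatPowerSeries : ℤ[X] →+* PowerSeries ℚ :=
  coeToPowerSeries.ringHom.comp (mapRingHom (Int.castRingHom ℚ))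

theorem coeff_toRatPowerSeries (f : ℤ[X]) (i : ℕ) :
    PowerSeries.coeff i (toRatPowerSeries f) = f.coeff i := by
  simp [toRatPowerSeries]

theorem toRatPowerSeries_X : toRatPowerSeries X = PowerSeries.X := by
  simp [toRatPowerSeries]

theorem toRatPowerSeries_mem_integralUpTo (f : ℤ[X]) (D : ℕ) :
    toRatPowerSeries f ∈ integralUpTo (Rat.padicValuation p) D := by
  intro i _
  rw [coeff_toRatPowerSeries, Rat.padicValuation_cast]
  exact Int.padicValuation_le_one p _

theorem valuation_coeff_sub_neg_inv_lt_one {K : ℤ[X]}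
    (hK : (1 - X) ^ p = 1 - X ^ p + (p : ℤ[X]) * (X * K)) {i : ℕ} (hi : i + 1 < p) :
    Rat.padicValuation p (K.coeff i - -((i + 1 : ℕ) : ℚ)⁻¹) < 1 := by
  have hunit := valuation_natCast_eq_one i.succ_pos hi
  have h : Rat.padicValuation p (((i + 1 : ℕ) * K.coeff i + 1 : ℤ) : ℚ) < 1 := by
    rw [valuation_intCast_lt_one_iff]
    have hmod := succ_mul_coeff_eq_neg_one hK hi
    push_cast at hmod ⊢
    rw [hmod, neg_add_cancel]
  have hmul : (K.coeff i - -((i + 1 : ℕ) : ℚ)⁻¹) * (i + 1 : ℕ) =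
      (((i + 1 : ℕ) * K.coeff i + 1 : ℤ) : ℚ) := by
    push_cast
    field_simp
    ring
  rwa [← hmul, map_mul, hunit, mul_one] at h

theorem coeff_add_mul_X_mul_pow {R : Type*} [CommRing R] (f g : PowerSeries R) (n v : ℕ) :
    PowerSeries.coeff (n + v) (f * (PowerSeries.X * g) ^ v) = PowerSeries.coeff n (f * g ^ v) := by
  rw [mul_pow, mul_left_comm, PowerSeries.coeff_X_pow_mul]

theorem valuation_coeff_quotient_pow_sub_lt_one {K : ℤ[X]}
    (hK : (1 - X) ^ p = 1 - X ^ p + (p : ℤ[X]) * (X * K)) {m w : ℕ} (hw : 2 ≤ w) (hwp : w ≤ p) :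
    Rat.padicValuation p (((1 - X) ^ m * (X * K) ^ (m + w)).coeff (p + m) -
      (-1) ^ m * ((w - 1).factorial * bernHigher (m + 1) (p - w))) < 1 := by
  set L : PowerSeries ℚ := PowerSeries.mk fun i => -((i + 1 : ℕ) : ℚ)⁻¹ with hL
  have hLint : L ∈ integralUpTo (Rat.padicValuation p) (p - 2) := by
    intro i hi
    rw [hL, PowerSeries.coeff_mk, Valuation.map_neg, map_inv₀,
      valuation_natCast_eq_one i.succ_pos (by omega), inv_one]
  have hKL : Rat.padicValuation p
      (PowerSeries.coeff (p - w) (toRatPowerSeries ((1 - X) ^ m) * toRatPowerSeries K ^ (m + w)) -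
        PowerSeries.coeff (p - w) (toRatPowerSeries ((1 - X) ^ m) * L ^ (m + w))) < 1 := by
    refine valuation_coeff_mul_pow_sub_lt_one (toRatPowerSeries_mem_integralUpTo _ _)
      (toRatPowerSeries_mem_integralUpTo _ _) hLint (fun i hi => ?_) _ (show p - w ≤ p - 2 by omega)
    rw [coeff_toRatPowerSeries, hL, PowerSeries.coeff_mk]
    exact valuation_coeff_sub_neg_inv_lt_one hK (by omega)
  have hdeg : p + m = p - w + (m + w) := by omega
  have hone : toRatPowerSeries ((1 - X) ^ m) = (1 - PowerSeries.X) ^ m := by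
    rw [map_pow, map_sub, map_one, toRatPowerSeries_X]
  have h := Valuation.map_add_lt _ hKL
    (valuation_coeff_evalNegHom_log_pow_sub_lt_one (m := m) hw hwp)
  rw [evalNegHom_log, ← hL, ← coeff_add_mul_X_mul_pow _ (toRatPowerSeries K),
    ← coeff_add_mul_X_mul_pow _ L, ← hdeg, hone, sub_add_sub_cancel] at h
  rwa [← coeff_toRatPowerSeries, map_mul, hone, map_pow, map_mul toRatPowerSeries X,
    toRatPowerSeries_X]

end QuotientCoefficients

section Assembly

theorem factorial_div_prod_eq {l m n : ℕ} (h : l + m + 1 ≤ n) :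
    (n.factorial : ℚ) / l.factorial / ∏ k ∈ range (m + 1), ((n : ℚ) - l - k) =
      n.choose l * ((n - l - m - 1).factorial : ℚ) := by
  have hprod : ∏ k ∈ range (m + 1), ((n : ℚ) - l - k) = ((n - l).descFactorial (m + 1) : ℚ) := by
    rw [Nat.descFactorial_eq_prod_range, Nat.cast_prod]
    refine prod_congr rfl fun k hk => ?_
    have hk := mem_range.1 hk
    rw [Nat.cast_sub (by omega), Nat.cast_sub (by omega)]
  have hn := Nat.choose_mul_factorial_mul_factorial (by omega : l ≤ n)
  have hnl := Nat.factorial_mul_descFactorial (by omega : m + 1 ≤ n - l)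
  have hdesc : ((n - l).descFactorial (m + 1) : ℚ) ≠ 0 := by
    rw [Nat.cast_ne_zero, Ne, Nat.descFactorial_eq_zero_iff_lt]
    omega
  rw [hprod, ← hn, ← hnl, ← Nat.sub_sub]
  push_cast
  field_simp

variable {p : ℕ} [Fact p.Prime]

theorem modCong_one_of_valuation_sub_lt_one {x y : ℚ} (h : Rat.padicValuation p (x - y) < 1) :
    modCong p 1 x y := by
  by_cases hxy : x = y
  · exact Or.inl hxy
  · have hexp : WithZero.exp (-padicValRat p (x - y)) < WithZero.exp (0 : ℤ) := by
      simpa [Rat.padicValuation, sub_eq_zero, hxy] using h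
    rw [WithZero.exp_lt_exp] at hexp
    exact Or.inr (by omega)

theorem modCong_one_intCast_mul {S z c : ℤ} {y : ℚ} (hS : (S : ZMod p) = z * c)
    (hc : Rat.padicValuation p (c - y) < 1) : modCong p 1 S (z * y) := by
  apply modCong_one_of_valuation_sub_lt_one
  have hSz : Rat.padicValuation p ((S - z * c : ℤ) : ℚ) < 1 := by
    rw [valuation_intCast_lt_one_iff, Int.cast_sub, Int.cast_mul, hS, sub_self]
  have hz : Rat.padicValuation p z ≤ 1 := by
    rw [Rat.padicValuation_cast]
    exact Int.padicValuation_le_one p z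
  rw [show (S - z * y : ℚ) = ((S - z * c : ℤ) : ℚ) + z * (c - y) by push_cast; ring]
  refine Valuation.map_add_lt _ hSz ?_
  rw [map_mul]
  exact mul_lt_one_of_nonneg_of_lt_one_right hz zero_le hc

end Assembly

end FleckQuotient

open FleckQuotient

theorem stmt12 (p a l m n d : ℕ) (hp : p.Prime) (ha : 1 ≤ a) (hm : m < p)
    (h1 : 2 ≤ (n:ℤ) - l - m) (h2 : (n:ℤ) - l - m ≤ p)
    (hd1 : 1 ≤ d) (hd2 : d ≤ p^(a-2)) :
    modCong p 1
      ((1/(p:ℚ)^(n-l)) * ∑ k ∈ Finset.Icc (l+1) n,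
        ((p^a*n - p^(a-1)*m - d).choose (p^a*k - p^(a-1)*m - d) : ℚ)
          * (-1:ℚ)^(p*k) * ((k-1).choose l : ℚ))
      ((-1:ℚ)^(l+1) * ((n.factorial : ℚ) / (l.factorial : ℚ))
          / (∏ k ∈ Finset.range (m+1), ((n:ℚ) - (l:ℚ) - (k:ℚ)))
          * bernHigher (m+1) (((p:ℤ) - n + l + m).toNat)) := by
  have : Fact p.Prime := ⟨hp⟩
  obtain ⟨w, rfl⟩ : ∃ w, n = l + (m + w) := ⟨n - l - m, by omega⟩
  obtain ⟨K, hK⟩ := exists_one_sub_X_pow_prime_eq p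
  obtain ⟨S, hsum, hS⟩ := exists_sum_Icc_eq_pow_mul hK (l := l) (n := l + (m + w)) ha hm
    (by omega) hd1 hd2
  have hbern := valuation_coeff_quotient_pow_sub_lt_one hK (m := m) (w := w) (by omega) (by omega)
  rw [Nat.add_sub_cancel_left] at hsum hS
  rw [Nat.add_sub_cancel_left, mul_div_assoc, factorial_div_prod_eq (by omega),
    show l + (m + w) - l - m - 1 = w - 1 by omega,
    show ((p : ℤ) - (l + (m + w) : ℕ) + l + m).toNat = p - w by omega]
  have hsumℚ := congrArg (Int.cast : ℤ → ℚ) hsum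
  push_cast at hsumℚ
  simp only [Nat.sub_sub]
  rw [hsumℚ, one_div, inv_mul_cancel_left₀ (pow_ne_zero _ (Nat.cast_ne_zero.2 hp.ne_zero))]
  have hmod := modCong_one_intCast_mul
    (z := (-1) ^ (l + m + 1) * (l + (m + w)).choose l) (by exact_mod_cast hS) hbern
  convert hmod using 1
  have hsign : (-1 : ℚ) ^ m * (-1) ^ m = 1 := by rw [← mul_pow]; simp
  push_cast
  linear_combination -((-1) ^ (l + 1) * ((l + (m + w)).choose l : ℚ) * (w - 1).factorial *
    bernHigher (m + 1) (p - w)) * hsign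
end

section
/- Let k ≥ 1 and m ≥ 0 be integers. Then Σ (−1)^{i_1+⋯+i_k}·((i_1+⋯+i_k − 1)!/(i_1!⋯i_k!))·∏_{j=1}^k (B_j^{(m)}/j!)^{i_j} = m·(−1)^k·B_k/(k!·k), where the sum ranges over all k-tuples (i_1,…,i_k) of nonnegative integers with Σ_{j=1}^k j·i_j = k. -/
open Finset

/-!
Let `F = X / (exp X - 1)`, so that `B_k^{(m)} / k!` is the coefficient of `X ^ k` in `F ^ m`.
Expanding `log (F ^ m)` in powers of `F ^ m - 1` and each power by the multinomial theorem, the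
coefficient of `X ^ k` is minus the sum over the tuples `i`. On the other hand
`log (F ^ m) = m log F`, and logarithmic differentiation of `F * (exp X - 1) = X` gives
`X * (log F)' = 1 - F * exp X`, where `F * exp X` is the exponential generating function of the
numbers `(-1) ^ k * B_k`.
-/

open PowerSeries

section Composition

variable {R S : Type*}

/-- The partitions of `k`, encoded by multiplicities: `i j` is the number of parts equal to
`j + 1`. They index the terms of the coefficient of `X ^ k` in a composition of power series. -/
def partitionMultiplicities (k : ℕ) : Finset (Fin k → ℕ) :=
  (Fintype.piFinset fun _ : Fin k => range (k + 1)).filter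
    fun i => ∑ j : Fin k, ((j : ℕ) + 1) * i j = k

theorem sum_le_sum_succ_mul {k : ℕ} (i : Fin k → ℕ) :
    ∑ j, i j ≤ ∑ j : Fin k, ((j : ℕ) + 1) * i j :=
  sum_le_sum fun j _ => Nat.le_mul_of_pos_left (i j) (Nat.succ_pos j)

theorem mem_partitionMultiplicities {k : ℕ} {i : Fin k → ℕ} :
    i ∈ partitionMultiplicities k ↔ ∑ j : Fin k, ((j : ℕ) + 1) * i j = k := by
  simp only [partitionMultiplicities, mem_filter, Fintype.mem_piFinset, mem_range,
    and_iff_right_iff_imp, Nat.lt_succ_iff]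
  intro hi j
  calc i j ≤ ∑ j, i j := single_le_sum_of_canonicallyOrdered (mem_univ j)
    _ ≤ ∑ j : Fin k, ((j : ℕ) + 1) * i j := sum_le_sum_succ_mul i
    _ = k := hi

theorem sum_le_of_mem_partitionMultiplicities {k : ℕ} {i : Fin k → ℕ}
    (hi : i ∈ partitionMultiplicities k) : ∑ j, i j ≤ k :=
  (sum_le_sum_succ_mul i).trans_eq (mem_partitionMultiplicities.1 hi)

theorem sum_ne_zero_of_mem_partitionMultiplicities {k : ℕ} (hk : k ≠ 0) {i : Fin k → ℕ}
    (hi : i ∈ partitionMultiplicities k) : ∑ j, i j ≠ 0 := by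
  intro h
  have hi0 : ∀ j, i j = 0 := by simpa using h
  exact hk (by simpa [hi0] using (mem_partitionMultiplicities.1 hi).symm)

theorem coeff_pow_eq_sum_antidiagonalTuple [CommSemiring R] (f : R⟦X⟧) (m k : ℕ) :
    coeff k (f ^ m) = ∑ i ∈ Finset.Nat.antidiagonalTuple m k, ∏ j, coeff (i j) f := by
  rw [← Fin.prod_const, coeff_prod]
  refine sum_nbij' (fun i => i) (fun i => Finsupp.equivFunOnFinite.symm i) ?_ ?_ ?_ ?_ ?_ <;>
    simp [mem_finsuppAntidiag, Finset.Nat.mem_antidiagonalTuple]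

theorem trunc_succ_eq_sum_monomial [CommSemiring R] {g : R⟦X⟧} (hg : constantCoeff g = 0)
    (k : ℕ) : (trunc (k + 1) g : R⟦X⟧) =
      ∑ j : Fin k, monomial ((j : ℕ) + 1) (coeff (j + 1) g) := by
  ext n
  rw [Polynomial.coeff_coe, coeff_trunc, map_sum,
    ← sum_range fun j => coeff n (monomial (j + 1) (coeff (j + 1) g))]
  rcases n with _ | n <;> simp [coeff_monomial, hg]

theorem coeff_pow_eq_sum_partitionMultiplicities [CommSemiring R] {g : R⟦X⟧}
    (hg : constantCoeff g = 0) (k n : ℕ) :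
    coeff k (g ^ n) = ∑ i ∈ partitionMultiplicities k with ∑ j, i j = n,
      Nat.multinomial univ i * ∏ j : Fin k, coeff (j + 1) g ^ i j := by
  have monomial_term (i : Fin k → ℕ) :
      coeff k ((Nat.multinomial univ i : R⟦X⟧) *
        ∏ j : Fin k, monomial ((j : ℕ) + 1) (coeff (j + 1) g) ^ i j) =
      if ∑ j : Fin k, ((j : ℕ) + 1) * i j = k then
        Nat.multinomial univ i * ∏ j : Fin k, coeff (j + 1) g ^ i j else 0 := by
    simp_rw [monomial_pow, prod_monomial]
    rw [← map_natCast (C (R := R)), coeff_C_mul, coeff_monomial, mul_ite, mul_zero]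
    simp only [mul_comm, eq_comm]
  calc coeff k (g ^ n) = coeff k ((trunc (k + 1) g : R⟦X⟧) ^ n) := by
        rw [← coeff_coe_trunc_of_lt k.lt_succ_self, ← trunc_trunc_pow,
          coeff_coe_trunc_of_lt k.lt_succ_self]
    _ = ∑ i ∈ piAntidiag univ n, if ∑ j : Fin k, ((j : ℕ) + 1) * i j = k then
          Nat.multinomial univ i * ∏ j : Fin k, coeff (j + 1) g ^ i j else 0 := by
        rw [trunc_succ_eq_sum_monomial hg, sum_pow_eq_sum_piAntidiag, map_sum]
        exact sum_congr rfl fun i _ => monomial_term i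
    _ = _ := by
        rw [← sum_filter]
        refine sum_congr (Finset.ext fun i => ?_) fun _ _ => rfl
        simp [mem_partitionMultiplicities, and_comm]

theorem coeff_subst_eq_sum_partitionMultiplicities [CommRing R] [CommRing S] [Algebra R S]
    (f : R⟦X⟧) {g : S⟦X⟧} (hg : constantCoeff g = 0) (k : ℕ) :
    coeff k (f.subst g) = ∑ i ∈ partitionMultiplicities k, coeff (∑ j, i j) f •
      (Nat.multinomial univ i * ∏ j : Fin k, coeff (j + 1) g ^ i j) := by
  have coeff_pow_zero {n : ℕ} (hn : k < n) : coeff k (g ^ n) = 0 :=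
    X_pow_dvd_iff.1 (pow_dvd_pow_of_dvd (X_dvd_iff.2 hg) n) k hn
  have support_le : (Function.support fun n => coeff n f • coeff k (g ^ n)) ⊆
      (range (k + 1) : Finset ℕ) := by
    intro n hn
    by_contra hkn
    exact hn (by simp [coeff_pow_zero (n := n) (by simpa using hkn)])
  rw [coeff_subst' (.of_constantCoeff_zero' hg), finsum_eq_sum_of_support_subset _ support_le,
    ← sum_fiberwise_of_maps_to (t := range (k + 1)) (g := fun i : Fin k → ℕ => ∑ j, i j)
      fun i hi => mem_range_succ_iff.2 (sum_le_of_mem_partitionMultiplicities hi)]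
  refine sum_congr rfl fun n _ => ?_
  rw [coeff_pow_eq_sum_partitionMultiplicities hg, smul_sum]
  exact sum_congr rfl fun i hi => by rw [(mem_filter.1 hi).2]

end Composition

section Logarithm

theorem cast_multinomial_eq_div {K ι : Type*} [Field K] [CharZero K] (s : Finset ι)
    (i : ι → ℕ) : (Nat.multinomial s i : K) =
      (∑ j ∈ s, i j).factorial / ∏ j ∈ s, ((i j).factorial : K) := by
  have hprod : ∏ j ∈ s, ((i j).factorial : K) ≠ 0 :=
    prod_ne_zero_iff.2 fun j _ => Nat.cast_ne_zero.2 (i j).factorial_ne_zero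
  rw [eq_div_iff hprod, mul_comm]
  exact_mod_cast Nat.multinomial_spec s i

variable {A : Type*} [CommRing A] [Algebra ℚ A]

theorem coeff_logOf_eq_sum_partitionMultiplicities {f : A⟦X⟧} (hf : constantCoeff f = 1) {k : ℕ}
    (hk : k ≠ 0) : coeff k (logOf f) = -∑ i ∈ partitionMultiplicities k,
      ((-1) ^ (∑ j, i j) * ((∑ j, i j - 1).factorial : ℚ) / ∏ j, ((i j).factorial : ℚ)) •
        ∏ j : Fin k, coeff (j + 1) f ^ i j := by
  rw [logOf_eq, coeff_subst_eq_sum_partitionMultiplicities _ (by simp [hf]), ← sum_neg_distrib]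
  refine sum_congr rfl fun i hi => ?_
  have hne := sum_ne_zero_of_mem_partitionMultiplicities hk hi
  have log_term : (-1 : ℚ) ^ (∑ j, i j + 1) / (∑ j, i j : ℕ) * Nat.multinomial univ i =
      -((-1) ^ (∑ j, i j) * ((∑ j, i j - 1).factorial : ℚ) / ∏ j, ((i j).factorial : ℚ)) := by
    obtain ⟨n, hn⟩ := Nat.exists_eq_succ_of_ne_zero hne
    rw [cast_multinomial_eq_div, hn, Nat.succ_sub_one, Nat.factorial_succ]
    push_cast
    field_simp
    ring
  have hcoeff (j : Fin k) : coeff (j + 1) (f - 1) = coeff (j + 1) f := by simp [coeff_one]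
  simp only [hcoeff]
  rw [coeff_log, if_neg hne, ← map_natCast (algebraMap ℚ A), ← Algebra.smul_def,
    algebraMap_smul, smul_smul, ← neg_smul, log_term]

theorem one_add_X_mul_derivative_log : (1 + X) * d⁄dX A (log A) = 1 := by
  rw [deriv_log]
  ext n
  rcases n with _ | n <;> simp [add_mul, coeff_succ_X_mul, pow_succ, coeff_one]

theorem mul_derivative_logOf {f : A⟦X⟧} (hf : constantCoeff f = 1) :
    f * d⁄dX A (logOf f) = d⁄dX A f := by
  have hs : HasSubst (f - 1) := .of_constantCoeff_zero' (by simp [hf])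
  have hinv : f * (d⁄dX A (log A)).subst (f - 1) = 1 := by
    have := congrArg (subst (f - 1)) (one_add_X_mul_derivative_log (A := A))
    simpa [subst_mul hs, subst_add hs, subst_X hs, ← coe_substAlgHom hs] using this
  rw [logOf_eq, derivative_subst hs, ← mul_assoc, hinv, one_mul, map_sub, derivative_one, sub_zero]

theorem logOf_mul {f g : A⟦X⟧} (hf : constantCoeff f = 1) (hg : constantCoeff g = 1) :
    logOf (f * g) = logOf f + logOf g := by
  have hfg : constantCoeff (f * g) = 1 := by rw [map_mul, hf, hg, one_mul]
  have : IsAddTorsionFree A := .of_module_rat A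
  refine derivative.ext ?_ (by simp [constantCoeff_logOf, hf, hg])
  refine (isUnit_iff_constantCoeff.2 (hfg ▸ isUnit_one)).mul_left_cancel ?_
  rw [mul_derivative_logOf hfg, map_add, Derivation.leibniz, smul_eq_mul, smul_eq_mul]
  linear_combination (-g) * mul_derivative_logOf hf - f * mul_derivative_logOf hg

theorem logOf_one : logOf (1 : A⟦X⟧) = 0 := by
  simpa using logOf_mul (f := (1 : A⟦X⟧)) (map_one _) (map_one _)

theorem logOf_pow {f : A⟦X⟧} (hf : constantCoeff f = 1) (m : ℕ) :
    logOf (f ^ m) = m • logOf f := by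
  induction m with
  | zero => rw [pow_zero, logOf_one, zero_nsmul]
  | succ m ih => rw [pow_succ, logOf_mul (by simp [hf]) hf, ih, succ_nsmul]

end Logarithm

section Bernoulli

theorem bernHigher_div_factorial (m k : ℕ) :
    bernHigher m k / k.factorial = coeff k (bernoulliPowerSeries ℚ ^ m) := by
  rw [bernHigher, mul_div_cancel_left₀ _ (by positivity), coeff_pow_eq_sum_antidiagonalTuple]
  simp [bernoulliPowerSeries]

variable (A : Type*) [CommRing A] [Algebra ℚ A]

theorem constantCoeff_bernoulliPowerSeries : constantCoeff (bernoulliPowerSeries A) = 1 := by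
  rw [← coeff_zero_eq_constantCoeff_apply]
  simp [bernoulliPowerSeries]

theorem isUnit_bernoulliPowerSeries : IsUnit (bernoulliPowerSeries A) :=
  isUnit_iff_constantCoeff.2 (constantCoeff_bernoulliPowerSeries A ▸ isUnit_one)

theorem bernoulliPowerSeries_mul_exp :
    bernoulliPowerSeries A * exp A = bernoulli'PowerSeries A := by
  refine X_mul_cancel ?_
  linear_combination bernoulli'PowerSeries A * bernoulliPowerSeries_mul_exp_sub_one A -
    bernoulliPowerSeries A * bernoulli'PowerSeries_mul_exp_sub_one A

theorem X_mul_derivative_logOf_bernoulliPowerSeries :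
    X * d⁄dX A (logOf (bernoulliPowerSeries A)) = 1 - bernoulli'PowerSeries A := by
  have hderiv : d⁄dX A (bernoulliPowerSeries A) * (exp A - 1) +
      bernoulliPowerSeries A * exp A = 1 := by
    have := congrArg (d⁄dX A) (bernoulliPowerSeries_mul_exp_sub_one A)
    simpa [derivative_exp, add_comm, mul_comm] using this
  refine (isUnit_bernoulliPowerSeries A).mul_left_cancel ?_
  linear_combination X * mul_derivative_logOf (constantCoeff_bernoulliPowerSeries A) +
    bernoulliPowerSeries A * hderiv -
    d⁄dX A (bernoulliPowerSeries A) * bernoulliPowerSeries_mul_exp_sub_one A -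
    bernoulliPowerSeries A * bernoulliPowerSeries_mul_exp A

theorem coeff_logOf_bernoulliPowerSeries {k : ℕ} (hk : k ≠ 0) :
    coeff k (logOf (bernoulliPowerSeries A)) =
      -algebraMap ℚ A (bernoulli' k / (k.factorial * k)) := by
  obtain ⟨n, rfl⟩ := Nat.exists_eq_succ_of_ne_zero hk
  have h := congrArg (coeff (n + 1)) (X_mul_derivative_logOf_bernoulliPowerSeries A)
  rw [coeff_succ_X_mul, coeff_derivative, map_sub, coeff_one, if_neg hk, zero_sub,
    bernoulli'PowerSeries, coeff_mk, ← Nat.cast_succ, ← map_natCast (algebraMap ℚ A)] at h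
  have hunit : IsUnit (algebraMap ℚ A (n + 1 : ℕ)) :=
    (isUnit_iff_ne_zero.2 (by positivity)).map (algebraMap ℚ A)
  refine hunit.mul_right_cancel (h.trans ?_)
  rw [neg_mul, ← map_mul]
  field_simp

end Bernoulli

theorem stmt13 (k m : ℕ) (hk : 1 ≤ k) :
    ∑ i ∈ (Fintype.piFinset fun _ : Fin k => Finset.range (k+1)).filter
        (fun i => ∑ j : Fin k, ((j:ℕ)+1) * i j = k),
      (-1:ℚ)^(∑ j : Fin k, i j) * (((∑ j : Fin k, i j) - 1).factorial : ℚ)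
          / (∏ j : Fin k, ((i j).factorial : ℚ))
          * ∏ j : Fin k, (bernHigher m ((j:ℕ)+1) / (((j:ℕ)+1).factorial : ℚ))^(i j)
      = (m:ℚ) * (-1:ℚ)^k * bernoulli k / ((k.factorial : ℚ) * (k:ℚ)) := by
  have hF := constantCoeff_bernoulliPowerSeries ℚ
  have hk0 : k ≠ 0 := Nat.one_le_iff_ne_zero.1 hk
  have hFm : constantCoeff (bernoulliPowerSeries ℚ ^ m) = 1 := by rw [map_pow, hF, one_pow]
  calc
    _ = -coeff k (logOf (bernoulliPowerSeries ℚ ^ m)) := by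
        rw [coeff_logOf_eq_sum_partitionMultiplicities hFm hk0, neg_neg]
        simp only [bernHigher_div_factorial, smul_eq_mul, partitionMultiplicities]
    _ = m * (bernoulli' k / (k.factorial * k)) := by
        rw [logOf_pow hF, map_nsmul, coeff_logOf_bernoulliPowerSeries ℚ hk0]
        simp
    _ = (m:ℚ) * (-1:ℚ)^k * bernoulli k / ((k.factorial : ℚ) * (k:ℚ)) := by
        rw [bernoulli'_eq_bernoulli]
        ring
end

section
/- Let p be an odd prime and let b be a positive integer. Then the generalized Wilson quotient w_{p^b} = (1 + ∏_{0<a<p^b, p∤a} a)/p^b is an integer, and w_{p^b} ≡ (p·B_{φ(p^b)} − p + 1)/p^b (mod p). -/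
open Finset

/-!
Write `n = p ^ b` and let `P` be the product of the `a < n` coprime to `n`. The ring `ZMod n` is
local and `2` is a unit in it, so `1` and `-1` are its only square roots of `1`; pairing units with
their inverses gives `P = n * w - 1`, with `w` the Wilson quotient. Each `a ^ φ n` is `1` plus a
multiple of `n`, so modulo `n ^ 2` the product `P ^ φ n` of these powers is `1 + ∑ (a ^ φ n - 1)`,
while it is also `(1 - n * w) ^ φ n = 1 - φ n * n * w`. Since `φ n * n` is `-p ^ (2 * b - 1)` modulo
`n ^ 2`, this expresses `p ^ (2 * b - 1) * w` through the power sum `∑ a ^ φ n`. That sum may be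
extended to all `a < n`, the multiples of `p` contributing `0` modulo `n ^ 2`, and then Faulhaber's
formula together with the von Staudt-Clausen theorem identifies it with `n * bernoulli (φ n)` modulo
`n ^ 2`.
-/

section Wilson

theorem prod_univ_units_eq_neg_one_of_sq_eq_one {R : Type*} [CommRing R] [Fintype Rˣ]
    (h : ∀ u : Rˣ, u ^ 2 = 1 → u = 1 ∨ u = -1) : ∏ u : Rˣ, u = -1 := by
  classical
  have herase : ∏ u ∈ univ.erase (-1 : Rˣ), u = 1 := by
    refine prod_involution (fun u _ => u⁻¹) (by simp) (fun u hu hu1 hinv => ?_) (fun u hu => ?_)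
      (by simp)
    · rcases h u (by rw [sq, ← inv_eq_iff_mul_eq_one, hinv]) with rfl | rfl
      · exact hu1 rfl
      · exact notMem_erase _ _ hu
    · simpa [inv_eq_iff_eq_inv] using hu
  rw [← mul_prod_erase univ _ (mem_univ (-1 : Rˣ)), herase, mul_one]

theorem eq_one_or_eq_neg_one_of_sq_eq_one {R : Type*} [CommRing R] [IsLocalRing R]
    (h2 : IsUnit (2 : R)) {x : R} (hx : x ^ 2 = 1) : x = 1 ∨ x = -1 := by
  have hmul : (1 + x) * (1 - x) = 0 := by linear_combination -hx
  have hadd : (1 + x) + (1 - x) = 2 := by ring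
  rcases IsLocalRing.isUnit_or_isUnit_of_isUnit_add (hadd ▸ h2) with h | h
  · exact Or.inl (sub_eq_zero.mp (h.mul_right_eq_zero.mp hmul)).symm
  · exact Or.inr (eq_neg_of_add_eq_zero_right (h.mul_left_eq_zero.mp hmul))

theorem isLocalRing_zmod_prime_pow {p b : ℕ} [hp : Fact p.Prime] (hb : b ≠ 0) :
    IsLocalRing (ZMod (p ^ b)) := by
  have : Nontrivial (ZMod (p ^ b)) :=
    ZMod.nontrivial_iff.mpr (Nat.one_lt_pow hb hp.out.one_lt).ne'
  exact IsLocalRing.of_surjective' (PadicInt.toZModPow b) (ZMod.ringHom_surjective _)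

theorem prod_range_coprime_eq_prod_units {M : Type*} [CommMonoid M] (n : ℕ) [NeZero n]
    (f : ZMod n → M) :
    ∏ a ∈ range n with n.Coprime a, f a = ∏ u : (ZMod n)ˣ, f u := by
  symm
  refine prod_bij (fun u _ => (u : ZMod n).val) (fun u _ => ?_)
    (fun u _ v _ h => Units.ext (ZMod.val_injective n h)) (fun a ha => ?_) (fun u _ => by simp)
  · exact mem_filter.mpr ⟨mem_range.mpr (ZMod.val_lt _), (ZMod.val_coe_unit_coprime u).symm⟩
  · obtain ⟨hlt, hcop⟩ := mem_filter.mp ha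
    exact ⟨ZMod.unitOfCoprime a hcop.symm, mem_univ _, by
      simp [ZMod.val_cast_of_lt (mem_range.mp hlt)]⟩

theorem coprime_prime_pow_iff_not_dvd {p b : ℕ} (hp : p.Prime) (hb : b ≠ 0) {a : ℕ} :
    (p ^ b).Coprime a ↔ ¬ p ∣ a := by
  rw [Nat.coprime_pow_left_iff hb.bot_lt, hp.coprime_iff_not_dvd]

theorem prod_range_not_dvd_modEq_neg_one {p b : ℕ} (hp : p.Prime) (hodd : Odd p) (hb : b ≠ 0) :
    ∏ a ∈ range (p ^ b) with ¬ p ∣ a, (a : ℤ) ≡ -1 [ZMOD (p : ℤ) ^ b] := by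
  have : Fact p.Prime := ⟨hp⟩
  have : NeZero (p ^ b) := ⟨pow_ne_zero b hp.ne_zero⟩
  have := isLocalRing_zmod_prime_pow (p := p) hb
  have h2 : IsUnit (2 : ZMod (p ^ b)) := by
    exact_mod_cast (ZMod.isUnit_iff_coprime 2 (p ^ b)).mpr (hodd.coprime_two_left.pow_right b)
  have hunits : ∏ u : (ZMod (p ^ b))ˣ, u = -1 :=
    prod_univ_units_eq_neg_one_of_sq_eq_one fun u hu =>
      (eq_one_or_eq_neg_one_of_sq_eq_one h2 (congrArg Units.val hu)).imp
        (fun h => Units.ext h) (fun h => Units.ext h)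
  simp only [← coprime_prime_pow_iff_not_dvd hp hb, ← Nat.cast_pow]
  rw [← ZMod.intCast_eq_intCast_iff]
  push_cast
  exact (prod_range_coprime_eq_prod_units (p ^ b) (fun a => a)).trans
    (by rw [← Units.coe_prod, hunits, Units.val_neg, Units.val_one])

end Wilson

section PowerSum

theorem sq_dvd_prod_sub_one_sub_sum {R ι : Type*} [CommRing R] (s : Finset ι) (n : R) (x : ι → R)
    (h : ∀ i ∈ s, n ∣ x i - 1) : n ^ 2 ∣ ∏ i ∈ s, x i - 1 - ∑ i ∈ s, (x i - 1) := by
  classical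
  induction s using Finset.induction_on with
  | empty => simp
  | insert a s ha ih =>
    have hs : ∀ i ∈ s, n ∣ x i - 1 := fun i hi => h i (mem_insert_of_mem hi)
    obtain ⟨u, hu⟩ : n ∣ ∑ i ∈ s, (x i - 1) := dvd_sum hs
    obtain ⟨v, hv⟩ := ih hs
    obtain ⟨w, hw⟩ := h a (mem_insert_self a s)
    rw [prod_insert ha, sum_insert ha]
    exact ⟨w * u + x a * v, by linear_combination x a * hv + (x a - 1) * hu + n * u * hw⟩

theorem sum_coprime_pow_totient_modEq {n : ℕ} (hn : 2 < n) {w : ℤ}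
    (hw : ∏ a ∈ range n with n.Coprime a, (a : ℤ) = n * w - 1) :
    ∑ a ∈ range n with n.Coprime a, (a : ℤ) ^ n.totient ≡
      n.totient * (1 - n * w) [ZMOD (n : ℤ) ^ 2] := by
  have heuler : ∀ a ∈ {a ∈ range n | n.Coprime a}, (n : ℤ) ∣ (a : ℤ) ^ n.totient - 1 := by
    intro a ha
    exact_mod_cast Nat.modEq_iff_dvd.mp (Nat.ModEq.pow_totient (mem_filter.mp ha).2.symm).symm
  have hprod : ∏ a ∈ range n with n.Coprime a, (a : ℤ) ^ n.totient =
      (1 + -(n * w)) ^ n.totient := by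
    rw [prod_pow, hw, ← (Nat.totient_even hn).neg_pow]
    ring
  have hsum := sq_dvd_prod_sub_one_sub_sum _ _ _ heuler
  have hpow : (n : ℤ) ^ 2 ∣ _ :=
    (Dvd.intro (w ^ 2) (by ring)).trans (sq_dvd_add_pow_sub_sub (-(n * w)) 1 n.totient)
  rw [hprod, sum_sub_distrib, sum_const, ← Nat.totient_eq_card_coprime, nsmul_one] at hsum
  refine Int.modEq_iff_dvd.mpr ((dvd_sub hsum hpow).trans (dvd_of_eq ?_))
  ring

theorem sum_pow_modEq_sum_not_dvd_pow (s : Finset ℕ) (p : ℕ) {c m : ℕ} (hcm : c ≤ m) :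
    ∑ a ∈ s, (a : ℤ) ^ m ≡ ∑ a ∈ s with ¬ p ∣ a, (a : ℤ) ^ m [ZMOD (p : ℤ) ^ c] := by
  rw [← sum_filter_add_sum_filter_not s (p ∣ ·), Int.modEq_comm, Int.modEq_iff_dvd,
    add_sub_cancel_right]
  refine dvd_sum fun a ha => (pow_dvd_pow _ hcm).trans (pow_dvd_pow_of_dvd ?_ m)
  exact_mod_cast (mem_filter.mp ha).2

theorem two_mul_le_totient_prime_pow {p b : ℕ} (hp : p.Prime) (hp2 : p ≠ 2) (hb : 0 < b) :
    2 * b ≤ (p ^ b).totient := by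
  have hp3 : 2 < p := hp.two_le.lt_of_ne' hp2
  have hlt : b - 1 < p ^ (b - 1) := Nat.lt_pow_self hp.one_lt
  rw [Nat.totient_prime_pow hp hb, mul_comm]
  exact Nat.mul_le_mul (by omega) (by omega)

theorem prime_pow_mul_wilson_quotient_modEq {p b : ℕ} (hp : p.Prime) (hodd : Odd p) (hb : 0 < b)
    {w : ℤ} (hw : ∏ a ∈ range (p ^ b) with ¬ p ∣ a, (a : ℤ) = p ^ b * w - 1) :
    (p : ℤ) ^ (2 * b - 1) * w ≡
      ∑ a ∈ range (p ^ b), (a : ℤ) ^ (p ^ b).totient - (p ^ b).totient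
        [ZMOD (p : ℤ) ^ (2 * b)] := by
  have hp2 : p ≠ 2 := hodd.ne_two_of_dvd_nat dvd_rfl
  have hpb : 2 < p ^ b := (hp.two_le.lt_of_ne' hp2).trans_le (Nat.le_self_pow hb.ne' p)
  have hall := sum_pow_modEq_sum_not_dvd_pow (range (p ^ b)) p
    (two_mul_le_totient_prime_pow hp hp2 hb)
  simp only [← coprime_prime_pow_iff_not_dvd hp hb.ne'] at hw hall
  have hcop := sum_coprime_pow_totient_modEq hpb (w := w) (by exact_mod_cast hw)
  rw [Nat.cast_pow, ← pow_mul, mul_comm b 2] at hcop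
  have hmul : (p : ℤ) ^ (2 * b - 1) * w - -((p ^ b).totient * (p ^ b * w)) = p ^ (2 * b) * w := by
    obtain ⟨c, rfl⟩ := Nat.exists_eq_add_one.mpr hb
    rw [Nat.totient_prime_pow_succ hp, show 2 * (c + 1) - 1 = 2 * c + 1 by omega]
    push_cast [hp.one_le]
    ring
  calc (p : ℤ) ^ (2 * b - 1) * w
      ≡ -((p ^ b).totient * (p ^ b * w)) [ZMOD (p : ℤ) ^ (2 * b)] :=
        (Int.modEq_iff_dvd.mpr (Dvd.intro w hmul.symm)).symm
    _ = (p ^ b).totient * (1 - p ^ b * w) - (p ^ b).totient := by ring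
    _ ≡ _ [ZMOD (p : ℤ) ^ (2 * b)] := (hall.trans hcop).symm.sub_right _

end PowerSum

section Integrality

variable {p : ℕ} [hp : Fact p.Prime]

theorem mem_integer_padicValuation_iff {x : ℚ} :
    x ∈ (Rat.padicValuation p).integer ↔ 0 ≤ padicValRat p x := by
  rw [Valuation.mem_integer_iff]
  rcases eq_or_ne x 0 with rfl | hx
  · simp
  · simp only [Rat.padicValuation, Valuation.coe_mk, MonoidWithZeroHom.coe_mk, ZeroHom.coe_mk,
      if_neg hx]
    rw [← WithZero.exp_zero, WithZero.exp_le_exp, neg_nonpos]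

theorem inv_natCast_mem_integer {n : ℕ} (h : ¬ p ∣ n) :
    (n : ℚ)⁻¹ ∈ (Rat.padicValuation p).integer := by
  rw [mem_integer_padicValuation_iff, padicValRat.inv, padicValRat.of_nat,
    padicValNat.eq_zero_of_not_dvd h]
  simp

theorem prime_pow_div_mem_integer {e m : ℕ} (hm : m ≠ 0) (h : m < p ^ (e + 1)) :
    (p : ℚ) ^ e / m ∈ (Rat.padicValuation p).integer := by
  have hp0 : (p : ℚ) ≠ 0 := mod_cast hp.out.ne_zero
  have hval : padicValNat p m ≤ e :=
    (padicValNat_le_nat_log m).trans (Nat.lt_succ_iff.mp (Nat.log_lt_of_lt_pow hm h))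
  rw [mem_integer_padicValuation_iff, padicValRat.div (pow_ne_zero e hp0) (mod_cast hm),
    padicValRat.pow, padicValRat.self hp.out.one_lt, padicValRat.of_nat]
  omega

theorem prime_mul_bernoulli_mem_integer (m : ℕ) :
    (p : ℚ) * bernoulli m ∈ (Rat.padicValuation p).integer := by
  have hinv : ∀ q : ℕ, q.Prime → (p : ℚ) * (1 / q) ∈ (Rat.padicValuation p).integer := by
    intro q hq
    rcases eq_or_ne p q with rfl | hpq
    · rw [mul_one_div_cancel (mod_cast hq.ne_zero)]
      exact one_mem _
    · rw [one_div]
      exact mul_mem (natCast_mem _ p)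
        (inv_natCast_mem_integer (mt (Nat.prime_dvd_prime_iff_eq hp.out hq).mp hpq))
  rcases Nat.even_or_odd' m with ⟨k, rfl | rfl⟩
  · obtain ⟨z, hz⟩ := Bernoulli.vonStaudt_clausen k
    rw [eq_sub_of_add_eq hz.symm, mul_sub, mul_sum]
    exact sub_mem (mul_mem (natCast_mem _ p) (intCast_mem _ z))
      (sum_mem fun q hq => hinv q (mem_filter.mp hq).2.1)
  · rcases k.eq_zero_or_pos with rfl | hk
    · rw [mul_zero, zero_add, bernoulli_one, neg_div, mul_neg]
      exact neg_mem (by exact_mod_cast hinv 2 Nat.prime_two)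
    · rw [bernoulli_eq_zero_of_odd (odd_two_mul_add_one k) (by omega), mul_zero]
      exact zero_mem _

end Integrality

namespace modCong

theorem sub_right {p : ℕ} {c : ℤ} {x y : ℚ} (h : modCong p c x y) (z : ℚ) :
    modCong p c (x - z) (y - z) := by
  simpa only [modCong, sub_left_inj, sub_sub_sub_cancel_right] using h

variable {p : ℕ} [hp : Fact p.Prime] {c : ℤ} {x y z : ℚ}

theorem iff_div_mem_integer :
    modCong p c x y ↔ (x - y) / (p : ℚ) ^ c ∈ (Rat.padicValuation p).integer := by
  have hp0 : (p : ℚ) ≠ 0 := mod_cast hp.out.ne_zero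
  rcases eq_or_ne x y with rfl | hxy
  · simp [modCong]
  · rw [mem_integer_padicValuation_iff, padicValRat.div (sub_ne_zero.mpr hxy) (zpow_ne_zero c hp0),
      padicValRat.zpow, padicValRat.self hp.out.one_lt]
    simp [modCong, hxy]

theorem trans (hxy : modCong p c x y) (hyz : modCong p c y z) : modCong p c x z := by
  rw [iff_div_mem_integer] at *
  simpa only [← add_div, sub_add_sub_cancel] using add_mem hxy hyz

theorem pow_mul_iff {d : ℕ} :
    modCong p c ((p : ℚ) ^ d * x) ((p : ℚ) ^ d * y) ↔ modCong p (c - d) x y := by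
  have hp0 : (p : ℚ) ≠ 0 := mod_cast hp.out.ne_zero
  rw [iff_div_mem_integer, iff_div_mem_integer, ← mul_sub, zpow_sub₀ hp0, zpow_natCast,
    div_div_eq_mul_div, mul_comm]

theorem of_intModEq {c : ℕ} {x y : ℤ} (h : x ≡ y [ZMOD (p : ℤ) ^ c]) : modCong p c x y := by
  have hp0 : (p : ℚ) ≠ 0 := mod_cast hp.out.ne_zero
  obtain ⟨k, hk⟩ := Int.modEq_iff_dvd.mp h.symm
  have hq : ((x : ℚ) - y) / (p : ℚ) ^ (c : ℤ) = k := by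
    rw [zpow_natCast, div_eq_iff (pow_ne_zero c hp0), mul_comm]
    exact_mod_cast hk
  exact iff_div_mem_integer.mpr (hq ▸ intCast_mem _ k)

end modCong

section Faulhaber

theorem sum_range_pow_eq_sum_choose_mul_div (n m : ℕ) :
    ∑ k ∈ range n, (k : ℚ) ^ m =
      ∑ d ∈ range (m + 1), bernoulli (m - d) * m.choose d * ((n : ℚ) ^ (d + 1) / (d + 1 : ℕ)) := by
  rw [sum_range_pow, ← sum_range_reflect]
  refine sum_congr rfl fun d hd => ?_
  have hdm : d ≤ m := Nat.lt_succ_iff.mp (mem_range.mp hd)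
  have hchoose : (m + 1).choose (m - d) = (m + 1).choose (d + 1) :=
    Nat.choose_symm_of_eq_add (by omega)
  have hmul : ((m : ℚ) + 1) * m.choose d = (m + 1).choose (d + 1) * (d + 1) := by
    exact_mod_cast Nat.add_one_mul_choose_eq m d
  rw [show m + 1 - 1 - d = m - d by omega, show m + 1 - (m - d) = d + 1 by omega, hchoose]
  push_cast
  field_simp
  linear_combination -(bernoulli (m - d)) * (n : ℚ) ^ (d + 1) * hmul

variable {p b m : ℕ} [hp : Fact p.Prime]

theorem bernoulli_mul_choose_mul_div_mem_integer {d : ℕ} (hodd : Odd p) (hpb : 3 < p ^ b)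
    (hm : Even m) (hd : d < m) :
    bernoulli (m - (d + 1)) * m.choose (d + 1) * (((p : ℚ) ^ b) ^ d / (d + 2 : ℕ)) ∈
      (Rat.padicValuation p).integer := by
  have hb : 0 < b := Nat.pos_of_ne_zero (by rintro rfl; simp at hpb)
  rcases d with _ | d
  · have hodd' : Odd (m - 1) := Nat.Even.sub_odd hd hm odd_one
    have hinv : ((2 : ℕ) : ℚ)⁻¹ ∈ (Rat.padicValuation p).integer :=
      inv_natCast_mem_integer fun h => hodd.ne_two_of_dvd_nat dvd_rfl
        ((Nat.prime_dvd_prime_iff_eq hp.out Nat.prime_two).mp h)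
    rw [pow_zero, one_div]
    obtain rfl | hm2 : m = 2 ∨ 2 < m := by grind
    · have hval : bernoulli 1 * Nat.choose 2 1 = -1 := by norm_num [bernoulli_one]
      exact mul_mem (hval ▸ neg_mem (one_mem _)) hinv
    · rw [zero_add, bernoulli_eq_zero_of_odd hodd' (by omega), zero_mul, zero_mul]
      exact zero_mem _
  · obtain ⟨e, he⟩ := Nat.exists_eq_add_one.mpr (Nat.mul_pos hb d.succ_pos)
    have hlt : d + 3 < p ^ (e + 1) := by
      rw [← he, pow_mul]
      calc d + 3 < 1 + (d + 1) * 3 := by omega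
        _ ≤ (1 + 3) ^ (d + 1) := one_add_le_pow_of_two_add_nonneg (Nat.zero_le _) _
        _ ≤ (p ^ b) ^ (d + 1) := Nat.pow_le_pow_left (by omega) _
    have hsplit : bernoulli (m - (d + 1 + 1)) * m.choose (d + 1 + 1) *
          (((p : ℚ) ^ b) ^ (d + 1) / (d + 1 + 2 : ℕ)) =
        p * bernoulli (m - (d + 2)) * m.choose (d + 2) * ((p : ℚ) ^ e / (d + 3 : ℕ)) := by
      rw [← pow_mul, he, pow_succ]
      ring
    rw [hsplit]
    exact mul_mem (mul_mem (prime_mul_bernoulli_mem_integer _) (natCast_mem _ _))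
      (prime_pow_div_mem_integer (Nat.succ_ne_zero _) hlt)

theorem modCong_sum_range_prime_pow_pow (hodd : Odd p) (hpb : 3 < p ^ b) (hm : Even m) :
    modCong p (2 * b) (∑ k ∈ range (p ^ b), (k : ℚ) ^ m) ((p : ℚ) ^ b * bernoulli m) := by
  have hp0 : (p : ℚ) ≠ 0 := mod_cast hp.out.ne_zero
  have hquot : (∑ k ∈ range (p ^ b), (k : ℚ) ^ m - (p : ℚ) ^ b * bernoulli m) /
        (p : ℚ) ^ (2 * b : ℤ) =
      ∑ d ∈ range m,
        bernoulli (m - (d + 1)) * m.choose (d + 1) * (((p : ℚ) ^ b) ^ d / (d + 2 : ℕ)) := by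
    rw [sum_range_pow_eq_sum_choose_mul_div, sum_range_succ']
    have hzero : bernoulli (m - 0) * m.choose 0 * (((p ^ b : ℕ) : ℚ) ^ (0 + 1) / (0 + 1 : ℕ)) =
        (p : ℚ) ^ b * bernoulli m := by
      simp [mul_comm]
    rw [hzero, add_sub_cancel_right, sum_div]
    refine sum_congr rfl fun d _ => ?_
    rw [zpow_mul, zpow_natCast, zpow_ofNat, div_eq_iff (pow_ne_zero b (pow_ne_zero 2 hp0))]
    push_cast
    ring
  rw [modCong.iff_div_mem_integer, hquot]
  exact sum_mem fun d hd =>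
    bernoulli_mul_choose_mul_div_mem_integer hodd hpb hm (mem_range.mp hd)

theorem modCong_sum_range_pow_totient (hodd : Odd p) (hb : 0 < b) :
    modCong p (2 * b) (∑ k ∈ range (p ^ b), (k : ℚ) ^ (p ^ b).totient)
      ((p : ℚ) ^ b * bernoulli (p ^ b).totient) := by
  have hp2 : 2 < p := hp.out.two_le.lt_of_ne' (hodd.ne_two_of_dvd_nat dvd_rfl)
  have hpb : p ≤ p ^ b := Nat.le_self_pow hb.ne' p
  rcases Nat.eq_or_lt_of_le (show 3 ≤ p ^ b from hp2.trans_le hpb) with h3 | h3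
  · -- The estimate `d + 3 < n ^ (d + 1)` behind termwise integrality fails for `n = 3`, `d = 0`.
    obtain rfl : p = 3 := by omega
    obtain rfl : b = 1 := Nat.pow_right_injective (by norm_num : 2 ≤ 3) (by simpa using h3.symm)
    have hdiff : (∑ k ∈ range (3 ^ 1), (k : ℚ) ^ (3 ^ 1).totient -
        ((3 : ℕ) : ℚ) ^ 1 * bernoulli (3 ^ 1).totient) / ((3 : ℕ) : ℚ) ^ (2 * (1 : ℕ) : ℤ) =
        ((2 : ℕ) : ℚ)⁻¹ := by
      rw [pow_one, show Nat.totient 3 = 2 from by decide, bernoulli_two]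
      norm_num [sum_range_succ]
    exact modCong.iff_div_mem_integer.mpr (hdiff ▸ inv_natCast_mem_integer (by decide))
  · exact modCong_sum_range_prime_pow_pow hodd h3 (Nat.totient_even (by omega))

end Faulhaber

theorem filter_not_dvd_Ico_one_eq_filter_range (p n : ℕ) :
    {a ∈ Ico 1 n | ¬ p ∣ a} = {a ∈ range n | ¬ p ∣ a} := by
  ext a
  rcases a.eq_zero_or_pos with rfl | ha
  · simp
  · simp [Nat.one_le_iff_ne_zero, ha.ne']

theorem prime_pow_mul_sub_totient_eq {p b : ℕ} (hp : p.Prime) (hb : 0 < b) (x : ℚ) :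
    (p : ℚ) ^ b * x - (p ^ b).totient =
      (p : ℚ) ^ (2 * b - 1) * ((p * x - p + 1) / (p : ℚ) ^ b) := by
  have hp0 : (p : ℚ) ≠ 0 := mod_cast hp.ne_zero
  obtain ⟨c, rfl⟩ := Nat.exists_eq_add_one.mpr hb
  rw [Nat.totient_prime_pow_succ hp, show 2 * (c + 1) - 1 = c + (c + 1) by omega, pow_add]
  push_cast [hp.one_le]
  field_simp
  ring

theorem stmt15 (p b : ℕ) (hp : p.Prime) (hodd : Odd p) (hb : 0 < b) :
    (∃ w : ℤ, (w:ℚ) =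
      (1 + ∏ a ∈ (Finset.Ico 1 (p^b)).filter (fun a => ¬ p ∣ a), (a:ℚ)) / (p:ℚ)^b) ∧
    modCong p 1
      ((1 + ∏ a ∈ (Finset.Ico 1 (p^b)).filter (fun a => ¬ p ∣ a), (a:ℚ)) / (p:ℚ)^b)
      (((p:ℚ) * bernoulli (Nat.totient (p^b)) - (p:ℚ) + 1) / (p:ℚ)^b) := by
  have : Fact p.Prime := ⟨hp⟩
  have hp0 : (p : ℚ) ≠ 0 := mod_cast hp.ne_zero
  obtain ⟨w, hw⟩ := Int.modEq_iff_dvd.mp (prod_range_not_dvd_modEq_neg_one hp hodd hb.ne').symm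
  rw [sub_neg_eq_add] at hw
  have hquot : (1 + ∏ a ∈ Ico 1 (p ^ b) with ¬ p ∣ a, (a : ℚ)) / (p : ℚ) ^ b = w := by
    rw [filter_not_dvd_Ico_one_eq_filter_range, div_eq_iff (pow_ne_zero b hp0), add_comm, mul_comm]
    simpa using congrArg (Int.cast : ℤ → ℚ) hw
  rw [hquot]
  refine ⟨⟨w, rfl⟩, ?_⟩
  have hwilson := modCong.of_intModEq
    (prime_pow_mul_wilson_quotient_modEq hp hodd hb (eq_sub_of_add_eq hw))
  have hsum := (modCong_sum_range_pow_totient hodd hb).sub_right (p ^ b).totient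
  rw [prime_pow_mul_sub_totient_eq hp hb] at hsum
  push_cast at hwilson
  have hexp : (2 * b : ℤ) - (2 * b - 1 : ℕ) = 1 := by omega
  exact hexp ▸ modCong.pow_mul_iff.mp (hwilson.trans hsum)
end

section
/- Let f be a function from ℤ to a field, let m,n be positive integers, and let r be an integer. Set r̄ = r + m − 1. Then Σ_{k=0}^{n} binom(n,k)·(−1)^k·f(⌊(k−r)/m⌋) = Σ_{0≤k≤n−1, k≡r̄ (mod m)} binom(n−1,k)·(−1)^{k−1}·(f((k−r̄)/m + 1) − f((k−r̄)/m)), where ⌊·⌋ is the integer floor. -/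
open Finset

/-!
Pascal's rule turns the left-hand side into an alternating sum of the first differences of
`k ↦ f ⌊(k - r) / m⌋`. The floor only moves from `k` to `k + 1` when `m ∣ k + 1 - r`, that is,
when `k ≡ r + m - 1 [ZMOD m]`, and then it increases by one.
-/

theorem sum_choose_succ_mul_neg_one_pow_zsmul {A : Type*} [AddCommGroup A] (g : ℕ → A) (n : ℕ) :
    ∑ k ∈ range (n + 2), (((n + 1).choose k : ℤ) * (-1) ^ k) • g k
      = ∑ k ∈ range (n + 1), ((n.choose k : ℤ) * (-1) ^ (k + 1)) • (g (k + 1) - g k) := by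
  have pascal := sum_choose_succ_nsmul (fun k _ ↦ (-1 : ℤ) ^ k • g k) n
  simp only [← natCast_zsmul, smul_smul] at pascal
  rw [pascal, ← sum_add_distrib]
  refine sum_congr rfl fun k _ ↦ ?_
  rw [pow_succ]
  module

theorem int_add_one_ediv_of_pos {m : ℤ} (hm : 0 < m) (x : ℤ) :
    (x + 1) / m = x / m + if m ∣ x + 1 then 1 else 0 := by
  split_ifs with h
  · obtain ⟨q, hq⟩ := h
    have hx : x / m = q - 1 := (Int.ediv_eq_iff_of_pos hm).2 ⟨by linarith, by linarith⟩
    rw [hx, hq, Int.mul_ediv_cancel_left q hm.ne', sub_add_cancel]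
  · obtain ⟨hle, hlt⟩ := (Int.ediv_eq_iff_of_pos hm).1 (rfl : x / m = x / m)
    have hne : x + 1 ≠ x / m * m + m := fun heq ↦ h ⟨x / m + 1, by rw [heq]; ring⟩
    rw [add_zero, Int.ediv_eq_iff_of_pos hm]
    exact ⟨by linarith, (Int.add_one_le_of_lt hlt).lt_of_ne hne⟩

theorem apply_add_one_ediv_sub_apply_ediv {A : Type*} [AddGroup A] (f : ℤ → A) {m : ℤ}
    (hm : 0 < m) (x : ℤ) :
    f ((x + 1) / m) - f (x / m)
      = if (x + 1 - m) % m = 0 then f ((x + 1 - m) / m + 1) - f ((x + 1 - m) / m) else 0 := by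
  have hdiv : (x + 1 - m) / m = (x + 1) / m - 1 := by
    rw [Int.sub_ediv_of_dvd _ dvd_rfl, Int.ediv_self hm.ne']
  simp only [hdiv, Int.sub_emod_right, sub_add_cancel, ← Int.dvd_iff_emod_eq_zero]
  rw [int_add_one_ediv_of_pos hm]
  split_ifs
  · rw [add_sub_cancel_right]
  · rw [add_zero, sub_self]

theorem stmt16_general {A : Type*} [AddCommGroup A] (f : ℤ → A) (m n : ℕ) (hm : 0 < m)
    (hn : 0 < n) (r : ℤ) :
    ∑ k ∈ range (n + 1), ((n.choose k : ℤ) * (-1) ^ k) • f (Int.fdiv ((k : ℤ) - r) m)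
      = ∑ k ∈ range n,
          if ((k : ℤ) - (r + m - 1)) % m = 0 then
            (((n - 1).choose k : ℤ) * (-1) ^ (k + 1)) •
              (f (((k : ℤ) - (r + m - 1)) / m + 1) - f (((k : ℤ) - (r + m - 1)) / m))
          else 0 := by
  obtain ⟨n, rfl⟩ := Nat.exists_eq_add_one.2 hn
  simp only [Int.fdiv_eq_ediv_of_nonneg _ (Int.natCast_nonneg m), Nat.add_sub_cancel]
  rw [sum_choose_succ_mul_neg_one_pow_zsmul (fun k ↦ f (((k : ℤ) - r) / m))]
  refine sum_congr rfl fun k _ ↦ ?_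
  have hsucc : ((k + 1 : ℕ) : ℤ) - r = k - r + 1 := by push_cast; ring
  have hresidue : (k : ℤ) - (r + m - 1) = k - r + 1 - m := by ring
  rw [hsucc, hresidue, apply_add_one_ediv_sub_apply_ediv f (Int.natCast_pos.2 hm), smul_ite,
    smul_zero]

theorem stmt16 {F : Type*} [Field F] (f : ℤ → F) (m n : ℕ) (hm : 0 < m) (hn : 0 < n)
    (r : ℤ) :
    ∑ k ∈ Finset.range (n+1), (n.choose k : F) * (-1:F)^k * f (Int.fdiv ((k:ℤ) - r) m)
      = ∑ k ∈ Finset.range n,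
          if ((k:ℤ) - (r + m - 1)) % m = 0 then
            ((n-1).choose k : F) * (-1:F)^(k+1) *
              (f (((k:ℤ) - (r + m - 1)) / m + 1) - f (((k:ℤ) - (r + m - 1)) / m))
          else 0 := by
  simpa only [zsmul_eq_mul, Int.cast_mul, Int.cast_natCast, Int.cast_pow, Int.cast_neg,
    Int.cast_one] using stmt16_general f m n hm hn r
end
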